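/- For each ε > 0 there exists an integer Δ_ε such that the following holds: if G is a planar simple graph with maximum degree Δ(G) ≥ Δ_ε, and L is a list assignment giving each vertex a list of at least (3/2 + ε)·Δ(G) integers, then there is a proper colouring of the square G² of G in which each vertex receives a colour from its own list, and moreover this colouring can be chosen so that the colours on any two vertices adjacent in G differ by at least Δ(G)^{1/4}. -/

import Mathlib

open SimpleGraph

/-- A drawing of a simple graph in the plane: vertices are mapped to distinct points,
edges to arcs (injective continuous curves parametrised on `[0,1]`) joining the images of
their endpoints, whose interiors avoid the vertex points and each other. -/
structure PlaneEmbedding {V : Type*} (G : SimpleGraph V) where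
  pos : V → ℝ × ℝ
  inj : Function.Injective pos
  arc : G.edgeSet → ℝ → ℝ × ℝ
  arc_cont : ∀ e, ContinuousOn (arc e) (Set.Icc 0 1)
  arc_inj : ∀ e, Set.InjOn (arc e) (Set.Icc 0 1)
  arc_ends : ∀ e : G.edgeSet, ∃ u v : V, (e : Sym2 V) = s(u, v) ∧
      arc e 0 = pos u ∧ arc e 1 = pos v
  arc_avoid : ∀ e : G.edgeSet, ∀ t ∈ Set.Ioo (0:ℝ) 1, arc e t ∉ Set.range pos
  arc_disjoint : ∀ e f : G.edgeSet, e ≠ f → ∀ s ∈ Set.Ioo (0:ℝ) 1, ∀ t ∈ Set.Ioo (0:ℝ) 1,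
      arc e s ≠ arc f t

/-- A graph is planar if it admits a drawing in the plane. -/
def SimpleGraph.IsPlanar {V : Type*} (G : SimpleGraph V) : Prop :=
  Nonempty (PlaneEmbedding G)

/-- The square of a graph: two distinct vertices are adjacent iff they are at distance
at most two in `G`. -/
def SimpleGraph.square {V : Type*} (G : SimpleGraph V) : SimpleGraph V :=
  SimpleGraph.fromRel (fun u v => G.Adj u v ∨ ∃ w, G.Adj u w ∧ G.Adj w v)

/-! A drawing of `K₃,₃` is excluded by comparing winding numbers of its arcs around its vertices, so
a planar graph has no `K₃,₃` minor and hence no `K₆` minor. Graphs without a `K₆` minor are sparse,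
as are all their minors, and they have small separators, so that deleting few vertices leaves pieces
of bounded size.

It suffices to find in every nonempty set `U` of vertices a nonempty subset `R` to which every
colouring of `U \ R` extends. By sparsity, some range of degrees between two constant multiples of
`Δ` receives few edges from `U`; it separates the vertices of high degree from those of low degree,
and most vertices of `U` have few neighbours outside these two classes and few vertices at distance
two through the low ones. Such a vertex with at most one neighbour of high degree can be coloured
last. Otherwise nearly every vertex of `U` has exactly two neighbours of high degree and is thought
of as an edge joining them. Deleting few vertices from this multigraph leaves a bounded set `X` such
that for each `Y ⊆ X` the edges inside `X` with an end in `Y` make up almost half of the sum of the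
degrees in `Y`, and `R` is the set of edges inside `X`.

A colour can be given to every edge of a matching of `X` at whose ends it has not yet been used. By
Edmonds' matching polytope theorem the multiplicities of the edges, divided by the number of colours
available to them, are essentially dominated by a convex combination of matchings. Independent
random matchings, one for each colour, then offer every edge more colours than the number of
parallel edges, essentially the only ones it competes with, and the colours are chosen greedily. -/

/-! ### Three plus three points cannot be joined by disjoint arcs in the plane -/

section LogIncrement

open Complex

lemma exists_continuous_log {X : Type*} [TopologicalSpace X] [SimplyConnectedSpace X]
    [LocallyPathConnectedSpace X] {F : X → ℂ} (hF : Continuous F) (h0 : ∀ x, F x ≠ 0) :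
    ∃ g : X → ℂ, Continuous g ∧ ∀ x, exp (g x) = F x := by
  obtain ⟨x₀⟩ : Nonempty X := inferInstance
  let F' : C(X, {z : ℂ // z ≠ 0}) := ⟨fun x => ⟨F x, h0 x⟩, by fun_prop⟩
  obtain ⟨g, ⟨-, hg⟩, -⟩ := isCoveringMap_exp.existsUnique_continuousMap_lifts F' x₀
    (log (F x₀)) (Subtype.ext (exp_log (h0 x₀)))
  exact ⟨g, g.continuous, fun x => congrArg Subtype.val (congrFun hg x)⟩

lemma sub_eq_sub_of_exp_eq_mul_exp {X : Type*} [TopologicalSpace X] [PreconnectedSpace X]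
    {f g : X → ℂ} (hf : Continuous f) (hg : Continuous g) {c : ℂ}
    (h : ∀ x, exp (f x) = c * exp (g x)) (x y : X) : f x - f y = g x - g y := by
  have hfg : f = fun x => g x + (f y - g y) := by
    refine isCoveringMap_exp.eq_of_comp_eq hf (by fun_prop) ?_ y (by ring)
    funext x
    refine Subtype.ext ?_
    change exp (f x) = exp (g x + (f y - g y))
    rw [exp_add, exp_sub, h x, h y]
    field_simp [exp_ne_zero]
  rw [congrFun hfg x]
  ring

open scoped Classical in
/-- The increment over `[0, 1]` of a continuous logarithm of the curve `h`, that is, `log |h|`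
plus `I` times the angle swept around the origin (and `0` if there is no such logarithm). -/
noncomputable def logIncrement (h : ℝ → ℂ) : ℂ :=
  if H : ∃ f : ℝ → ℂ, Continuous f ∧ ∀ t, exp (f t) = h t then H.choose 1 - H.choose 0 else 0

lemma logIncrement_eq {f h : ℝ → ℂ} (hf : Continuous f) {c : ℂ}
    (hfh : ∀ t, exp (f t) = c * h t) : logIncrement h = f 1 - f 0 := by
  have hc : c ≠ 0 := fun hc => exp_ne_zero (f 0) (by rw [hfh, hc, zero_mul])
  have H : ∃ f : ℝ → ℂ, Continuous f ∧ ∀ t, exp (f t) = h t :=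
    ⟨fun t => f t - log c, by fun_prop, fun t => by
      rw [exp_sub, exp_log hc, hfh, mul_div_cancel_left₀ _ hc]⟩
  rw [logIncrement, dif_pos H]
  exact (sub_eq_sub_of_exp_eq_mul_exp hf H.choose_spec.1
    (fun t => by rw [hfh, H.choose_spec.2]) 1 0).symm

lemma exp_logIncrement_mul {h : ℝ → ℂ} (hc : Continuous h) (h0 : ∀ t, h t ≠ 0) :
    exp (logIncrement h) * h 0 = h 1 := by
  obtain ⟨f, hf, hfh⟩ := exists_continuous_log hc h0
  rw [logIncrement_eq (c := 1) hf (by simpa using hfh), exp_sub, hfh, hfh,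
    div_mul_cancel₀ _ (h0 0)]

/-- Both sides are the increment of a logarithm of `γ s - δ t` along two sides of the square
`[0, 1]²`, from `(0, 0)` to `(1, 1)`. -/
lemma logIncrement_add_logIncrement_comm {γ δ : ℝ → ℂ} (hγ : Continuous γ) (hδ : Continuous δ)
    (hne : ∀ s t, γ s ≠ δ t) :
    logIncrement (fun t => γ t - δ 0) + logIncrement (fun t => δ t - γ 1) =
      logIncrement (fun t => δ t - γ 0) + logIncrement (fun t => γ t - δ 1) := by
  obtain ⟨g, hg, hgF⟩ := exists_continuous_log (X := ℝ × ℝ) (F := fun p => γ p.1 - δ p.2)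
    (by fun_prop) (fun p => sub_ne_zero.2 (hne _ _))
  rw [logIncrement_eq (f := fun t => g (t, 0)) (c := 1) (by fun_prop) (by simp [hgF]),
    logIncrement_eq (f := fun t => g (1, t)) (c := -1) (by fun_prop) (by simp [hgF]),
    logIncrement_eq (f := fun t => g (0, t)) (c := -1) (by fun_prop) (by simp [hgF]),
    logIncrement_eq (f := fun t => g (t, 1)) (c := 1) (by fun_prop) (by simp [hgF])]
  ring

lemma exists_log_sub {ι : Type*} [LinearOrder ι] {R : ι → ℂ} (hR : R.Injective) :
    ∃ ℓ : ι → ι → ℂ, (∀ i k, i ≠ k → exp (ℓ i k) = R k - R i) ∧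
      ∀ i k, i < k → ℓ k i = ℓ i k + Real.pi * I := by
  refine ⟨fun i k => if i < k then log (R k - R i) else log (R i - R k) + Real.pi * I,
    fun i k hik => ?_, fun i k hik => by simp only [if_pos hik, if_neg hik.not_gt]⟩
  dsimp only
  split_ifs
  · exact exp_log (sub_ne_zero.2 (hR.ne hik.symm))
  · rw [exp_add, exp_log (sub_ne_zero.2 (hR.ne hik)), exp_pi_mul_I]
    ring

lemma not_forall_int_cross_eq (a b : Fin 3 → Fin 3 → Fin 3 → ℤ)
    (h : ∀ i j k l, i < k → j ≠ l →
      a k i j + b j k l - a i k l - b l i j = if j < l then 1 else 0) : False := by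
  have hpair : ∀ i k, i < k →
      a k i 0 + b 0 k 1 - a i k 1 - b 1 i 0 = 1 ∧ a k i 0 + b 0 k 2 - a i k 2 - b 2 i 0 = 1 ∧
      a k i 1 + b 1 k 2 - a i k 2 - b 2 i 1 = 1 ∧ a k i 1 + b 1 k 0 - a i k 0 - b 0 i 1 = 0 ∧
      a k i 2 + b 2 k 0 - a i k 0 - b 0 i 2 = 0 ∧ a k i 2 + b 2 k 1 - a i k 1 - b 1 i 2 = 0 :=
    fun i k hik => ⟨h i 0 k 1 hik (by decide), h i 0 k 2 hik (by decide),
      h i 1 k 2 hik (by decide), h i 1 k 0 hik (by decide), h i 2 k 0 hik (by decide),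
      h i 2 k 1 hik (by decide)⟩
  have h01 := hpair 0 1 (by decide)
  have h02 := hpair 0 2 (by decide)
  have h12 := hpair 1 2 (by decide)
  clear h hpair
  omega

/-- Write `α k i j` for the increment of `log` along the arc `ij` seen from `P k`, and `β l i j`
for the one seen from `Q l`. Up to multiples of `2πI` both are determined by the end points of the
arc, and the resulting integers satisfy an unsolvable linear system. -/
lemma not_forall_log_increments {P Q : Fin 3 → ℂ} (hP : P.Injective) (hQ : Q.Injective)
    (hPQ : ∀ i j, P i ≠ Q j) (α β : Fin 3 → Fin 3 → Fin 3 → ℂ)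
    (hα : ∀ k i j, i ≠ k → exp (α k i j) * (P i - P k) = Q j - P k)
    (hβ : ∀ l i j, j ≠ l → exp (β l i j) * (P i - Q l) = Q j - Q l)
    (hαβ : ∀ i j k l, i ≠ k → j ≠ l → α k i j + β j k l = α i k l + β l i j) : False := by
  obtain ⟨p, hp, hp'⟩ := exists_log_sub hP
  obtain ⟨q, hq, hq'⟩ := exists_log_sub hQ
  let m : Fin 3 → Fin 3 → ℂ := fun i j => log (Q j - P i)
  have hm : ∀ i j, exp (m i j) = Q j - P i := fun i j => exp_log (sub_ne_zero.2 (hPQ i j).symm)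
  have hαn : ∀ k i j, ∃ n : ℤ, i ≠ k → α k i j = m k j - p k i + n * (2 * Real.pi * I) := by
    intro k i j
    by_cases hik : i = k
    · exact ⟨0, fun h => absurd hik h⟩
    obtain ⟨n, hn⟩ := exp_eq_exp_iff_exists_int.1 <|
      show exp (α k i j) = exp (m k j - p k i) by
        rw [exp_sub, hm, hp k i (Ne.symm hik), ← hα k i j hik,
          mul_div_cancel_right₀ _ (sub_ne_zero.2 (hP.ne hik))]
    exact ⟨n, fun _ => hn⟩
  have hβn : ∀ l i j, ∃ n : ℤ, j ≠ l →
      β l i j = q l j - m i l - Real.pi * I + n * (2 * Real.pi * I) := by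
    intro l i j
    by_cases hjl : j = l
    · exact ⟨0, fun h => absurd hjl h⟩
    obtain ⟨n, hn⟩ := exp_eq_exp_iff_exists_int.1 <|
      show exp (β l i j) = exp (q l j - m i l - Real.pi * I) by
        rw [exp_sub, exp_sub, hm, hq l j (Ne.symm hjl), ← hβ l i j hjl, exp_pi_mul_I,
          ← neg_sub (P i) (Q l), div_div, mul_neg_one, neg_neg,
          mul_div_cancel_right₀ _ (sub_ne_zero.2 (hPQ i l))]
    exact ⟨n, fun _ => hn⟩
  choose a ha using hαn
  choose b hb using hβn
  refine not_forall_int_cross_eq a b fun i j k l hik hjl => ?_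
  have h := hαβ i j k l hik.ne hjl
  rw [ha k i j hik.ne, hb j k l hjl.symm, ha i k l hik.ne', hb l i j hjl, hp' i k hik] at h
  apply Int.cast_injective (α := ℂ)
  apply mul_right_cancel₀ two_pi_I_ne_zero
  rcases hjl.lt_or_gt with hlt | hgt
  · rw [hq' j l hlt] at h
    rw [if_pos hlt]
    push_cast
    linear_combination h
  · rw [hq' l j hgt] at h
    rw [if_neg hgt.not_gt]
    push_cast
    linear_combination h

lemma not_forall_arcs_disjoint (P Q : Fin 3 → ℂ) (γ : Fin 3 → Fin 3 → ℝ → ℂ)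
    (hγ : ∀ i j, Continuous (γ i j)) (h0 : ∀ i j, γ i j 0 = P i) (h1 : ∀ i j, γ i j 1 = Q j)
    (hd : ∀ i j k l, i ≠ k → j ≠ l → ∀ s t, γ i j s ≠ γ k l t) : False := by
  have other : ∀ i : Fin 3, ∃ k, i ≠ k := by decide
  have hPP : ∀ i j k, i ≠ k → ∀ t, γ i j t ≠ P k := fun i j k hik t => by
    obtain ⟨l, hl⟩ := other j
    exact h0 k l ▸ hd i j k l hik hl t 0
  have hQQ : ∀ i j l, j ≠ l → ∀ t, γ i j t ≠ Q l := fun i j l hjl t => by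
    obtain ⟨k, hk⟩ := other i
    exact h1 k l ▸ hd i j k l hk hjl t 1
  have hP : P.Injective := fun i k hik => by
    by_contra hne
    exact hPP i 0 k hne 0 ((h0 i 0).trans hik)
  have hQ : Q.Injective := fun j l hjl => by
    by_contra hne
    exact hQQ 0 j l hne 1 ((h1 0 j).trans hjl)
  have hPQ : ∀ i j, P i ≠ Q j := fun i j => by
    obtain ⟨l, hl⟩ := other j
    exact h0 i l ▸ hQQ i l j hl.symm 0
  refine not_forall_log_increments hP hQ hPQ (fun k i j => logIncrement fun t => γ i j t - P k)
    (fun l i j => logIncrement fun t => γ i j t - Q l) (fun k i j hik => ?_)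
    (fun l i j hjl => ?_) (fun i j k l hik hjl => ?_)
  · have hcont := hγ i j
    simpa only [h0, h1] using exp_logIncrement_mul (h := fun t => γ i j t - P k) (by fun_prop)
      fun t => sub_ne_zero.2 (hPP i j k hik t)
  · have hcont := hγ i j
    simpa only [h0, h1] using exp_logIncrement_mul (h := fun t => γ i j t - Q l) (by fun_prop)
      fun t => sub_ne_zero.2 (hQQ i j l hjl t)
  · simpa only [h0, h1] using
      logIncrement_add_logIncrement_comm (hγ i j) (hγ k l) (hd i j k l hik hjl)

end LogIncrement

/-! ### Minors -/

section Minors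

variable {U V W : Type*}

/-- There is an edge between `S` and `T`. -/
def Touch (G : SimpleGraph V) (S T : Set V) : Prop :=
  ∃ u ∈ S, ∃ v ∈ T, G.Adj u v

lemma Touch.symm {G : SimpleGraph V} {S T : Set V} (h : Touch G S T) : Touch G T S := by
  obtain ⟨u, hu, v, hv, h⟩ := h
  exact ⟨v, hv, u, hu, h.symm⟩

lemma Touch.mono {G : SimpleGraph V} {S T S' T' : Set V} (h : Touch G S T)
    (hS : S ⊆ S') (hT : T ⊆ T') : Touch G S' T' := by
  obtain ⟨u, hu, v, hv, h⟩ := h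
  exact ⟨u, hS hu, v, hT hv, h⟩

/-- The branch sets `φ a` represent `J` as a minor of `G`. The branch sets of isolated vertices of
`J` may be empty, so that deleting vertices amounts to deleting all edges at them. -/
structure IsMinorModel (J : SimpleGraph U) (G : SimpleGraph V) (φ : U → Set V) : Prop where
  preconnected : ∀ a, (G.induce (φ a)).Preconnected
  disjoint : Pairwise fun a b => Disjoint (φ a) (φ b)
  touch : ∀ a b, J.Adj a b → Touch G (φ a) (φ b)

/-- `J` is a minor of `G`, up to isolated vertices of `J`. -/
def IsMinor (J : SimpleGraph U) (G : SimpleGraph V) : Prop :=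
  ∃ φ : U → Set V, IsMinorModel J G φ

lemma reachable_induce_mono {G : SimpleGraph V} {S T : Set V} (hST : S ⊆ T) {u v : V}
    (hu : u ∈ S) (hv : v ∈ S) (h : (G.induce S).Reachable ⟨u, hu⟩ ⟨v, hv⟩) :
    (G.induce T).Reachable ⟨u, hST hu⟩ ⟨v, hST hv⟩ :=
  h.map (G.induceHomOfLE hST).toHom

lemma preconnected_induce_of_star {G : SimpleGraph V} {S : Set V} {r : V} (hr : r ∈ S)
    (h : ∀ v ∈ S, v ≠ r → G.Adj r v) : (G.induce S).Preconnected := by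
  have hreach : ∀ v (hv : v ∈ S), (G.induce S).Reachable ⟨r, hr⟩ ⟨v, hv⟩ := by
    intro v hv
    by_cases hvr : v = r
    · subst hvr
      exact Reachable.refl _
    · exact Adj.reachable (show (G.induce S).Adj ⟨r, hr⟩ ⟨v, hv⟩ from h v hv hvr)
  exact fun u v => (hreach u u.2).symm.trans (hreach v v.2)

lemma preconnected_induce_singleton (G : SimpleGraph V) (v : V) :
    (G.induce ({v} : Set V)).Preconnected :=
  preconnected_induce_of_star rfl fun _ hw hne => absurd hw hne

lemma IsMinorModel.preconnected_biUnion {J : SimpleGraph V} {G : SimpleGraph W} {φ : V → Set W}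
    (hφ : IsMinorModel J G φ) {S : Set V} (hS : (J.induce S).Preconnected) :
    (G.induce (⋃ a ∈ S, φ a)).Preconnected := by
  have hsub : ∀ a : S, φ a ⊆ ⋃ a ∈ S, φ a := fun a => Set.subset_biUnion_of_mem a.2
  have hwalk : ∀ (a b : S), (J.induce S).Walk a b → ∀ p (hp : p ∈ φ a) q (hq : q ∈ φ b),
      (G.induce (⋃ a ∈ S, φ a)).Reachable ⟨p, hsub a hp⟩ ⟨q, hsub b hq⟩ := by
    intro a b w
    induction w with
    | nil => exact fun p hp q hq =>
        reachable_induce_mono (hsub _) hp hq (hφ.preconnected _ ⟨p, hp⟩ ⟨q, hq⟩)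
    | @cons a c b hac _ ih =>
      intro p hp q hq
      obtain ⟨x, hx, y, hy, hxy⟩ := hφ.touch a c hac
      have hedge : (G.induce (⋃ a ∈ S, φ a)).Adj ⟨x, hsub a hx⟩ ⟨y, hsub c hy⟩ := hxy
      exact ((reachable_induce_mono (hsub a) hp hx (hφ.preconnected a ⟨p, hp⟩ ⟨x, hx⟩)).trans
        hedge.reachable).trans (ih y hy q hq)
  rintro ⟨p, hp⟩ ⟨q, hq⟩
  obtain ⟨a, ha, hpa⟩ := Set.mem_iUnion₂.1 hp
  obtain ⟨b, hb, hqb⟩ := Set.mem_iUnion₂.1 hq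
  obtain ⟨w⟩ := hS ⟨a, ha⟩ ⟨b, hb⟩
  exact hwalk _ _ w p hpa q hqb

lemma IsMinorModel.comp {I : SimpleGraph U} {J : SimpleGraph V} {G : SimpleGraph W}
    {φ : V → Set W} {ψ : U → Set V} (hφ : IsMinorModel J G φ) (hψ : IsMinorModel I J ψ) :
    IsMinorModel I G fun i => ⋃ a ∈ ψ i, φ a where
  preconnected i := hφ.preconnected_biUnion (hψ.preconnected i)
  disjoint i j hij := by
    simp only [Set.disjoint_iUnion_left, Set.disjoint_iUnion_right]
    exact fun b hb a ha => hφ.disjoint fun hab =>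
      Set.disjoint_left.1 (hψ.disjoint hij) ha (hab ▸ hb)
  touch i j hij := by
    obtain ⟨a, ha, b, hb, hab⟩ := hψ.touch i j hij
    exact (hφ.touch a b hab).mono (Set.subset_biUnion_of_mem ha) (Set.subset_biUnion_of_mem hb)

lemma IsMinor.trans {I : SimpleGraph U} {J : SimpleGraph V} {G : SimpleGraph W}
    (hIJ : IsMinor I J) (hJG : IsMinor J G) : IsMinor I G := by
  obtain ⟨ψ, hψ⟩ := hIJ
  obtain ⟨φ, hφ⟩ := hJG
  exact ⟨_, hφ.comp hψ⟩

lemma isMinor_of_hom {J : SimpleGraph U} {G : SimpleGraph V} (f : J →g G)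
    (hf : Function.Injective f) : IsMinor J G :=
  ⟨fun a => {f a}, fun _ => preconnected_induce_singleton G _,
    fun _ _ hab => Set.disjoint_singleton.2 (hf.ne hab),
    fun _ _ hab => ⟨_, rfl, _, rfl, f.map_adj hab⟩⟩

/-- `G` has no `K₃,₃` minor. -/
def HasNoK33Minor (G : SimpleGraph V) : Prop :=
  ¬ IsMinor (completeBipartiteGraph (Fin 3) (Fin 3)) G

/-- `G` has no `K₆` minor. -/
def HasNoK6Minor (G : SimpleGraph V) : Prop := ¬ IsMinor (completeGraph (Fin 6)) G

lemma HasNoK33Minor.of_isMinor {J : SimpleGraph U} {G : SimpleGraph V} (hG : HasNoK33Minor G)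
    (h : IsMinor J G) : HasNoK33Minor J :=
  fun hJ => hG (hJ.trans h)

lemma HasNoK6Minor.of_isMinor {J : SimpleGraph U} {G : SimpleGraph V} (hG : HasNoK6Minor G)
    (h : IsMinor J G) : HasNoK6Minor J :=
  fun hJ => hG (hJ.trans h)

lemma HasNoK33Minor.hasNoK6Minor {G : SimpleGraph V} (hG : HasNoK33Minor G) : HasNoK6Minor G :=
  fun h => hG <| (isMinor_of_hom (J := completeBipartiteGraph (Fin 3) (Fin 3))
    (G := completeGraph (Fin 6)) ⟨finSumFinEquiv,
      fun hab => finSumFinEquiv.injective.ne hab.ne⟩ finSumFinEquiv.injective).trans h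

end Minors

/-! ### Plane graphs have no `K₃,₃` minor -/

namespace PlaneEmbedding

variable {V : Type*} {G : SimpleGraph V}

/-- The part of the drawing spanned by the vertex set `T`: the points of `T` and the open arcs of
the edges with both ends in `T`. -/
def drawn (E : PlaneEmbedding G) (T : Set V) : Set (ℝ × ℝ) :=
  E.pos '' T ∪ {p | ∃ e : G.edgeSet, (∀ v ∈ (e : Sym2 V), v ∈ T) ∧
    ∃ t ∈ Set.Ioo (0 : ℝ) 1, E.arc e t = p}

lemma disjoint_drawn (E : PlaneEmbedding G) {S T : Set V} (h : Disjoint S T) :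
    Disjoint (E.drawn S) (E.drawn T) := by
  rw [Set.disjoint_left] at h ⊢
  rintro p (⟨u, hu, rfl⟩ | ⟨e, he, s, hs, rfl⟩) (⟨v, hv, hvu⟩ | ⟨f, hf, t, ht, hft⟩)
  · exact h hu (E.inj hvu ▸ hv)
  · exact E.arc_avoid f t ht ⟨u, hft.symm⟩
  · exact E.arc_avoid e s hs ⟨v, hvu⟩
  · refine E.arc_disjoint e f ?_ s hs t ht hft.symm
    rintro rfl
    obtain ⟨u, v, huv, -⟩ := E.arc_ends e
    have hu : u ∈ (e : Sym2 V) := huv ▸ Sym2.mem_mk_left u v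
    exact h (he u hu) (hf u hu)

lemma joinedIn_of_adj (E : PlaneEmbedding G) {T : Set V} {u v : V} (hu : u ∈ T) (hv : v ∈ T)
    (h : G.Adj u v) : JoinedIn (E.drawn T) (E.pos u) (E.pos v) := by
  obtain ⟨a, b, hab, ha, hb⟩ := E.arc_ends ⟨s(u, v), h⟩
  replace hab : s(u, v) = s(a, b) := hab
  have huvT : ∀ w ∈ s(u, v), w ∈ T := by
    intro w hw
    rcases Sym2.mem_iff.1 hw with rfl | rfl <;> assumption
  have hjoin : JoinedIn (E.drawn T) (E.pos a) (E.pos b) := by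
    refine JoinedIn.ofLine (E.arc_cont _) ha hb ?_
    rintro p ⟨t, ht, rfl⟩
    rcases ht.1.eq_or_lt with rfl | h0
    · exact ha ▸ Or.inl ⟨a, huvT a (hab ▸ Sym2.mem_mk_left a b), rfl⟩
    rcases ht.2.eq_or_lt with rfl | h1
    · exact hb ▸ Or.inl ⟨b, huvT b (hab ▸ Sym2.mem_mk_right a b), rfl⟩
    · exact Or.inr ⟨_, huvT, t, ⟨h0, h1⟩, rfl⟩
  rcases Sym2.eq_iff.1 hab with ⟨rfl, rfl⟩ | ⟨rfl, rfl⟩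
  · exact hjoin
  · exact hjoin.symm

lemma joinedIn_of_preconnected (E : PlaneEmbedding G) {T : Set V}
    (hT : (G.induce T).Preconnected) {u v : V} (hu : u ∈ T) (hv : v ∈ T) :
    JoinedIn (E.drawn T) (E.pos u) (E.pos v) := by
  have hwalk : ∀ a b : T, (G.induce T).Walk a b → JoinedIn (E.drawn T) (E.pos a) (E.pos b) := by
    intro a b w
    induction w with
    | nil => exact JoinedIn.refl (Or.inl ⟨_, Subtype.prop _, rfl⟩)
    | cons hac _ ih => exact (E.joinedIn_of_adj (Subtype.prop _) (Subtype.prop _) hac).trans ih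
  obtain ⟨w⟩ := hT ⟨u, hu⟩ ⟨v, hv⟩
  exact hwalk _ _ w

lemma hasNoK33Minor (E : PlaneEmbedding G) : HasNoK33Minor G := by
  rintro ⟨φ, hφ⟩
  let A := fun i => φ (Sum.inl i)
  let B := fun j => φ (Sum.inr j)
  have hAB : ∀ i j, Touch G (A i) (B j) := fun i j => hφ.touch _ _ (by simp)
  choose a ha using fun i => (hAB i 0).imp fun _ h => h.1
  choose b hb using fun j => (hAB 0 j).symm.imp fun _ h => h.1
  have hJ : ∀ i j, JoinedIn (E.drawn (A i ∪ B j)) (E.pos (a i)) (E.pos (b j)) := by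
    intro i j
    obtain ⟨x, hx, y, hy, hxy⟩ := hAB i j
    exact E.joinedIn_of_preconnected (connected_induce_union (hφ.preconnected _)
      (hφ.preconnected _) hx hy hxy).preconnected (Or.inl (ha i)) (Or.inr (hb j))
  let p := fun i j => (hJ i j).somePath
  have hp : ∀ i j s, (p i j).extend s ∈ E.drawn (A i ∪ B j) := by
    intro i j s
    obtain ⟨t, ht⟩ : (p i j).extend s ∈ Set.range (p i j) := by
      rw [← Path.extend_range]
      exact ⟨s, rfl⟩
    exact ht ▸ (hJ i j).somePath_mem t
  let e := Complex.equivRealProdCLM.symm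
  refine not_forall_arcs_disjoint (fun i => e (E.pos (a i))) (fun j => e (E.pos (b j)))
    (fun i j s => e ((p i j).extend s)) (fun i j => e.continuous.comp (p i j).continuous_extend)
    (fun i j => by simp) (fun i j => by simp) ?_
  intro i j k l hik hjl s t heq
  have hdisj : Disjoint (A i ∪ B j) (A k ∪ B l) := by
    simp only [Set.disjoint_union_left, Set.disjoint_union_right]
    exact ⟨⟨hφ.disjoint (by simpa using hik), hφ.disjoint (by simp)⟩,
      hφ.disjoint (by simp), hφ.disjoint (by simpa using hjl)⟩
  exact Set.disjoint_left.1 (E.disjoint_drawn hdisj) (hp i j s) (e.injective heq ▸ hp k l t)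

end PlaneEmbedding

section SparseMinors

variable {V : Type*}

/-! ### Degrees into finite sets -/

open scoped Classical in
/-- The neighbours of `x` in `U`. -/
noncomputable def nbrIn (G : SimpleGraph V) (U : Finset V) (x : V) : Finset V :=
  U.filter (G.Adj x)

/-- The number of neighbours of `x` in `U`. -/
noncomputable def degIn (G : SimpleGraph V) (U : Finset V) (x : V) : ℕ := (nbrIn G U x).card

lemma mem_nbrIn {G : SimpleGraph V} {U : Finset V} {x y : V} :
    y ∈ nbrIn G U x ↔ y ∈ U ∧ G.Adj x y := by
  simp [nbrIn]

lemma nbrIn_subset (G : SimpleGraph V) (U : Finset V) (x : V) : nbrIn G U x ⊆ U :=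
  fun _ h => (mem_nbrIn.1 h).1

lemma nbrIn_mono (G : SimpleGraph V) {U W : Finset V} (h : U ⊆ W) (x : V) :
    nbrIn G U x ⊆ nbrIn G W x :=
  fun _ hy => mem_nbrIn.2 ⟨h (mem_nbrIn.1 hy).1, (mem_nbrIn.1 hy).2⟩

lemma degIn_mono (G : SimpleGraph V) {U W : Finset V} (h : U ⊆ W) (x : V) :
    degIn G U x ≤ degIn G W x :=
  Finset.card_le_card (nbrIn_mono G h x)

open scoped Classical in
lemma degIn_eq_sum (G : SimpleGraph V) (U : Finset V) (x : V) :
    degIn G U x = ∑ y ∈ U, if G.Adj x y then 1 else 0 := by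
  rw [degIn, nbrIn, Finset.card_filter]

lemma sum_degIn_comm (G : SimpleGraph V) (U W : Finset V) :
    ∑ x ∈ U, degIn G W x = ∑ y ∈ W, degIn G U y := by
  classical
  simp only [degIn_eq_sum]
  rw [Finset.sum_comm]
  simp only [G.adj_comm]

open scoped Classical in
lemma sum_degIn_eq_card (G : SimpleGraph V) (U W : Finset V) :
    ∑ x ∈ U, degIn G W x = ((U ×ˢ W).filter fun p => G.Adj p.1 p.2).card := by
  rw [Finset.card_filter, Finset.sum_product]
  simp only [degIn_eq_sum]

/-! ### Dense graphs have large clique minors -/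

/-- The sets `f i` represent the complete graph on `t` vertices as a minor of the subgraph of `G`
induced on `S`. -/
structure IsCliqueModel (G : SimpleGraph V) (S : Set V) {t : ℕ} (f : Fin t → Set V) : Prop
    extends IsMinorModel (completeGraph (Fin t)) G f where
  subset : ∀ i, f i ⊆ S
  nonempty : ∀ i, (f i).Nonempty

lemma IsCliqueModel.biUnion {J G : SimpleGraph V} {φ : V → Set V} (hφ : IsMinorModel J G φ)
    {S T : Set V} (hST : ∀ a ∈ S, φ a ⊆ T) (hne : ∀ a ∈ S, (φ a).Nonempty) {t : ℕ}
    {f : Fin t → Set V} (hf : IsCliqueModel J S f) :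
    IsCliqueModel G T fun i => ⋃ a ∈ f i, φ a where
  toIsMinorModel := hφ.comp hf.toIsMinorModel
  subset i := Set.iUnion₂_subset fun a ha => hST a (hf.subset i ha)
  nonempty i := by
    obtain ⟨a, ha⟩ := hf.nonempty i
    exact (hne a (hf.subset i ha)).mono (Set.subset_biUnion_of_mem ha)

lemma IsCliqueModel.cons {G : SimpleGraph V} {v : V} {S T : Set V} (hvT : v ∈ T) (hST : S ⊆ T)
    (hS : ∀ x ∈ S, G.Adj v x) {t : ℕ} {f : Fin t → Set V} (hf : IsCliqueModel G S f) :
    IsCliqueModel G T (Fin.cons {v} f : Fin (t + 1) → Set V) := by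
  have hdisj : ∀ i, Disjoint {v} (f i) := fun i =>
    Set.disjoint_singleton_left.2 fun h => (hS v (hf.subset i h)).ne rfl
  have htouch : ∀ i, Touch G {v} (f i) := fun i => by
    obtain ⟨x, hx⟩ := hf.nonempty i
    exact ⟨v, rfl, x, hx, hS x (hf.subset i hx)⟩
  refine { preconnected := ?_, disjoint := ?_, touch := ?_, subset := ?_, nonempty := ?_ }
  · exact Fin.cases (preconnected_induce_singleton G v) hf.preconnected
  · exact Fin.cases (Fin.cases (fun h => (h rfl).elim) fun j _ => hdisj j) fun i =>
      Fin.cases (fun _ => (hdisj i).symm) fun j hij => hf.disjoint fun h => hij (congrArg _ h)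
  · exact Fin.cases (Fin.cases (fun h => (h.ne rfl).elim) fun j _ => htouch j) fun i =>
      Fin.cases (fun _ => (htouch i).symm) fun j hij => hf.touch i j fun h => hij (congrArg _ h)
  · exact Fin.cases (Set.singleton_subset_iff.2 hvT) fun i => (hf.subset i).trans hST
  · exact Fin.cases (Set.singleton_nonempty v) hf.nonempty

/-- The graph obtained by contracting the edge `uv` to the vertex `u`, with `v` left isolated. -/
def contractEdge (G : SimpleGraph V) (u v : V) : SimpleGraph V :=
  SimpleGraph.fromRel fun a b => (G.Adj a b ∧ a ≠ v ∧ b ≠ v) ∨ (a = u ∧ b ≠ v ∧ G.Adj v b)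

lemma contractEdge_adj {G : SimpleGraph V} {u v a b : V} :
    (contractEdge G u v).Adj a b ↔ a ≠ b ∧ ((G.Adj a b ∧ a ≠ v ∧ b ≠ v) ∨
      (a = u ∧ b ≠ v ∧ G.Adj v b) ∨ (b = u ∧ a ≠ v ∧ G.Adj v a)) := by
  simp only [contractEdge, SimpleGraph.fromRel_adj, G.adj_comm b a]
  tauto

open scoped Classical in
/-- The branch sets of `contractEdge G u v` in `G`. -/
noncomputable def contractEdgeModel (u v a : V) : Set V :=
  if a = v then ∅ else if a = u then {u, v} else {a}

lemma mem_contractEdgeModel {u v a x : V} :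
    x ∈ contractEdgeModel u v a ↔ a ≠ v ∧ (x = a ∨ a = u ∧ x = v) := by
  unfold contractEdgeModel
  grind

lemma isMinorModel_contractEdge {G : SimpleGraph V} {u v : V} (huv : G.Adj u v) :
    IsMinorModel (contractEdge G u v) G (contractEdgeModel u v) where
  preconnected a := by
    by_cases hav : a = v
    · rw [show contractEdgeModel u v a = ∅ by simp [contractEdgeModel, hav]]
      exact fun x => x.2.elim
    by_cases hau : a = u
    · rw [show contractEdgeModel u v a = {u, v} by simp [contractEdgeModel, hau, huv.ne]]
      exact (induce_pair_connected_of_adj huv).preconnected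
    · rw [show contractEdgeModel u v a = {a} by simp [contractEdgeModel, hau, hav]]
      exact preconnected_induce_singleton G a
  disjoint a b hab := by
    simp only [Set.disjoint_left, mem_contractEdgeModel]
    grind
  touch a b hab := by
    obtain ⟨-, ⟨h1, h2, h3⟩ | ⟨rfl, h2, h3⟩ | ⟨rfl, h2, h3⟩⟩ := contractEdge_adj.1 hab
    · exact ⟨a, mem_contractEdgeModel.2 ⟨h2, Or.inl rfl⟩, b,
        mem_contractEdgeModel.2 ⟨h3, Or.inl rfl⟩, h1⟩
    · exact ⟨v, mem_contractEdgeModel.2 ⟨huv.ne, Or.inr ⟨rfl, rfl⟩⟩, b,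
        mem_contractEdgeModel.2 ⟨h2, Or.inl rfl⟩, h3⟩
    · exact ⟨a, mem_contractEdgeModel.2 ⟨h2, Or.inl rfl⟩, v,
        mem_contractEdgeModel.2 ⟨huv.ne, Or.inr ⟨rfl, rfl⟩⟩, h3.symm⟩

lemma IsCliqueModel.of_contractEdge {G : SimpleGraph V} {u v : V} (huv : G.Adj u v) {t : ℕ}
    {U : Finset V} (hv : v ∈ U) [DecidableEq V] {f : Fin t → Set V}
    (hf : IsCliqueModel (contractEdge G u v) (U.erase v) f) :
    IsCliqueModel G U fun i => ⋃ a ∈ f i, contractEdgeModel u v a := by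
  refine IsCliqueModel.biUnion (isMinorModel_contractEdge huv) (fun a ha x hx => ?_)
    (fun a ha => ⟨a, mem_contractEdgeModel.2 ⟨Finset.ne_of_mem_erase ha, Or.inl rfl⟩⟩) hf
  obtain ⟨-, rfl | ⟨-, rfl⟩⟩ := mem_contractEdgeModel.1 hx
  · exact Finset.mem_of_mem_erase ha
  · exact hv

lemma degIn_le_degIn_contractEdge [DecidableEq V] {G : SimpleGraph V} {u v a : V} {U : Finset V}
    (huv : u ≠ v) (hu : u ∈ U) (haU : a ∈ U) (hau : a ≠ u) (hav : a ≠ v) :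
    degIn G U a ≤ degIn (contractEdge G u v) (U.erase v) a +
      if a ∈ nbrIn G U u ∩ nbrIn G U v then 1 else 0 := by
  have hsub : (nbrIn G U a).erase v ⊆ nbrIn (contractEdge G u v) (U.erase v) a := by
    intro x hx
    rw [Finset.mem_erase, mem_nbrIn] at hx
    rw [mem_nbrIn, Finset.mem_erase, contractEdge_adj]
    exact ⟨⟨hx.1, hx.2.1⟩, hx.2.2.ne, Or.inl ⟨hx.2.2, hav, hx.1⟩⟩
  have hcard := Finset.card_le_card hsub
  have herase := Finset.pred_card_le_card_erase (s := nbrIn G U a) (a := v)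
  unfold degIn
  by_cases hv : G.Adj a v
  swap
  · rw [Finset.erase_eq_of_notMem fun h => hv (mem_nbrIn.1 h).2] at hcard
    omega
  by_cases hu' : G.Adj a u
  · rw [if_pos (by simp [mem_nbrIn, haU, hu'.symm, hv.symm])]
    omega
  · have hua : u ∉ (nbrIn G U a).erase v :=
      fun h => hu' (mem_nbrIn.1 (Finset.mem_of_mem_erase h)).2
    have hins : insert u ((nbrIn G U a).erase v) ⊆ nbrIn (contractEdge G u v) (U.erase v) a :=
      Finset.insert_subset (mem_nbrIn.2 ⟨Finset.mem_erase.2 ⟨huv, hu⟩,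
        contractEdge_adj.2 ⟨hau, Or.inr (Or.inr ⟨rfl, hav, hv.symm⟩)⟩⟩) hsub
    have hcard' := Finset.card_le_card hins
    rw [Finset.card_insert_of_notMem hua] at hcard'
    omega

lemma degIn_add_degIn_le_degIn_contractEdge [DecidableEq V] {G : SimpleGraph V} {u v : V}
    (huv : u ≠ v) (U : Finset V) :
    degIn G U u + degIn G U v ≤ degIn (contractEdge G u v) (U.erase v) u +
      (nbrIn G U u ∩ nbrIn G U v).card + 2 := by
  have hsub : ((nbrIn G U u ∪ nbrIn G U v).erase u).erase v ⊆
      nbrIn (contractEdge G u v) (U.erase v) u := by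
    intro x hx
    simp only [Finset.mem_erase, Finset.mem_union, mem_nbrIn] at hx
    rw [mem_nbrIn, Finset.mem_erase, contractEdge_adj]
    tauto
  have hcard := Finset.card_le_card hsub
  have hunion := Finset.card_union_add_card_inter (nbrIn G U u) (nbrIn G U v)
  have herase := Finset.pred_card_le_card_erase (s := nbrIn G U u ∪ nbrIn G U v) (a := u)
  have herase' :=
    Finset.pred_card_le_card_erase (s := (nbrIn G U u ∪ nbrIn G U v).erase u) (a := v)
  unfold degIn
  omega

lemma sum_degIn_le_sum_degIn_contractEdge {G : SimpleGraph V} {u v : V} (huv : u ≠ v)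
    [DecidableEq V] {U : Finset V} (hu : u ∈ U) (hv : v ∈ U) :
    ∑ a ∈ U, degIn G U a ≤ ∑ a ∈ U.erase v, degIn (contractEdge G u v) (U.erase v) a +
      2 * (nbrIn G U u ∩ nbrIn G U v).card + 2 := by
  have hue : u ∈ U.erase v := Finset.mem_erase.2 ⟨huv, hu⟩
  have hrest : ∑ a ∈ (U.erase v).erase u, degIn G U a ≤
      ∑ a ∈ (U.erase v).erase u, degIn (contractEdge G u v) (U.erase v) a +
        (nbrIn G U u ∩ nbrIn G U v).card := by
    calc _ ≤ ∑ a ∈ (U.erase v).erase u, (degIn (contractEdge G u v) (U.erase v) a +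
          if a ∈ nbrIn G U u ∩ nbrIn G U v then 1 else 0) :=
          Finset.sum_le_sum fun a ha => by
            simp only [Finset.mem_erase] at ha
            exact degIn_le_degIn_contractEdge huv hu ha.2.2 ha.1 ha.2.1
      _ ≤ _ := by
          rw [Finset.sum_add_distrib, ← Finset.card_filter]
          exact Nat.add_le_add_left
            (Finset.card_le_card fun x hx => (Finset.mem_filter.1 hx).2) _
  have hends := degIn_add_degIn_le_degIn_contractEdge huv (G := G) U
  rw [← Finset.add_sum_erase U _ hv, ← Finset.add_sum_erase (U.erase v) _ hue,
    ← Finset.add_sum_erase (U.erase v) (degIn (contractEdge G u v) (U.erase v)) hue]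
  omega

/-- If every edge lies in many triangles, the neighbourhood of a vertex is dense, and otherwise
contracting an edge in few triangles keeps the density. -/
lemma exists_isCliqueModel (k : ℕ) (G : SimpleGraph V) (U : Finset V) (hU : U.Nonempty)
    (hsum : 2 ^ k * U.card ≤ ∑ u ∈ U, degIn G U u) :
    ∃ f : Fin k → Set V, IsCliqueModel G U f := by
  classical
  induction k generalizing G U with
  | zero => exact ⟨fun _ => ∅, ⟨fun i => i.elim0, fun i => i.elim0, fun i => i.elim0⟩,
      fun i => i.elim0, fun i => i.elim0⟩
  | succ k ih =>
    induction hn : U.card using Nat.strong_induction_on generalizing G U with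
    | _ n ihn =>
    subst hn
    by_cases hex : ∃ u ∈ U, ∃ v ∈ U, G.Adj u v ∧ (nbrIn G U u ∩ nbrIn G U v).card < 2 ^ k
    · obtain ⟨u, hu, v, hv, huv, hlt⟩ := hex
      have hcard := Finset.card_erase_add_one hv
      have hcontract := sum_degIn_le_sum_degIn_contractEdge (G := G) huv.ne hu hv
      obtain ⟨f, hf⟩ := ihn _ (by omega) (contractEdge G u v) (U.erase v)
        ⟨u, Finset.mem_erase.2 ⟨huv.ne, hu⟩⟩ (by
          rw [← hcard] at hsum
          rw [pow_succ] at hsum ⊢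
          linarith) rfl
      exact ⟨_, hf.of_contractEdge huv hv⟩
    · push Not at hex
      have hpos : 0 < ∑ u ∈ U, degIn G U u :=
        (Nat.mul_pos (by positivity) hU.card_pos).trans_le hsum
      obtain ⟨v, hv, hv0⟩ := Finset.exists_ne_zero_of_sum_ne_zero hpos.ne'
      obtain ⟨f, hf⟩ := ih G (nbrIn G U v) (Finset.card_ne_zero.1 hv0) (by
        rw [mul_comm, ← smul_eq_mul]
        refine Finset.card_nsmul_le_sum _ _ _ fun w hw => ?_
        rw [mem_nbrIn] at hw
        refine (hex v hv w hw.1 hw.2).trans (Finset.card_le_card fun x hx => ?_)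
        rw [Finset.mem_inter, mem_nbrIn (x := w)] at hx
        exact mem_nbrIn.2 ⟨hx.1, hx.2.2⟩)
      exact ⟨_, hf.cons hv (Finset.coe_subset.2 (nbrIn_subset G U v))
        fun x hx => (mem_nbrIn.1 hx).2⟩

lemma HasNoK6Minor.sum_degIn_le {G : SimpleGraph V} (hG : HasNoK6Minor G) (U : Finset V) :
    ∑ u ∈ U, degIn G U u ≤ 64 * U.card := by
  by_contra! h
  have hU : U.Nonempty := by
    rw [Finset.nonempty_iff_ne_empty]
    rintro rfl
    simp at h
  obtain ⟨f, hf⟩ := exists_isCliqueModel 6 G U hU h.le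
  exact hG ⟨f, hf.toIsMinorModel⟩

lemma HasNoK6Minor.sum_degIn_le_add {G : SimpleGraph V} (hG : HasNoK6Minor G) (U W : Finset V) :
    ∑ u ∈ U, degIn G W u ≤ 64 * (U.card + W.card) := by
  classical
  calc ∑ u ∈ U, degIn G W u ≤ ∑ u ∈ U, degIn G (U ∪ W) u :=
        Finset.sum_le_sum fun u _ => degIn_mono G Finset.subset_union_right u
    _ ≤ ∑ u ∈ U ∪ W, degIn G (U ∪ W) u :=
        Finset.sum_le_sum_of_subset Finset.subset_union_left
    _ ≤ 64 * (U ∪ W).card := hG.sum_degIn_le _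
    _ ≤ 64 * (U.card + W.card) := Nat.mul_le_mul_left _ (Finset.card_union_le _ _)

end SparseMinors

section Counting

variable {V : Type*}

/-! ### Contracting stars -/

/-- The graph of the pairs `a z, b z` with `z ∈ Z`. -/
def pairGraph (Z : Finset V) (a b : V → V) : SimpleGraph V :=
  SimpleGraph.fromRel fun x y => ∃ z ∈ Z, a z = x ∧ b z = y

lemma pairGraph_adj {Z : Finset V} {a b : V → V} {x y : V} :
    (pairGraph Z a b).Adj x y ↔ x ≠ y ∧ ∃ z ∈ Z, (a z = x ∧ b z = y) ∨ (a z = y ∧ b z = x) := by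
  simp only [pairGraph, SimpleGraph.fromRel_adj]
  grind

lemma pairGraph_adj_iff_sym2 {Z : Finset V} {a b : V → V} {x y : V} :
    (pairGraph Z a b).Adj x y ↔ x ≠ y ∧ ∃ z ∈ Z, s(a z, b z) = s(x, y) := by
  simp only [pairGraph_adj, Sym2.eq_iff]

/-- Two distinct neighbours `a z`, `b z` in `A` of each `z ∈ Z`. -/
structure IsPairing (G : SimpleGraph V) (A Z : Finset V) (a b : V → V) : Prop where
  left_mem : ∀ z ∈ Z, a z ∈ nbrIn G A z
  right_mem : ∀ z ∈ Z, b z ∈ nbrIn G A z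
  ne : ∀ z ∈ Z, a z ≠ b z

lemma IsPairing.mono {G : SimpleGraph V} {A Z Y : Finset V} {a b : V → V}
    (h : IsPairing G A Z a b) (hYZ : Y ⊆ Z) : IsPairing G A Y a b :=
  ⟨fun z hz => h.left_mem z (hYZ hz), fun z hz => h.right_mem z (hYZ hz),
    fun z hz => h.ne z (hYZ hz)⟩

lemma IsPairing.isMinor {G : SimpleGraph V} {Z A : Finset V} {a b : V → V}
    (h : IsPairing G A Z a b) (hZA : Disjoint Z A) : IsMinor (pairGraph Z a b) G := by
  have hZ : ∀ z ∈ Z, z ∉ A := fun z hz => Finset.disjoint_left.1 hZA hz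
  have ha z hz := mem_nbrIn.1 (h.left_mem z hz)
  have hb z hz := mem_nbrIn.1 (h.right_mem z hz)
  refine ⟨fun x => {y | x ∈ A ∧ (y = x ∨ (y ∈ Z ∧ a y = x))}, fun x => ?_, fun x y hxy => ?_,
    fun x y hxy => ?_⟩
  · by_cases hx : x ∈ A
    · refine preconnected_induce_of_star (r := x) ⟨hx, Or.inl rfl⟩ ?_
      rintro v ⟨-, rfl | ⟨hv, rfl⟩⟩ hvx
      · exact (hvx rfl).elim
      · exact (ha v hv).2.symm
    · exact fun y => (hx y.2.1).elim
  · refine Set.disjoint_left.2 ?_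
    rintro z ⟨hx, rfl | ⟨hz, rfl⟩⟩ ⟨hy, rfl | ⟨hz', rfl⟩⟩
    · exact hxy rfl
    · exact hZ _ hz' hx
    · exact hZ _ hz hy
    · exact hxy rfl
  · obtain ⟨-, z, hz, ⟨rfl, rfl⟩ | ⟨rfl, rfl⟩⟩ := pairGraph_adj.1 hxy
    · exact ⟨z, ⟨(ha z hz).1, Or.inr ⟨hz, rfl⟩⟩, b z, ⟨(hb z hz).1, Or.inl rfl⟩, (hb z hz).2⟩
    · exact ⟨b z, ⟨(hb z hz).1, Or.inl rfl⟩, z, ⟨(ha z hz).1, Or.inr ⟨hz, rfl⟩⟩,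
        (hb z hz).2.symm⟩

/-- A pairing in which different `z ∈ Z` have different unordered pairs `a z`, `b z`. -/
structure IsInjPairing (G : SimpleGraph V) (A Z : Finset V) (a b : V → V) : Prop
    extends IsPairing G A Z a b where
  injOn : Set.InjOn (fun z => s(a z, b z)) Z

lemma IsInjPairing.mono {G : SimpleGraph V} {A Z Y : Finset V} {a b : V → V}
    (h : IsInjPairing G A Z a b) (hYZ : Y ⊆ Z) : IsInjPairing G A Y a b :=
  ⟨h.toIsPairing.mono hYZ, h.injOn.mono hYZ⟩

lemma IsInjPairing.two_mul_card_le {G : SimpleGraph V} {Z A : Finset V} {a b : V → V}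
    (h : IsInjPairing G A Z a b) : 2 * Z.card ≤ ∑ x ∈ A, degIn (pairGraph Z a b) A x := by
  classical
  have hsub : (Z.image fun z => (a z, b z)) ∪ (Z.image fun z => (b z, a z)) ⊆
      (A ×ˢ A).filter fun p => (pairGraph Z a b).Adj p.1 p.2 := by
    intro p hp
    have ha z hz := mem_nbrIn.1 (h.left_mem z hz)
    have hb z hz := mem_nbrIn.1 (h.right_mem z hz)
    rw [Finset.mem_union, Finset.mem_image, Finset.mem_image] at hp
    rw [Finset.mem_filter, Finset.mem_product, pairGraph_adj]
    rcases hp with ⟨z, hz, rfl⟩ | ⟨z, hz, rfl⟩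
    · exact ⟨⟨(ha z hz).1, (hb z hz).1⟩, h.ne z hz, z, hz, Or.inl ⟨rfl, rfl⟩⟩
    · exact ⟨⟨(hb z hz).1, (ha z hz).1⟩, (h.ne z hz).symm, z, hz, Or.inr ⟨rfl, rfl⟩⟩
  have hdisj : Disjoint (Z.image fun z => (a z, b z)) (Z.image fun z => (b z, a z)) := by
    simp only [Finset.disjoint_left, Finset.mem_image, not_exists, not_and]
    rintro _ ⟨z, hz, rfl⟩ w hw hwz
    obtain ⟨h1, h2⟩ := Prod.mk.inj hwz
    obtain rfl : w = z := h.injOn hw hz (Sym2.eq_iff.2 (Or.inr ⟨h2, h1⟩))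
    exact h.ne w hw h2
  have hcard := Finset.card_le_card hsub
  rw [Finset.card_union_of_disjoint hdisj, Finset.card_image_of_injOn, Finset.card_image_of_injOn,
    ← sum_degIn_eq_card] at hcard
  · omega
  · intro z hz w hw hzw
    obtain ⟨h1, h2⟩ := Prod.mk.inj hzw
    exact h.injOn hz hw (Sym2.eq_iff.2 (Or.inl ⟨h2, h1⟩))
  · intro z hz w hw hzw
    obtain ⟨h1, h2⟩ := Prod.mk.inj hzw
    exact h.injOn hz hw (Sym2.eq_iff.2 (Or.inl ⟨h1, h2⟩))

lemma IsInjPairing.card_le {G : SimpleGraph V} (hG : HasNoK6Minor G) {Z A : Finset V} {a b : V → V}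
    (h : IsInjPairing G A Z a b) (hZA : Disjoint Z A) : Z.card ≤ 32 * A.card := by
  have hpairs := h.two_mul_card_le
  have hsparse := (hG.of_isMinor (h.isMinor hZA)).sum_degIn_le A
  omega

lemma IsInjPairing.insert [DecidableEq V] {G : SimpleGraph V} {Z A : Finset V} {a b : V → V}
    (h : IsInjPairing G A Z a b) {w x y : V} (hw : w ∉ Z) (hx : x ∈ nbrIn G A w)
    (hy : y ∈ nbrIn G A w) (hxy : x ≠ y) (hnew : ¬(pairGraph Z a b).Adj x y) :
    IsInjPairing G A (insert w Z) (Function.update a w x) (Function.update b w y) := by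
  have hne : ∀ z ∈ Z, z ≠ w := fun z hz hzw => hw (hzw ▸ hz)
  have hnew' : ∀ z ∈ Z, s(a z, b z) ≠ s(x, y) := fun z hz hz' =>
    hnew (pairGraph_adj_iff_sym2.2 ⟨hxy, z, hz, hz'⟩)
  refine ⟨⟨?_, ?_, ?_⟩, ?_⟩
  · exact Finset.forall_mem_insert _ _ _ |>.2
      ⟨by simpa using hx, fun z hz => by simpa [hne z hz] using h.left_mem z hz⟩
  · exact Finset.forall_mem_insert _ _ _ |>.2
      ⟨by simpa using hy, fun z hz => by simpa [hne z hz] using h.right_mem z hz⟩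
  · exact Finset.forall_mem_insert _ _ _ |>.2
      ⟨by simpa using hxy, fun z hz => by simpa [hne z hz] using h.ne z hz⟩
  · have heq : Set.EqOn (fun z => s(Function.update a w x z, Function.update b w y z))
        (fun z => s(a z, b z)) Z := fun z hz => by simp [hne z hz]
    rw [Finset.coe_insert, Set.injOn_insert (by simpa using hw), heq.injOn_iff, heq.image_eq]
    refine ⟨h.injOn, ?_⟩
    rintro ⟨z, hz, hzw⟩
    exact hnew' z hz (by simpa using hzw)

/-! ### Vertices with many neighbours in a small set -/

lemma HasNoK33Minor.card_common_le_two {G : SimpleGraph V} (hG : HasNoK33Minor G)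
    {x y z : V} (hxy : x ≠ y) (hxz : x ≠ z) (hyz : y ≠ z) (W : Finset V)
    (hW : ∀ w ∈ W, G.Adj w x ∧ G.Adj w y ∧ G.Adj w z) : W.card ≤ 2 := by
  by_contra! h
  obtain ⟨a, ha, b, hb, c, hc, hab, hac, hbc⟩ := Finset.two_lt_card.1 h
  have hadj : ∀ i j : Fin 3, G.Adj (![a, b, c] i) (![x, y, z] j) := by
    intro i j
    have h1 := hW a ha
    have h2 := hW b hb
    have h3 := hW c hc
    fin_cases i <;> fin_cases j <;> simp [h1, h2, h3]
  have hinj : ∀ {p q r : V}, p ≠ q → p ≠ r → q ≠ r → Function.Injective ![p, q, r] := by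
    intro p q r h1 h2 h3 i j
    fin_cases i <;> fin_cases j <;> simp [h1, h2, h3, h1.symm, h2.symm, h3.symm]
  let f : completeBipartiteGraph (Fin 3) (Fin 3) →g G :=
    ⟨Sum.elim ![a, b, c] ![x, y, z], by
      rintro (i | i) (j | j) hij
      · simp at hij
      · exact hadj i j
      · exact (hadj j i).symm
      · simp at hij⟩
  exact hG (isMinor_of_hom f ((hinj hab hac hbc).sumElim (hinj hxy hxz hyz)
    fun i j => (hadj i j).ne))

lemma HasNoK33Minor.card_le_of_adj_of_isClique {G F : SimpleGraph V} (hG : HasNoK33Minor G)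
    {W B : Finset V} {b : V} (hb : b ∈ B) (hWb : ∀ w ∈ W, G.Adj w b)
    (h3 : ∀ w ∈ W, 3 ≤ degIn G B w) (hcl : ∀ w ∈ W, F.IsClique (nbrIn G B w : Set V)) :
    W.card ≤ degIn F B b * degIn F B b * 2 := by
  classical
  set N := nbrIn F B b
  have hsub : W ⊆ N.offDiag.biUnion
      fun p => W.filter fun w => G.Adj w b ∧ G.Adj w p.1 ∧ G.Adj w p.2 := by
    intro w hw
    have hbw : b ∈ nbrIn G B w := mem_nbrIn.2 ⟨hb, hWb w hw⟩
    have hmem : ∀ x ∈ nbrIn G B w, x ≠ b → x ∈ N := fun x hx hxb =>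
      mem_nbrIn.2 ⟨(mem_nbrIn.1 hx).1, hcl w hw hbw hx hxb.symm⟩
    have htwo : 1 < ((nbrIn G B w).erase b).card := by
      rw [Finset.card_erase_of_mem hbw]
      have := h3 w hw
      unfold degIn at this
      omega
    obtain ⟨x, hx, y, hy, hxy⟩ := Finset.one_lt_card.1 htwo
    rw [Finset.mem_erase] at hx hy
    exact Finset.mem_biUnion.2 ⟨(x, y),
      Finset.mem_offDiag.2 ⟨hmem x hx.2 hx.1, hmem y hy.2 hy.1, hxy⟩,
      Finset.mem_filter.2 ⟨hw, hWb w hw, (mem_nbrIn.1 hx.2).2, (mem_nbrIn.1 hy.2).2⟩⟩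
  calc W.card ≤ N.offDiag.card * 2 := (Finset.card_le_card hsub).trans <|
        Finset.card_biUnion_le_card_mul _ _ 2 fun p hp => by
          rw [Finset.mem_offDiag] at hp
          exact hG.card_common_le_two (mem_nbrIn.1 hp.1).2.ne (mem_nbrIn.1 hp.2.1).2.ne hp.2.2 _
            fun w hw => (Finset.mem_filter.1 hw).2
    _ ≤ N.card * N.card * 2 := by
        rw [Finset.offDiag_card]
        omega

lemma HasNoK33Minor.card_le_of_isClique {G F : SimpleGraph V} (hG : HasNoK33Minor G)
    (hF : HasNoK6Minor F) (W B : Finset V) (h3 : ∀ w ∈ W, 3 ≤ degIn G B w)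
    (hcl : ∀ w ∈ W, F.IsClique (nbrIn G B w : Set V)) : W.card ≤ 8192 * B.card := by
  classical
  induction hn : B.card generalizing B W with
  | zero =>
    obtain rfl : W = ∅ := Finset.eq_empty_of_forall_notMem fun w hw => by
      have hle := (h3 w hw).trans (Finset.card_le_card (nbrIn_subset G B w))
      omega
    simp
  | succ n ih =>
    obtain ⟨b, hb, hb64⟩ : ∃ b ∈ B, degIn F B b ≤ 64 := by
      refine Finset.exists_le_of_sum_le (Finset.card_pos.1 (by omega)) ?_
      simpa [mul_comm] using hF.sum_degIn_le B
    have hfar : (W.filter fun w => ¬ G.Adj w b).card ≤ 8192 * n := by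
      have hnbr : ∀ w ∈ W.filter fun w => ¬ G.Adj w b, nbrIn G (B.erase b) w = nbrIn G B w := by
        intro w hw
        ext x
        simp only [mem_nbrIn, Finset.mem_erase]
        have hwb := (Finset.mem_filter.1 hw).2
        exact ⟨fun h => ⟨h.1.2, h.2⟩, fun h => ⟨⟨fun hxb => hwb (hxb ▸ h.2), h.1⟩, h.2⟩⟩
      refine ih _ (B.erase b) (fun w hw => ?_) (fun w hw => ?_) ?_
      · rw [degIn, hnbr w hw]
        exact h3 w (Finset.mem_filter.1 hw).1
      · rw [hnbr w hw]
        exact hcl w (Finset.mem_filter.1 hw).1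
      · rw [Finset.card_erase_of_mem hb, hn, Nat.add_sub_cancel]
    have hnear : (W.filter fun w => G.Adj w b).card ≤ 64 * 64 * 2 :=
      (hG.card_le_of_adj_of_isClique hb (fun w hw => (Finset.mem_filter.1 hw).2)
        (fun w hw => h3 w (Finset.mem_filter.1 hw).1)
        fun w hw => hcl w (Finset.mem_filter.1 hw).1).trans
      (Nat.mul_le_mul_right _ (Nat.mul_le_mul hb64 hb64))
    have := Finset.card_filter_add_card_filter_not (s := W) (fun w => G.Adj w b)
    omega

/-- Contract as many vertices of `W` as possible to distinct edges on `B`: the neighbourhoods of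
the remaining ones are cliques of the resulting minor. -/
lemma HasNoK33Minor.card_three_le {G : SimpleGraph V} (hG : HasNoK33Minor G)
    (W B : Finset V) (hWB : Disjoint W B) (h3 : ∀ w ∈ W, 3 ≤ degIn G B w) :
    W.card ≤ 8224 * B.card := by
  classical
  obtain ⟨Z, hZ, hmax⟩ :=
    (W.powerset.filter fun Z => ∃ a b, IsInjPairing G B Z a b).exists_max_image Finset.card
      ⟨∅, by simpa using ⟨id, id, ⟨by constructor <;> simp, by simp⟩⟩⟩
  rw [Finset.mem_filter, Finset.mem_powerset] at hZ
  obtain ⟨hZW, a, b, hab⟩ := hZ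
  have hZB : Disjoint Z B := Finset.disjoint_of_subset_left hZW hWB
  have hpaired := hab.card_le hG.hasNoK6Minor hZB
  have hrest : (W \ Z).card ≤ 8192 * B.card := by
    refine hG.card_le_of_isClique (hG.hasNoK6Minor.of_isMinor (hab.isMinor hZB)) (W \ Z) B
      (fun w hw => h3 w (Finset.mem_sdiff.1 hw).1) fun w hw x hx y hy hxy => ?_
    rw [Finset.mem_sdiff] at hw
    by_contra hnot
    have hle := hmax (insert w Z) (Finset.mem_filter.2
      ⟨Finset.mem_powerset.2 (Finset.insert_subset hw.1 hZW), _, _,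
        hab.insert hw.2 hx hy hxy hnot⟩)
    rw [Finset.card_insert_of_notMem hw.2] at hle
    omega
  have := Finset.card_sdiff_add_card_eq_card hZW
  omega

/-! ### Pairs of vertices at distance two -/

open scoped Classical in
/-- The vertices of `U` having a common neighbour with `v` in `Z`. -/
noncomputable def linked (G : SimpleGraph V) (Z U : Finset V) (v : V) : Finset V :=
  U.filter fun u => u ≠ v ∧ ∃ z ∈ Z, G.Adj z u ∧ G.Adj z v

lemma mem_linked {G : SimpleGraph V} {Z U : Finset V} {u v : V} :
    u ∈ linked G Z U v ↔ u ∈ U ∧ u ≠ v ∧ ∃ z ∈ Z, G.Adj z u ∧ G.Adj z v := by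
  simp [linked]

lemma card_linked_le {G : SimpleGraph V} {Z U : Finset V} {D : ℕ}
    (hD : ∀ z ∈ Z, degIn G U z ≤ D) (v : V) : (linked G Z U v).card ≤ D * degIn G Z v := by
  classical
  have hsub : linked G Z U v ⊆ (nbrIn G Z v).biUnion fun z => nbrIn G U z := by
    intro u hu
    obtain ⟨huU, -, z, hz, hzu, hzv⟩ := mem_linked.1 hu
    exact Finset.mem_biUnion.2 ⟨z, mem_nbrIn.2 ⟨hz, hzv.symm⟩, mem_nbrIn.2 ⟨huU, hzu⟩⟩
  exact (Finset.card_le_card hsub).trans ((Finset.card_biUnion_le_card_mul _ _ D fun z hz =>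
    hD z (mem_nbrIn.1 hz).1).trans_eq (mul_comm _ _))

/-- In a minimal `Y ⊆ Z` linking the same pairs, every vertex has a pair linked by no other. -/
lemma exists_isInjPairing_of_linked (G : SimpleGraph V) (Z U : Finset V) :
    ∃ Y ⊆ Z, (∀ v ∈ U, linked G Z U v ⊆ linked G Y U v) ∧ ∃ a b, IsInjPairing G U Y a b := by
  classical
  obtain ⟨Y, hY, hmin⟩ := (Z.powerset.filter fun Y =>
      ∀ v ∈ U, linked G Z U v ⊆ linked G Y U v).exists_min_image Finset.card
    ⟨Z, Finset.mem_filter.2 ⟨Finset.mem_powerset_self Z, fun v _ => Finset.Subset.refl _⟩⟩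
  rw [Finset.mem_filter, Finset.mem_powerset] at hY
  obtain ⟨hYZ, hcov⟩ := hY
  have hpriv : ∀ z ∈ Y, ∃ u v, u ∈ nbrIn G U z ∧ v ∈ nbrIn G U z ∧ u ≠ v ∧
      ∀ z' ∈ Y, G.Adj z' u → G.Adj z' v → z' = z := by
    intro z hz
    obtain ⟨v, hv, hnot⟩ : ∃ v ∈ U, ¬linked G Z U v ⊆ linked G (Y.erase z) U v := by
      by_contra! h
      have hle := hmin (Y.erase z) (Finset.mem_filter.2
        ⟨Finset.mem_powerset.2 ((Finset.erase_subset _ _).trans hYZ), h⟩)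
      exact (Finset.card_erase_lt_of_mem hz).not_ge hle
    obtain ⟨u, hu, hu'⟩ := Finset.not_subset.1 hnot
    obtain ⟨huU, huv, y, hy, hyu, hyv⟩ := mem_linked.1 (hcov v hv hu)
    have huniq : ∀ z' ∈ Y, G.Adj z' u → G.Adj z' v → z' = z := by
      intro z' hz' hzu hzv
      by_contra hne
      exact hu' (mem_linked.2 ⟨huU, huv, z', Finset.mem_erase.2 ⟨hne, hz'⟩, hzu, hzv⟩)
    obtain rfl := huniq y hy hyu hyv
    exact ⟨u, v, mem_nbrIn.2 ⟨huU, hyu⟩, mem_nbrIn.2 ⟨hv, hyv⟩, huv, huniq⟩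
  choose! a b ha hb hab huniq using hpriv
  refine ⟨Y, hYZ, hcov, a, b, ⟨ha, hb, hab⟩, fun z hz w hw hzw => huniq w hw z hz ?_ ?_⟩ <;>
    rcases Sym2.eq_iff.1 hzw with ⟨h1, h2⟩ | ⟨h1, h2⟩
  · exact h1 ▸ (mem_nbrIn.1 (ha z hz)).2
  · exact h2 ▸ (mem_nbrIn.1 (hb z hz)).2
  · exact h2 ▸ (mem_nbrIn.1 (hb z hz)).2
  · exact h1 ▸ (mem_nbrIn.1 (ha z hz)).2

lemma HasNoK6Minor.sum_card_linked_le {G : SimpleGraph V} (hG : HasNoK6Minor G) (Z U : Finset V)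
    (D : ℕ) (hD : ∀ z ∈ Z, degIn G U z ≤ D) :
    ∑ v ∈ U, (linked G Z U v).card ≤ 2176 * D * U.card := by
  classical
  obtain ⟨Y, hYZ, hcov, a, b, hab⟩ := exists_isInjPairing_of_linked G Z U
  have hcard : Y.card ≤ 33 * U.card := by
    have hout := (hab.mono Finset.sdiff_subset).card_le hG (Finset.sdiff_disjoint (s := U))
    have hsplit := Finset.card_sdiff_add_card_inter Y U
    have hin := Finset.card_le_card (Finset.inter_subset_right (s₁ := Y) (s₂ := U))
    omega
  calc ∑ v ∈ U, (linked G Z U v).card ≤ ∑ v ∈ U, D * degIn G Y v :=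
        Finset.sum_le_sum fun v hv => (Finset.card_le_card (hcov v hv)).trans
          (card_linked_le (fun z hz => hD z (hYZ hz)) v)
    _ = D * ∑ v ∈ U, degIn G Y v := by rw [Finset.mul_sum]
    _ ≤ D * (64 * (U.card + 33 * U.card)) := by
        refine Nat.mul_le_mul_left _ ((hG.sum_degIn_le_add U Y).trans ?_)
        omega
    _ = 2176 * D * U.card := by ring

end Counting

section Separator

variable {V : Type*}

/-! ### Balanced separators -/

/-- `Z` separates `W` from `R` in the subgraph of `G` induced on `V₀`. -/
structure IsSeparation (G : SimpleGraph V) (V₀ Z W R : Finset V) : Prop where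
  cover : ∀ v ∈ V₀, v ∈ Z ∨ v ∈ W ∨ v ∈ R
  left_subset : W ⊆ V₀
  right_subset : R ⊆ V₀
  disjoint : Disjoint W R
  not_adj : ∀ w ∈ W, ∀ r ∈ R, ¬ G.Adj w r

lemma IsSeparation.card_add_card_le {G : SimpleGraph V} {V₀ Z W R : Finset V}
    (h : IsSeparation G V₀ Z W R) : W.card + R.card ≤ V₀.card := by
  classical
  rw [← Finset.card_union_of_disjoint h.disjoint]
  exact Finset.card_le_card (Finset.union_subset h.left_subset h.right_subset)

open scoped Classical in
/-- The ball of radius `i` around `v` in the subgraph of `G` induced on `R`. -/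
noncomputable def ballIn (G : SimpleGraph V) (R : Finset V) (v : V) : ℕ → Finset V
  | 0 => {v}
  | i + 1 => ballIn G R v i ∪ R.filter fun y => ∃ x ∈ ballIn G R v i, G.Adj x y

section Ball

variable {G : SimpleGraph V} {R : Finset V} {v : V}

lemma ballIn_subset_succ (i : ℕ) : ballIn G R v i ⊆ ballIn G R v (i + 1) := by
  classical exact Finset.subset_union_left

lemma mem_ballIn_succ_of_adj {i : ℕ} {x y : V} (hx : x ∈ ballIn G R v i) (hy : y ∈ R)
    (hxy : G.Adj x y) : y ∈ ballIn G R v (i + 1) := by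
  classical exact Finset.mem_union_right _ (Finset.mem_filter.2 ⟨hy, x, hx, hxy⟩)

lemma self_mem_ballIn (i : ℕ) : v ∈ ballIn G R v i := by
  induction i with
  | zero => exact Finset.mem_singleton_self v
  | succ i ih => exact ballIn_subset_succ i ih

lemma ballIn_subset (hv : v ∈ R) (i : ℕ) : ballIn G R v i ⊆ R := by
  induction i with
  | zero => exact Finset.singleton_subset_iff.2 hv
  | succ i ih => classical exact Finset.union_subset ih (Finset.filter_subset _ _)

lemma exists_preconnected_of_mem_ballIn (hv : v ∈ R) {i : ℕ} {x : V} (hx : x ∈ ballIn G R v i) :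
    ∃ P ⊆ R, v ∈ P ∧ x ∈ P ∧ (G.induce (P : Set V)).Preconnected ∧ P.card ≤ i + 1 := by
  classical
  induction i generalizing x with
  | zero =>
    obtain rfl := Finset.mem_singleton.1 hx
    exact ⟨{x}, by simpa using hv, by simp, by simp,
      by rw [Finset.coe_singleton]; exact preconnected_induce_singleton G x, by simp⟩
  | succ i ih =>
    rcases Finset.mem_union.1 hx with hx | hx
    · obtain ⟨P, hPR, hvP, hxP, hP, hcard⟩ := ih hx
      exact ⟨P, hPR, hvP, hxP, hP, by omega⟩
    · obtain ⟨hxR, y, hy, hyx⟩ := Finset.mem_filter.1 hx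
      obtain ⟨P, hPR, hvP, hyP, hP, hcard⟩ := ih hy
      refine ⟨insert x P, Finset.insert_subset hxR hPR, Finset.mem_insert_of_mem hvP,
        Finset.mem_insert_self _ _, ?_, (Finset.card_insert_le _ _).trans (by omega)⟩
      rw [Finset.coe_insert, ← Set.singleton_union]
      exact (connected_induce_union (preconnected_induce_singleton G x) hP rfl hyP
        hyx.symm).preconnected

/-- Otherwise the ball grows by a factor `1 + 1/ℓ` in each of `ρ` steps. -/
lemma exists_card_sdiff_ballIn_le {ℓ ρ : ℕ} (hρ : R.card * ℓ ^ ρ < (ℓ + 1) ^ ρ) (hv : v ∈ R)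
    [DecidableEq V] :
    ∃ i < ρ, ℓ * (ballIn G R v (i + 1) \ ballIn G R v i).card ≤ (ballIn G R v i).card := by
  by_contra! hcon
  have hgrow : ∀ i ≤ ρ, (ℓ + 1) ^ i ≤ (ballIn G R v i).card * ℓ ^ i := by
    intro i
    induction i with
    | zero => simp [ballIn]
    | succ i ih =>
      intro hi
      have hcard := Finset.card_sdiff_add_card_eq_card (ballIn_subset_succ (G := G) (R := R)
        (v := v) i)
      have hstep := hcon i hi
      calc (ℓ + 1) ^ (i + 1) = (ℓ + 1) ^ i * (ℓ + 1) := pow_succ _ _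
        _ ≤ (ballIn G R v i).card * ℓ ^ i * (ℓ + 1) := Nat.mul_le_mul_right _ (ih (by omega))
        _ = ((ballIn G R v i).card * ℓ + (ballIn G R v i).card) * ℓ ^ i := by ring
        _ ≤ ((ballIn G R v (i + 1)).card * ℓ) * ℓ ^ i := by
            refine Nat.mul_le_mul_right _ ?_
            rw [← hcard]
            nlinarith
        _ = (ballIn G R v (i + 1)).card * ℓ ^ (i + 1) := by ring
  have hle := Nat.mul_le_mul_right (ℓ ^ ρ) (Finset.card_le_card (ballIn_subset (G := G) hv ρ))
  exact absurd ((hgrow ρ le_rfl).trans hle) hρ.not_ge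

end Ball

/-- The members of `𝓑` have size at most `b` and represent a complete graph as a minor of `G`. -/
structure IsBranchFamily (G : SimpleGraph V) (b : ℕ) (𝓑 : Finset (Finset V)) : Prop where
  card_le : ∀ X ∈ 𝓑, X.card ≤ b
  preconnected : ∀ X ∈ 𝓑, (G.induce (X : Set V)).Preconnected
  disjoint : ∀ X ∈ 𝓑, ∀ Y ∈ 𝓑, X ≠ Y → Disjoint X Y
  touch : ∀ X ∈ 𝓑, ∀ Y ∈ 𝓑, X ≠ Y → Touch G (X : Set V) (Y : Set V)

namespace IsBranchFamily

variable {G : SimpleGraph V} {b : ℕ} {𝓑 : Finset (Finset V)}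

lemma card_le_five (hG : HasNoK6Minor G) (h : IsBranchFamily G b 𝓑) : 𝓑.card ≤ 5 := by
  by_contra! hcard
  obtain ⟨𝓒, hsub, h𝓒⟩ := Finset.exists_subset_card_eq (show 6 ≤ 𝓑.card from hcard)
  let e := (Finset.equivFinOfCardEq h𝓒).symm
  have hmem : ∀ i, (e i : Finset V) ∈ 𝓑 := fun i => hsub (e i).2
  have hne : ∀ {i j}, i ≠ j → (e i : Finset V) ≠ e j := fun hij h =>
    hij (e.injective (Subtype.ext h))
  exact hG ⟨fun i => ((e i : Finset V) : Set V), fun i => h.preconnected _ (hmem i),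
    fun i j hij => Finset.disjoint_coe.2 (h.disjoint _ (hmem i) _ (hmem j) (hne hij)),
    fun i j hij => h.touch _ (hmem i) _ (hmem j) (hne hij)⟩

lemma mono {𝓒 : Finset (Finset V)} (h : IsBranchFamily G b 𝓑) (h𝓒 : 𝓒 ⊆ 𝓑) :
    IsBranchFamily G b 𝓒 where
  card_le X hX := h.card_le X (h𝓒 hX)
  preconnected X hX := h.preconnected X (h𝓒 hX)
  disjoint X hX Y hY := h.disjoint X (h𝓒 hX) Y (h𝓒 hY)
  touch X hX Y hY := h.touch X (h𝓒 hX) Y (h𝓒 hY)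

lemma insert [DecidableEq V] (h : IsBranchFamily G b 𝓑) {N : Finset V} (hcard : N.card ≤ b)
    (hconn : (G.induce (N : Set V)).Preconnected) (hdisj : ∀ X ∈ 𝓑, Disjoint N X)
    (htouch : ∀ X ∈ 𝓑, Touch G (N : Set V) (X : Set V)) :
    IsBranchFamily G b (insert N 𝓑) where
  card_le := (Finset.forall_mem_insert _ _ _).2 ⟨hcard, h.card_le⟩
  preconnected := (Finset.forall_mem_insert _ _ _).2 ⟨hconn, h.preconnected⟩
  disjoint := (Finset.forall_mem_insert _ _ _).2
    ⟨(Finset.forall_mem_insert _ _ _).2 ⟨fun h => (h rfl).elim, fun X hX _ => hdisj X hX⟩,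
      fun X hX => (Finset.forall_mem_insert _ _ _).2 ⟨fun _ => (hdisj X hX).symm, h.disjoint X hX⟩⟩
  touch := (Finset.forall_mem_insert _ _ _).2
    ⟨(Finset.forall_mem_insert _ _ _).2 ⟨fun h => (h rfl).elim, fun X hX _ => htouch X hX⟩,
      fun X hX => (Finset.forall_mem_insert _ _ _).2 ⟨fun _ => (htouch X hX).symm, h.touch X hX⟩⟩

end IsBranchFamily

/-- An intermediate state in the construction of a separator of `V₀`: the part `W` has been split
off from the remaining part `R` by a set `S` that is small relative to `W` and by the branch sets
in `𝓑`. -/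
structure SeparatorState (G : SimpleGraph V) [DecidableEq V] (V₀ : Finset V) (ℓ b : ℕ)
    (R S W : Finset V) (𝓑 : Finset (Finset V)) : Prop
    extends IsSeparation G V₀ (S ∪ 𝓑.biUnion id) W R where
  branch : IsBranchFamily G b 𝓑
  branch_subset : ∀ X ∈ 𝓑, X ⊆ V₀
  branch_disjoint : ∀ X ∈ 𝓑, Disjoint X R
  mul_card_le : ℓ * S.card ≤ W.card
  card_left_le : 3 * W.card ≤ 2 * V₀.card

namespace SeparatorState

variable {G : SimpleGraph V} [DecidableEq V] {V₀ : Finset V} {ℓ b : ℕ} {R S W : Finset V}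
  {𝓑 : Finset (Finset V)}

lemma absorb_branch (h : SeparatorState G V₀ ℓ b R S W 𝓑) (hR : 2 * V₀.card < 3 * R.card)
    {X : Finset V} (hX : X ∈ 𝓑) (hXR : ∀ x ∈ X, ∀ r ∈ R, ¬ G.Adj x r) :
    SeparatorState G V₀ ℓ b R S (W ∪ X) (𝓑.erase X) := by
  have hsep : IsSeparation G V₀ (S ∪ (𝓑.erase X).biUnion id) (W ∪ X) R := by
    refine ⟨fun x hx => ?_, Finset.union_subset h.left_subset (h.branch_subset X hX),
      h.right_subset, Finset.disjoint_union_left.2 ⟨h.disjoint, h.branch_disjoint X hX⟩,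
      fun w hw => ?_⟩
    · have hcov := h.cover x hx
      simp only [Finset.mem_union, Finset.mem_biUnion, Finset.mem_erase, id] at hcov ⊢
      grind
    · exact (Finset.mem_union.1 hw).elim (h.not_adj w) (hXR w)
  have hcard := hsep.card_add_card_le
  exact ⟨hsep, h.branch.mono (Finset.erase_subset _ _),
    fun Y hY => h.branch_subset Y (Finset.mem_of_mem_erase hY),
    fun Y hY => h.branch_disjoint Y (Finset.mem_of_mem_erase hY),
    h.mul_card_le.trans (Finset.card_le_card Finset.subset_union_left), by omega⟩

lemma absorb_ball (h : SeparatorState G V₀ ℓ b R S W 𝓑) (hR : 2 * V₀.card < 3 * R.card)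
    {D D' : Finset V} (hDR : D ⊆ R) (hDD' : D ⊆ D')
    (hbd : ∀ x ∈ D, ∀ y ∈ R, G.Adj x y → y ∈ D') (hcard : ℓ * (D' \ D).card ≤ D.card)
    (hsmall : 2 * D.card ≤ R.card) :
    SeparatorState G V₀ ℓ b (R \ D') (S ∪ D' \ D) (W ∪ D) 𝓑 := by
  have hW := Finset.card_union_of_disjoint (Finset.disjoint_of_subset_right hDR h.disjoint)
  refine ⟨⟨fun x hx => ?_, Finset.union_subset h.left_subset (hDR.trans h.right_subset),
    Finset.sdiff_subset.trans h.right_subset, Finset.disjoint_union_left.2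
      ⟨Finset.disjoint_of_subset_right Finset.sdiff_subset h.disjoint,
        Finset.disjoint_of_subset_left hDD' Finset.disjoint_sdiff⟩, fun w hw r hr hwr => ?_⟩,
    h.branch, h.branch_subset,
    fun X hX => Finset.disjoint_of_subset_right Finset.sdiff_subset (h.branch_disjoint X hX),
    ?_, ?_⟩
  · have hcov := h.cover x hx
    simp only [Finset.mem_union, Finset.mem_sdiff] at hcov ⊢
    tauto
  · rw [Finset.mem_sdiff] at hr
    rcases Finset.mem_union.1 hw with hw | hw
    · exact h.not_adj w hw r hr.1 hwr
    · exact hr.2 (hbd w hw r hr.1 hwr)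
  · calc ℓ * (S ∪ D' \ D).card ≤ ℓ * (S.card + (D' \ D).card) :=
          Nat.mul_le_mul_left _ (Finset.card_union_le _ _)
      _ = ℓ * S.card + ℓ * (D' \ D).card := by ring
      _ ≤ W.card + D.card := Nat.add_le_add h.mul_card_le hcard
      _ = (W ∪ D).card := hW.symm
  · have := h.card_add_card_le
    omega

lemma add_branch (h : SeparatorState G V₀ ℓ b R S W 𝓑) {N : Finset V} (hNR : N ⊆ R)
    (hcard : N.card ≤ b) (hconn : (G.induce (N : Set V)).Preconnected)
    (htouch : ∀ X ∈ 𝓑, Touch G (N : Set V) (X : Set V)) :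
    SeparatorState G V₀ ℓ b (R \ N) S W (insert N 𝓑) := by
  refine ⟨⟨fun x hx => ?_, h.left_subset, Finset.sdiff_subset.trans h.right_subset,
    Finset.disjoint_of_subset_right Finset.sdiff_subset h.disjoint,
    fun w hw r hr => h.not_adj w hw r (Finset.mem_sdiff.1 hr).1⟩,
    h.branch.insert hcard hconn
      (fun X hX => (Finset.disjoint_of_subset_right hNR (h.branch_disjoint X hX)).symm) htouch,
    (Finset.forall_mem_insert _ _ _).2 ⟨hNR.trans h.right_subset, h.branch_subset⟩,
    (Finset.forall_mem_insert _ _ _).2 ⟨Finset.disjoint_sdiff, fun X hX =>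
      Finset.disjoint_of_subset_right Finset.sdiff_subset (h.branch_disjoint X hX)⟩,
    h.mul_card_le, h.card_left_le⟩
  have hcov := h.cover x hx
  simp only [Finset.mem_union, Finset.mem_sdiff, Finset.biUnion_insert, id] at hcov ⊢
  tauto

lemma mul_card_separator_le (h : SeparatorState G V₀ ℓ b R S W 𝓑) (hG : HasNoK6Minor G) :
    ℓ * (S ∪ 𝓑.biUnion id).card ≤ V₀.card + ℓ * (5 * b) := by
  have hunion : (𝓑.biUnion id).card ≤ 5 * b :=
    (Finset.card_biUnion_le_card_mul _ _ _ h.branch.card_le).trans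
      (Nat.mul_le_mul_right _ (h.branch.card_le_five hG))
  calc ℓ * (S ∪ 𝓑.biUnion id).card ≤ ℓ * (S.card + 5 * b) :=
        Nat.mul_le_mul_left _ ((Finset.card_union_le _ _).trans (by omega))
    _ = ℓ * S.card + ℓ * (5 * b) := by ring
    _ ≤ V₀.card + ℓ * (5 * b) :=
        Nat.add_le_add_right (h.mul_card_le.trans (Finset.card_le_card h.left_subset)) _

end SeparatorState

lemma exists_preconnected_touch {G : SimpleGraph V} {R : Finset V} {r₀ : V} (hr₀ : r₀ ∈ R)
    {𝓑 : Finset (Finset V)} {d : ℕ}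
    (h : ∀ X ∈ 𝓑, ∃ P ⊆ R, r₀ ∈ P ∧ (G.induce (P : Set V)).Preconnected ∧ P.card ≤ d ∧
      Touch G (P : Set V) (X : Set V)) :
    ∃ N ⊆ R, r₀ ∈ N ∧ (G.induce (N : Set V)).Preconnected ∧ N.card ≤ 𝓑.card * d + 1 ∧
      ∀ X ∈ 𝓑, Touch G (N : Set V) (X : Set V) := by
  classical
  choose! P hPR hrP hP hcard htouch using h
  have hsub : ∀ X ∈ 𝓑, P X ⊆ insert r₀ (𝓑.biUnion P) := fun X hX =>
    (Finset.subset_biUnion_of_mem P hX).trans (Finset.subset_insert _ _)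
  refine ⟨insert r₀ (𝓑.biUnion P), Finset.insert_subset hr₀ (Finset.biUnion_subset.2 hPR),
    Finset.mem_insert_self _ _, ?_, (Finset.card_insert_le _ _).trans
      (Nat.add_le_add_right (Finset.card_biUnion_le_card_mul _ _ _ hcard) 1),
    fun X hX => (htouch X hX).mono (Finset.coe_subset.2 (hsub X hX)) subset_rfl⟩
  refine (induce_connected_of_patches r₀ (Finset.mem_insert_self _ _)
    fun {v} hv => ?_).preconnected
  rcases Finset.mem_insert.1 (Finset.mem_coe.1 hv) with rfl | hv'
  · exact ⟨{v}, Set.singleton_subset_iff.2 hv, rfl, rfl, Reachable.refl _⟩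
  · obtain ⟨X, hX, hvX⟩ := Finset.mem_biUnion.1 hv'
    exact ⟨P X, Finset.coe_subset.2 (hsub X hX), hrP X hX, hvX, hP X hX _ _⟩

lemma exists_preconnected_touch_of_ballIn {G : SimpleGraph V} {R : Finset V} {ρ : ℕ} {r : V → ℕ}
    (hr : ∀ v ∈ R, r v < ρ) (hbig : ∀ v ∈ R, R.card < 2 * (ballIn G R v (r v)).card) {v : V}
    (hv : v ∈ R) {X : Finset V} (hX : ∃ x ∈ X, ∃ w ∈ R, G.Adj x w) :
    ∃ P ⊆ R, v ∈ P ∧ (G.induce (P : Set V)).Preconnected ∧ P.card ≤ 2 * ρ ∧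
      Touch G (P : Set V) (X : Set V) := by
  classical
  obtain ⟨x, hx, w, hw, hxw⟩ := hX
  obtain ⟨y, hy⟩ := Finset.inter_nonempty_of_card_lt_card_add_card
    (ballIn_subset (G := G) hv (r v)) (ballIn_subset (G := G) hw (r w))
    (by have := hbig v hv; have := hbig w hw; omega)
  rw [Finset.mem_inter] at hy
  obtain ⟨P, hPR, hvP, hyP, hP, hPcard⟩ := exists_preconnected_of_mem_ballIn hv hy.1
  obtain ⟨Q, hQR, hwQ, hyQ, hQ, hQcard⟩ := exists_preconnected_of_mem_ballIn hw hy.2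
  have := hr v hv
  have := hr w hw
  refine ⟨P ∪ Q, Finset.union_subset hPR hQR, Finset.mem_union_left _ hvP, ?_,
    (Finset.card_union_le _ _).trans (by omega), w,
    Finset.mem_coe.2 (Finset.mem_union_right _ hwQ), x, hx, hxw.symm⟩
  rw [Finset.coe_union]
  exact (induce_union_connected hP hQ ⟨y, hyP, hyQ⟩).preconnected

lemma SeparatorState.exists_isSeparation {G : SimpleGraph V} (hG : HasNoK6Minor G)
    [DecidableEq V] {V₀ : Finset V} {ℓ ρ : ℕ} (hρ : V₀.card * ℓ ^ ρ < (ℓ + 1) ^ ρ)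
    {R S W : Finset V} {𝓑 : Finset (Finset V)}
    (h : SeparatorState G V₀ ℓ (10 * ρ + 1) R S W 𝓑) :
    ∃ Z W' R' : Finset V, IsSeparation G V₀ Z W' R' ∧ 3 * W'.card ≤ 2 * V₀.card ∧
      3 * R'.card ≤ 2 * V₀.card ∧ ℓ * Z.card ≤ V₀.card + ℓ * (5 * (10 * ρ + 1)) := by
  induction hm : 6 * R.card + 𝓑.card using Nat.strong_induction_on generalizing R S W 𝓑 with
  | _ m ih =>
  subst hm
  by_cases hR : 3 * R.card ≤ 2 * V₀.card
  · exact ⟨_, W, R, h.toIsSeparation, h.card_left_le, hR, h.mul_card_separator_le hG⟩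
  rw [not_le] at hR
  by_cases hfar : ∃ X ∈ 𝓑, ∀ x ∈ X, ∀ r ∈ R, ¬ G.Adj x r
  · obtain ⟨X, hX, hXR⟩ := hfar
    have := Finset.card_erase_lt_of_mem hX
    exact ih _ (by omega) (h.absorb_branch hR hX hXR) rfl
  push Not at hfar
  have hρR : R.card * ℓ ^ ρ < (ℓ + 1) ^ ρ :=
    (Nat.mul_le_mul_right _ (Finset.card_le_card h.right_subset)).trans_lt hρ
  choose! r hr hbd using fun v (hv : v ∈ R) => exists_card_sdiff_ballIn_le (G := G) hρR hv
  have hlt : ∀ {N : Finset V} {v : V}, v ∈ R → v ∈ N → (R \ N).card < R.card := fun hv hvN =>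
    Finset.card_lt_card (Finset.sdiff_subset.ssubset_of_mem_notMem hv fun hmem =>
      (Finset.mem_sdiff.1 hmem).2 hvN)
  by_cases hsmall : ∃ v ∈ R, 2 * (ballIn G R v (r v)).card ≤ R.card
  · obtain ⟨v, hv, hsmall⟩ := hsmall
    have := hlt hv (self_mem_ballIn (G := G) (R := R) (r v + 1))
    exact ih _ (by omega) (h.absorb_ball hR (ballIn_subset hv _) (ballIn_subset_succ _)
      (fun x hx y hy hxy => mem_ballIn_succ_of_adj hx hy hxy) (hbd v hv) hsmall) rfl
  push Not at hsmall
  obtain ⟨r₀, hr₀⟩ : R.Nonempty := Finset.card_pos.1 (by omega)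
  obtain ⟨N, hNR, hr₀N, hN, hNcard, hNtouch⟩ := exists_preconnected_touch hr₀ fun X hX =>
    exists_preconnected_touch_of_ballIn hr hsmall hr₀ (hfar X hX)
  have hb : N.card ≤ 10 * ρ + 1 := by
    have := Nat.mul_le_mul_right (2 * ρ) (h.branch.card_le_five hG)
    omega
  have hadd := h.add_branch hNR hb hN hNtouch
  have := hlt hr₀ hr₀N
  have := hadd.branch.card_le_five hG
  exact ih _ (by omega) hadd rfl

lemma HasNoK6Minor.exists_isSeparation {G : SimpleGraph V} (hG : HasNoK6Minor G)
    {V₀ : Finset V} {ℓ ρ : ℕ} (hρ : V₀.card * ℓ ^ ρ < (ℓ + 1) ^ ρ) :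
    ∃ Z W R : Finset V, IsSeparation G V₀ Z W R ∧ 3 * W.card ≤ 2 * V₀.card ∧
      3 * R.card ≤ 2 * V₀.card ∧ ℓ * Z.card ≤ V₀.card + ℓ * (5 * (10 * ρ + 1)) := by
  classical
  refine SeparatorState.exists_isSeparation hG hρ (R := V₀) (S := ∅) (W := ∅) (𝓑 := ∅)
    ⟨⟨?_, ?_, ?_, ?_, ?_⟩, ⟨?_, ?_, ?_, ?_⟩, ?_, ?_, ?_, ?_⟩ <;> simp

end Separator

universe u

section Hyperfinite

/-! ### Hyperfiniteness -/

lemma mul_pow_lt_succ_pow {n ℓ ρ : ℕ} (hn : 0 < n) (hℓ : 0 < ℓ)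
    (h : ((ℓ : ℝ) + 1) * Real.log n < ρ) : n * ℓ ^ ρ < (ℓ + 1) ^ ρ := by
  have : (0 : ℝ) < n := by exact_mod_cast hn
  have hℓ' : (0 : ℝ) < ℓ := by exact_mod_cast hℓ
  have hlog : 1 / ((ℓ : ℝ) + 1) ≤ Real.log (ℓ + 1) - Real.log ℓ := by
    rw [← Real.log_div (by positivity) hℓ'.ne']
    refine le_trans (le_of_eq ?_) (Real.one_sub_inv_le_log_of_pos (by positivity))
    field_simp
    ring
  have key : Real.log n < ρ * (Real.log (ℓ + 1) - Real.log ℓ) := by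
    calc Real.log n < ρ * (1 / ((ℓ : ℝ) + 1)) := by
          rw [mul_one_div, lt_div_iff₀ (by positivity)]
          linarith
      _ ≤ _ := by gcongr
  have : (n : ℝ) * (ℓ : ℝ) ^ ρ < ((ℓ : ℝ) + 1) ^ ρ := by
    rw [← Real.log_lt_log_iff (by positivity) (by positivity),
      Real.log_mul (by positivity) (by positivity), Real.log_pow, Real.log_pow]
    linarith
  exact_mod_cast this

lemma separator_size_mul_sq_le {lam y s L ρ : ℝ} (hlam : 0 < lam) (hy : 1 ≤ y)
    (hlamy : 100000 / lam ≤ y) (hs : s ≤ y ^ 6) (hs' : y ^ 6 ≤ s + 1) (hL : 0 ≤ L) (hLy : L ≤ y)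
    (hρ0 : 0 ≤ ρ) (hρ : ρ ≤ (s + 2) * L + 1) :
    (y ^ 12 / (s + 1) + (50 * ρ + 5)) * (3 * L + 2) ^ 2 ≤ lam * y ^ 12 := by
  have hy6 : 1 ≤ y ^ 6 := one_le_pow₀ hy
  have hy67 : y ^ 6 ≤ y ^ 7 := pow_le_pow_right₀ hy (by norm_num)
  have hdiv : y ^ 12 / (s + 1) ≤ y ^ 6 := by
    rw [div_le_iff₀ (by linarith)]
    calc y ^ 12 = y ^ 6 * y ^ 6 := by ring
      _ ≤ y ^ 6 * (s + 1) := by gcongr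
  have hρ' : ρ ≤ 4 * y ^ 7 := by
    calc ρ ≤ (s + 2) * L + 1 := hρ
      _ ≤ 3 * y ^ 6 * y + y ^ 7 :=
          add_le_add (mul_le_mul (by linarith) hLy hL (by positivity)) (hy6.trans hy67)
      _ = 4 * y ^ 7 := by ring
  calc (y ^ 12 / (s + 1) + (50 * ρ + 5)) * (3 * L + 2) ^ 2 ≤ (206 * y ^ 7) * (5 * y) ^ 2 :=
        mul_le_mul (by linarith) (pow_le_pow_left₀ (by positivity) (by linarith) 2)
          (by positivity) (by positivity)
    _ ≤ 100000 * y ^ 9 := by nlinarith [show 0 < y ^ 9 by positivity]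
    _ ≤ (lam * y) * y ^ 9 := by
        rw [div_le_iff₀ hlam] at hlamy
        exact mul_le_mul_of_nonneg_right (by linarith) (by positivity)
    _ = lam * y ^ 10 := by ring
    _ ≤ lam * y ^ 12 :=
        mul_le_mul_of_nonneg_left (pow_le_pow_right₀ hy (by norm_num)) hlam.le

lemma eventually_log_le_and_le_rpow (c : ℝ) : ∀ᶠ x : ℝ in Filter.atTop,
    1 ≤ x ∧ Real.log x ≤ x ^ ((1 : ℝ) / 12) ∧ c ≤ x ^ ((1 : ℝ) / 12) := by
  have h12 : (0 : ℝ) < 1 / 12 := by norm_num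
  filter_upwards [(isLittleO_log_rpow_atTop h12).bound one_pos, Filter.eventually_ge_atTop 1,
    (tendsto_rpow_atTop h12).eventually_ge_atTop c] with x hx hx1 hc
  rw [one_mul, Real.norm_of_nonneg (Real.log_nonneg hx1),
    Real.norm_of_nonneg (by positivity)] at hx
  exact ⟨hx1, hx, hc⟩

lemma exists_separator_parameters {lam : ℝ} (hlam : 0 < lam) :
    ∃ N : ℕ, 1 ≤ N ∧ ∀ n : ℕ, N ≤ n → ∃ ℓ ρ : ℕ, 0 < ℓ ∧ n * ℓ ^ ρ < (ℓ + 1) ^ ρ ∧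
      ((n : ℝ) / ℓ + (50 * ρ + 5)) * (3 * Real.log n + 2) ^ 2 ≤ lam * n := by
  obtain ⟨N, hN⟩ := Filter.eventually_atTop.1 <| (tendsto_natCast_atTop_atTop (R := ℝ)).eventually
    (eventually_log_le_and_le_rpow (1 + 100000 / lam))
  refine ⟨max N 1, le_max_right _ _, fun n hn => ?_⟩
  obtain ⟨hn1, hlog, hy⟩ := hN n ((le_max_left _ _).trans hn)
  have hlog0 : 0 ≤ Real.log n := Real.log_nonneg hn1
  set y : ℝ := (n : ℝ) ^ ((1 : ℝ) / 12) with hydef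
  have hy12 : (n : ℝ) = y ^ 12 := by
    rw [hydef, ← Real.rpow_natCast, ← Real.rpow_mul (by positivity)]
    norm_num
  have hlam' : 0 < 100000 / lam := by positivity
  have hy6 : (n : ℝ) = (y ^ 6) ^ 2 := by rw [hy12]; ring
  have hy0 : 0 ≤ y ^ 6 := by positivity
  let s := Nat.sqrt n
  have hs1 : (s : ℝ) ≤ y ^ 6 := by
    refine le_of_sq_le_sq ?_ hy0
    rw [← hy6]
    exact_mod_cast Nat.sqrt_le' n
  have hs2 : y ^ 6 ≤ (s : ℝ) + 1 := by
    refine le_of_sq_le_sq ?_ (by positivity)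
    rw [← hy6]
    exact_mod_cast (Nat.lt_succ_sqrt' n).le
  let ρ : ℕ := ⌊((s : ℝ) + 2) * Real.log n⌋₊ + 1
  have hρ1 : ((s : ℝ) + 2) * Real.log n < ρ := by
    simpa only [ρ, Nat.cast_add_one] using Nat.lt_floor_add_one _
  have hρ2 : (ρ : ℝ) ≤ (s + 2) * Real.log n + 1 := by
    simpa only [ρ, Nat.cast_add_one, add_le_add_iff_right] using
      Nat.floor_le (by positivity : 0 ≤ ((s : ℝ) + 2) * Real.log n)
  refine ⟨s + 1, ρ, Nat.succ_pos _,
    mul_pow_lt_succ_pow (by exact_mod_cast hn1) s.succ_pos (by push_cast; linarith), ?_⟩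
  push_cast
  have := separator_size_mul_sq_le hlam (by linarith) (by linarith) hs1 hs2 hlog0 hlog
    ρ.cast_nonneg hρ2
  rwa [← hy12] at this

lemma HasNoK6Minor.exists_small_separator {lam : ℝ} (hlam : 0 < lam) :
    ∃ N : ℕ, 1 ≤ N ∧ ∀ (V : Type u) (G : SimpleGraph V), HasNoK6Minor G → ∀ V₀ : Finset V,
      N ≤ V₀.card → ∃ Z W R, IsSeparation G V₀ Z W R ∧ 3 * W.card ≤ 2 * V₀.card ∧
        3 * R.card ≤ 2 * V₀.card ∧
        (Z.card : ℝ) * (3 * Real.log V₀.card + 2) ^ 2 ≤ lam * V₀.card := by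
  obtain ⟨N, hN1, hN⟩ := exists_separator_parameters hlam
  refine ⟨N, hN1, fun V G hG V₀ hNn => ?_⟩
  obtain ⟨ℓ, ρ, hℓ, hρ, hsize⟩ := hN V₀.card hNn
  obtain ⟨Z, W, R, hsep, hW, hR, hZ⟩ := hG.exists_isSeparation hρ
  refine ⟨Z, W, R, hsep, hW, hR, le_trans ?_ hsize⟩
  have hℓ' : (0 : ℝ) < ℓ := by exact_mod_cast hℓ
  have hZ' : (ℓ : ℝ) * Z.card ≤ V₀.card + ℓ * (5 * (10 * ρ + 1)) := by exact_mod_cast hZ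
  gcongr
  calc (Z.card : ℝ) ≤ (V₀.card + ℓ * (5 * (10 * ρ + 1))) / ℓ := by
        rw [le_div_iff₀ hℓ']
        linarith
    _ = V₀.card / ℓ + (50 * ρ + 5) := by field_simp; ring

open scoped Classical in
/-- Deleting the set `Q` splits `V₀` into unions of components of size at most `K`; these unions
are the fibres of a labelling. -/
def SplitsBy {V : Type*} (G : SimpleGraph V) (V₀ Q : Finset V) (K : ℕ) : Prop :=
  Q ⊆ V₀ ∧ ∃ lab : V → ℕ, (∀ u ∈ V₀ \ Q, ∀ v ∈ V₀ \ Q, G.Adj u v → lab u = lab v) ∧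
    ∀ i, ((V₀ \ Q).filter fun v => lab v = i).card ≤ K

lemma splitsBy_empty {V : Type*} {G : SimpleGraph V} {V₀ : Finset V} {K : ℕ}
    (h : V₀.card ≤ K) : SplitsBy G V₀ ∅ K := by
  classical
  exact ⟨Finset.empty_subset _, fun _ => 0, fun _ _ _ _ _ => rfl, fun _ =>
    (Finset.card_le_card ((Finset.filter_subset _ _).trans Finset.sdiff_subset)).trans h⟩

open scoped Classical in
lemma SplitsBy.union {V : Type*} {G : SimpleGraph V} {V₀ Z W R Q₁ Q₂ : Finset V} {K : ℕ}
    (h₁ : SplitsBy G W Q₁ K) (hsep : IsSeparation G V₀ Z W R) (h₂ : SplitsBy G R Q₂ K) :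
    SplitsBy G V₀ (Z ∩ V₀ ∪ (Q₁ ∪ Q₂)) K := by
  obtain ⟨hQ₁, lab₁, hl₁, hK₁⟩ := h₁
  obtain ⟨hQ₂, lab₂, hl₂, hK₂⟩ := h₂
  have hsplit : ∀ v ∈ V₀ \ (Z ∩ V₀ ∪ (Q₁ ∪ Q₂)),
      (v ∈ W ∧ v ∈ W \ Q₁) ∨ (v ∉ W ∧ v ∈ R \ Q₂) := by
    intro v hv
    have hWR : v ∈ W → v ∉ R := fun h => Finset.disjoint_left.1 hsep.disjoint h
    have := hsep.cover v
    simp only [Finset.mem_union, Finset.mem_inter, Finset.mem_sdiff] at hv ⊢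
    tauto
  refine ⟨Finset.union_subset Finset.inter_subset_right
    (Finset.union_subset (hQ₁.trans hsep.left_subset) (hQ₂.trans hsep.right_subset)),
    fun v => if v ∈ W then 2 * lab₁ v else 2 * lab₂ v + 1, fun u hu v hv huv => ?_, fun i => ?_⟩
  · rcases hsplit u hu with ⟨hu1, hu2⟩ | ⟨hu1, hu2⟩ <;>
      rcases hsplit v hv with ⟨hv1, hv2⟩ | ⟨hv1, hv2⟩
    · simp only [if_pos hu1, if_pos hv1, hl₁ u hu2 v hv2 huv]
    · exact (hsep.not_adj u hu1 v (Finset.mem_sdiff.1 hv2).1 huv).elim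
    · exact (hsep.not_adj v hv1 u (Finset.mem_sdiff.1 hu2).1 huv.symm).elim
    · simp only [if_neg hu1, if_neg hv1, hl₂ u hu2 v hv2 huv]
  · rcases Nat.even_or_odd' i with ⟨k, rfl | rfl⟩
    on_goal 1 => refine (Finset.card_le_card fun v hv => ?_).trans (hK₁ k)
    on_goal 2 => refine (Finset.card_le_card fun v hv => ?_).trans (hK₂ k)
    all_goals
      rw [Finset.mem_filter] at hv
      rcases hsplit v hv.1 with ⟨h1, h2⟩ | ⟨h1, h2⟩
      · simp only [if_pos h1] at hv
        first | exact Finset.mem_filter.2 ⟨h2, by omega⟩ | omega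
      · simp only [if_neg h1] at hv
        first | exact Finset.mem_filter.2 ⟨h2, by omega⟩ | omega

lemma natCast_le_three_mul_log {j : ℕ} {x : ℝ} (h : (3 / 2 : ℝ) ^ j ≤ x) :
    (j : ℝ) ≤ 3 * Real.log x := by
  have hlog := Real.log_le_log (by positivity) h
  rw [Real.log_pow] at hlog
  have h32 : (1 / 3 : ℝ) ≤ Real.log (3 / 2) :=
    le_trans (by norm_num) (Real.one_sub_inv_le_log_of_pos (show (0 : ℝ) < 3 / 2 by norm_num))
  have := mul_le_mul_of_nonneg_left h32 j.cast_nonneg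
  linarith

lemma le_mul_one_div_sub_one_div {lam n z : ℝ} {j : ℕ} (hz : 0 ≤ z) (hj : (3 / 2 : ℝ) ^ j ≤ n)
    (h : z * (3 * Real.log n + 2) ^ 2 ≤ lam * n) :
    z ≤ lam * n * (1 / ((j : ℝ) + 1) - 1 / ((j : ℝ) + 1 + 1)) := by
  have hjlog := natCast_le_three_mul_log hj
  have hsub : 1 / ((j : ℝ) + 1) - 1 / ((j : ℝ) + 1 + 1) = 1 / (((j : ℝ) + 1) * (j + 2)) := by
    field_simp
    ring
  rw [hsub, mul_one_div, le_div_iff₀ (by positivity)]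
  refine (mul_le_mul_of_nonneg_left ?_ hz).trans h
  nlinarith [j.cast_nonneg (α := ℝ)]

lemma card_separator_union_le {V : Type*} [DecidableEq V] {G : SimpleGraph V}
    {V₀ Z W R Q₁ Q₂ : Finset V} {c d : ℝ} (hsep : IsSeparation G V₀ Z W R) (hc : 0 ≤ c)
    (hZ : (Z.card : ℝ) ≤ d) (h₁ : (Q₁.card : ℝ) ≤ c * W.card) (h₂ : (Q₂.card : ℝ) ≤ c * R.card) :
    ((Z ∩ V₀ ∪ (Q₁ ∪ Q₂)).card : ℝ) ≤ d + c * V₀.card := by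
  have hunion : ((Z ∩ V₀ ∪ (Q₁ ∪ Q₂)).card : ℝ) ≤ Z.card + (Q₁.card + Q₂.card) := by
    exact_mod_cast (Finset.card_union_le _ _).trans
      (add_le_add (Finset.card_le_card Finset.inter_subset_left) (Finset.card_union_le _ _))
  have hWR : (W.card : ℝ) + R.card ≤ V₀.card := by exact_mod_cast hsep.card_add_card_le
  have := mul_le_mul_of_nonneg_left hWR hc
  linarith

/-- The allowance `lam * (1 - 1 / (j + 1))` for a set of size about `(3 / 2) ^ j` grows with `j`
just fast enough to pay for the separators, and stays below `lam`. -/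
lemma exists_splitsBy_of_card_le {V : Type*} {G : SimpleGraph V} {lam : ℝ} {N : ℕ}
    (hlam : 0 < lam) (hN : 1 ≤ N)
    (hsep : ∀ V₀ : Finset V, N ≤ V₀.card → ∃ Z W R, IsSeparation G V₀ Z W R ∧
      3 * W.card ≤ 2 * V₀.card ∧ 3 * R.card ≤ 2 * V₀.card ∧
      (Z.card : ℝ) * (3 * Real.log V₀.card + 2) ^ 2 ≤ lam * V₀.card)
    (j : ℕ) (V₀ : Finset V) (h : (V₀.card : ℝ) ≤ (3 / 2 : ℝ) ^ j * N) :
    ∃ Q : Finset V, (Q.card : ℝ) ≤ lam * (1 - 1 / ((j : ℝ) + 1)) * V₀.card ∧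
      SplitsBy G V₀ Q N := by
  classical
  induction j generalizing V₀ with
  | zero => exact ⟨∅, by simp, splitsBy_empty (by simpa using h)⟩
  | succ j ih =>
    rw [Nat.cast_add_one]
    by_cases hle : (V₀.card : ℝ) ≤ (3 / 2 : ℝ) ^ j * N
    · obtain ⟨Q, hQ, hs⟩ := ih V₀ hle
      exact ⟨Q, hQ.trans (by gcongr; linarith), hs⟩
    push Not at hle
    have hN' : (1 : ℝ) ≤ N := by exact_mod_cast hN
    have hpow : (1 : ℝ) ≤ (3 / 2 : ℝ) ^ j := one_le_pow₀ (by norm_num)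
    have hNV : N ≤ V₀.card := by
      exact_mod_cast (le_mul_of_one_le_left N.cast_nonneg hpow).trans hle.le
    obtain ⟨Z, W, R, hs, hW, hR, hZ⟩ := hsep V₀ hNV
    have hW' : (3 : ℝ) * W.card ≤ 2 * V₀.card := by exact_mod_cast hW
    have hR' : (3 : ℝ) * R.card ≤ 2 * V₀.card := by exact_mod_cast hR
    rw [pow_succ] at h
    obtain ⟨Q₁, hQ₁, hs₁⟩ := ih W (by linarith)
    obtain ⟨Q₂, hQ₂, hs₂⟩ := ih R (by linarith)
    have hsmall := le_mul_one_div_sub_one_div Z.card.cast_nonneg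
      ((le_mul_of_one_le_right (by positivity) hN').trans hle.le) hZ
    have hnonneg : 0 ≤ lam * (1 - 1 / ((j : ℝ) + 1)) := by
      simpa using mul_nonneg hlam.le
        (sub_nonneg.2 ((div_le_one (by positivity)).2 (by simp : (1 : ℝ) ≤ j + 1)))
    refine ⟨_, (card_separator_union_le hs hnonneg hsmall hQ₁ hQ₂).trans_eq ?_, hs₁.union hs hs₂⟩
    ring

lemma HasNoK6Minor.exists_splitsBy {lam : ℝ} (hlam : 0 < lam) :
    ∃ K : ℕ, ∀ (V : Type u) (G : SimpleGraph V), HasNoK6Minor G → ∀ V₀ : Finset V,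
      ∃ Q : Finset V, (Q.card : ℝ) ≤ lam * V₀.card ∧ SplitsBy G V₀ Q K := by
  obtain ⟨N, hN1, hN⟩ := HasNoK6Minor.exists_small_separator.{u} hlam
  refine ⟨N, fun V G hG V₀ => ?_⟩
  obtain ⟨j, hj⟩ := pow_unbounded_of_one_lt (V₀.card : ℝ) (show (1 : ℝ) < 3 / 2 by norm_num)
  have hN1' : (1 : ℝ) ≤ N := by exact_mod_cast hN1
  obtain ⟨Q, hQ, hs⟩ := exists_splitsBy_of_card_le hlam hN1 (hN V G hG) j V₀
    (hj.le.trans (le_mul_of_one_le_right (by positivity) hN1'))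
  refine ⟨Q, hQ.trans ?_, hs⟩
  gcongr
  exact mul_le_of_le_one_right hlam.le (sub_le_self 1 (by positivity))

end Hyperfinite

section InvolutionPair

/-! ### Fractional matchings are dominated by matchings -/

lemma mul_mul_zpow_of_mul_self {M : Type*} [Group M] {s t : M} (hs : s * s = 1) (ht : t * t = 1)
    (k : ℤ) : t * (s * t) ^ k = (s * t) ^ (-k) * t := by
  have hconj : t * (s * t) * t⁻¹ = (s * t)⁻¹ := by
    rw [mul_inv_rev, inv_eq_of_mul_eq_one_left hs, inv_eq_of_mul_eq_one_left ht, mul_assoc,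
      mul_assoc, ht, mul_one]
  have h := conj_zpow (a := t) (b := s * t) (i := k)
  rw [hconj, inv_zpow'] at h
  rw [h, mul_assoc, mul_assoc, inv_mul_cancel, mul_one]

variable {α : Type*} {S T : Equiv.Perm α} {t : α}

lemma apply_mul_zpow_of_right_fixed (hS : S * S = 1) (hT : T * T = 1) (ht : T t = t) (k : ℤ) :
    T (((S * T) ^ k) t) = ((S * T) ^ (-k)) t := by
  rw [← Equiv.Perm.mul_apply, mul_mul_zpow_of_mul_self hS hT, Equiv.Perm.mul_apply, ht]

lemma apply_mul_zpow_of_left_fixed (hS : S * S = 1) (hT : T * T = 1) (ht : T t = t) (k : ℤ) :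
    S (((S * T) ^ k) t) = ((S * T) ^ (1 - k)) t := by
  have hST : S = S * T * T := by rw [mul_assoc, hT, mul_one]
  calc S (((S * T) ^ k) t) = (S * T) (T (((S * T) ^ k) t)) := by
        rw [← Equiv.Perm.mul_apply (S * T) T, ← hST]
    _ = ((S * T) ^ (1 - k)) t := by
        rw [apply_mul_zpow_of_right_fixed hS hT ht, sub_eq_add_neg, zpow_one_add,
          Equiv.Perm.mul_apply (S * T)]

/-- With `ρ = S * T`, the stabilizer of `t` contains `ρ ^ (2 * a - 1)` and `ρ ^ (2 * b - 1)`, and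
`(2 * a - 1) * b - (2 * b - 1) * a = a - b`. -/
lemma mul_zpow_eq_of_left_fixed (hS : S * S = 1) (hT : T * T = 1) (ht : T t = t) {a b : ℤ}
    (ha : S (((S * T) ^ a) t) = ((S * T) ^ a) t) (hb : S (((S * T) ^ b) t) = ((S * T) ^ b) t) :
    ((S * T) ^ a) t = ((S * T) ^ b) t := by
  have hstab : ∀ k : ℤ, S (((S * T) ^ k) t) = ((S * T) ^ k) t →
      (S * T) ^ (2 * k - 1) ∈ MulAction.stabilizer (Equiv.Perm α) t := by
    intro k hk
    rw [apply_mul_zpow_of_left_fixed hS hT ht] at hk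
    rw [MulAction.mem_stabilizer_iff, Equiv.Perm.smul_def,
      show 2 * k - 1 = -(1 - k) + k by ring, zpow_add, Equiv.Perm.mul_apply, ← hk,
      ← Equiv.Perm.mul_apply, ← zpow_add, neg_add_cancel, zpow_zero, Equiv.Perm.one_apply]
  have hmem := Subgroup.mul_mem _ (Subgroup.zpow_mem _ (hstab a ha) b)
    (Subgroup.zpow_mem _ (hstab b hb) (-a))
  rw [← zpow_mul, ← zpow_mul, ← zpow_add,
    show (2 * a - 1) * b + (2 * b - 1) * -a = a - b by ring, MulAction.mem_stabilizer_iff,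
    Equiv.Perm.smul_def] at hmem
  rw [show a = b + (a - b) by ring, zpow_add, Equiv.Perm.mul_apply, hmem]

lemma involutive_piecewise {P : Set α} [∀ x, Decidable (x ∈ P)] {f g : α → α}
    (hf : Function.Involutive f) (hg : Function.Involutive g) (hfP : ∀ x ∈ P, f x ∈ P)
    (hgP : ∀ x ∈ P, g x ∈ P) : Function.Involutive (P.piecewise f g) := by
  intro x
  by_cases hx : x ∈ P
  · rw [P.piecewise_eq_of_mem f g hx, P.piecewise_eq_of_mem f g (hfP x hx), hf x]
  · have hgx : g x ∉ P := fun h => hx (hg x ▸ hgP _ h)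
    rw [P.piecewise_eq_of_notMem f g hx, P.piecewise_eq_of_notMem f g hgx, hg x]

end InvolutionPair

section Matching

variable {W : Type*} {c : W → W → ℝ}

/-- A symmetric nonnegative weight function vanishing on the diagonal. -/
structure IsEdgeWeight (c : W → W → ℝ) : Prop where
  nonneg : ∀ x y, 0 ≤ c x y
  symm : ∀ x y, c x y = c y x
  diag : ∀ x, c x x = 0

lemma IsEdgeWeight.ne_of_pos (hc : IsEdgeWeight c) {x y : W} (hxy : 0 < c x y) : x ≠ y := by
  rintro rfl
  exact hxy.ne' (hc.diag x)

variable [Fintype W]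

/-- The total weight of the matching encoded by the involution `σ`, whose fixed points are the
unmatched vertices; each edge is counted twice. -/
def matchingWeight (c : W → W → ℝ) (σ : W → W) : ℝ := ∑ x, c x (σ x)

/-- A maximum weight matching, encoded as an involution, all of whose edges have positive weight. -/
structure IsMaxMatching (c : W → W → ℝ) (σ : W → W) : Prop where
  invol : Function.Involutive σ
  pos : ∀ x, σ x ≠ x → 0 < c x (σ x)
  max : ∀ τ : W → W, Function.Involutive τ → matchingWeight c τ ≤ matchingWeight c σ

/-- A symmetric weighting of the pairs satisfying the degree constraints and the odd set
constraints of Edmonds' matching polytope, the latter strengthened from `|Y|` odd to all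
`|Y| ≥ 3`. -/
structure IsFractionalMatching (q : W → W → ℝ) : Prop where
  nonneg : ∀ x y, 0 ≤ q x y
  symm : ∀ x y, q x y = q y x
  sum_le : ∀ x, ∑ y, q x y ≤ 1
  odd : ∀ Y : Finset W, 3 ≤ Y.card → ∑ x ∈ Y, ∑ y ∈ Y, q x y ≤ Y.card - 1

open scoped Classical in
/-- The largest weight of a matching. -/
noncomputable def maxMatchingWeight (c : W → W → ℝ) : ℝ :=
  (Finset.univ.filter fun σ : W → W => Function.Involutive σ).sup'
    ⟨id, Finset.mem_filter.2 ⟨Finset.mem_univ _, fun _ => rfl⟩⟩ (matchingWeight c)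

lemma matchingWeight_le_max (c : W → W → ℝ) {σ : W → W} (hσ : Function.Involutive σ) :
    matchingWeight c σ ≤ maxMatchingWeight c := by
  classical
  exact Finset.le_sup' (matchingWeight c) (Finset.mem_filter.2 ⟨Finset.mem_univ _, hσ⟩)

lemma exists_matchingWeight_eq_max (c : W → W → ℝ) :
    ∃ σ : W → W, Function.Involutive σ ∧ matchingWeight c σ = maxMatchingWeight c := by
  classical
  obtain ⟨σ, hσ, h⟩ := Finset.exists_mem_eq_sup'
    (s := Finset.univ.filter fun σ : W → W => Function.Involutive σ)
    ⟨id, Finset.mem_filter.2 ⟨Finset.mem_univ _, fun _ => rfl⟩⟩ (matchingWeight c)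
  exact ⟨σ, (Finset.mem_filter.1 hσ).2, h.symm⟩

lemma continuous_maxMatchingWeight :
    Continuous (maxMatchingWeight : (W → W → ℝ) → ℝ) := by
  refine Continuous.finset_sup'_apply _ fun σ _ => ?_
  unfold matchingWeight
  fun_prop

lemma IsEdgeWeight.exists_isMaxMatching (hc : IsEdgeWeight c) {σ : W → W}
    (hσ : Function.Involutive σ) (hmax : matchingWeight c σ = maxMatchingWeight c) :
    ∃ τ, IsMaxMatching c τ ∧ ∀ x, τ x ≠ x → τ x = σ x := by
  classical
  let τ : W → W := fun x => if c x (σ x) = 0 then x else σ x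
  have h0 : ∀ x, c x (σ x) = 0 → τ x = x := fun x h => if_pos h
  have h1 : ∀ x, c x (σ x) ≠ 0 → τ x = σ x := fun x h => if_neg h
  have hinv : Function.Involutive τ := by
    intro x
    by_cases h : c x (σ x) = 0
    · rw [h0 x h, h0 x h]
    · rw [h1 x h, h1 (σ x) (by rwa [hσ x, hc.symm]), hσ x]
  have hw : matchingWeight c τ = matchingWeight c σ := by
    refine Finset.sum_congr rfl fun x _ => ?_
    by_cases h : c x (σ x) = 0
    · rw [h0 x h, h, hc.diag]
    · rw [h1 x h]
  have hne : ∀ x, τ x ≠ x → c x (σ x) ≠ 0 := fun x hx h => hx (h0 x h)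
  refine ⟨τ, ⟨hinv, fun x hx => ?_, fun ρ hρ => ?_⟩, fun x hx => h1 x (hne x hx)⟩
  · rw [h1 x (hne x hx)]
    exact (hc.nonneg _ _).lt_of_ne' (hne x hx)
  · rw [hw, hmax]
    exact matchingWeight_le_max c hρ

lemma IsMaxMatching.not_fixed_both (hc : IsEdgeWeight c) {σ : W → W}
    (hσ : IsMaxMatching c σ) {x y : W} (hxy : 0 < c x y) (hx : σ x = x) : σ y ≠ y := by
  classical
  intro hy
  have hcomm : ∀ z, σ (Equiv.swap x y z) = Equiv.swap x y (σ z) := by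
    intro z
    by_cases h1 : z = x
    · rw [h1, hx, Equiv.swap_apply_left, hy]
    by_cases h2 : z = y
    · rw [h2, hy, Equiv.swap_apply_right, hx]
    rw [Equiv.swap_apply_of_ne_of_ne h1 h2, Equiv.swap_apply_of_ne_of_ne]
    · exact fun h => h1 (hσ.invol.injective (h.trans hx.symm))
    · exact fun h => h2 (hσ.invol.injective (h.trans hy.symm))
  have hinv : Function.Involutive fun z => σ (Equiv.swap x y z) := fun z => by
    simp only [hcomm, Equiv.swap_apply_self, hσ.invol z]
  refine (hσ.max _ hinv).not_gt (Finset.sum_lt_sum (fun z _ => ?_) ⟨x, Finset.mem_univ _, ?_⟩)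
  · by_cases h1 : z = x
    · rw [h1, hx, hc.diag]
      exact hc.nonneg _ _
    by_cases h2 : z = y
    · rw [h2, hy, hc.diag]
      exact hc.nonneg _ _
    simp only [Equiv.swap_apply_of_ne_of_ne h1 h2, le_refl]
  · beta_reduce
    rwa [hx, hc.diag, Equiv.swap_apply_left, hy]

open scoped Classical in
lemma IsMaxMatching.piecewise {σ τ : W → W} (hσ : IsMaxMatching c σ) (hτ : IsMaxMatching c τ)
    {P : Set W} (hσP : ∀ x ∈ P, σ x ∈ P) (hτP : ∀ x ∈ P, τ x ∈ P) :
    IsMaxMatching c (P.piecewise τ σ) := by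
  have hsum : matchingWeight c (P.piecewise τ σ) + matchingWeight c (P.piecewise σ τ) =
      matchingWeight c σ + matchingWeight c τ := by
    simp only [matchingWeight, ← Finset.sum_add_distrib]
    refine Finset.sum_congr rfl fun x _ => ?_
    by_cases hx : x ∈ P
    · simp only [Set.piecewise_eq_of_mem _ _ _ hx, add_comm]
    · simp only [Set.piecewise_eq_of_notMem _ _ _ hx]
  have hle := hτ.max _ (involutive_piecewise hσ.invol hτ.invol hσP hτP)
  refine ⟨involutive_piecewise hτ.invol hσ.invol hτP hσP, fun x => ?_, fun ω hω => ?_⟩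
  · by_cases hx : x ∈ P
    · simpa only [Set.piecewise_eq_of_mem _ _ _ hx] using hτ.pos x
    · simpa only [Set.piecewise_eq_of_notMem _ _ _ hx] using hσ.pos x
  · linarith [hσ.max ω hω]

/-- The two matchings are exchanged along the alternating path starting at `t`, which ends in at
most one of `u` and `v`. -/
lemma IsMaxMatching.exists_fixed {σ τ : W → W} (hσ : IsMaxMatching c σ) (hτ : IsMaxMatching c τ)
    {u v t : W} (huv : u ≠ v) (hu : σ u = u) (hv : σ v = v) (ht : τ t = t) :
    ∃ μ, IsMaxMatching c μ ∧ μ t = t ∧ ((u ≠ t ∧ μ u = u) ∨ (v ≠ t ∧ μ v = v)) := by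
  classical
  let S : Equiv.Perm W := hσ.invol.toPerm
  let T : Equiv.Perm W := hτ.invol.toPerm
  have hS : S * S = 1 := Equiv.ext hσ.invol
  have hT : T * T = 1 := Equiv.ext hτ.invol
  let P : Set W := Set.range fun k : ℤ => ((S * T) ^ k) t
  have htP : t ∈ P := ⟨0, rfl⟩
  have hσP : ∀ x ∈ P, σ x ∈ P := by
    rintro _ ⟨k, rfl⟩
    exact ⟨1 - k, (apply_mul_zpow_of_left_fixed hS hT ht k).symm⟩
  have hτP : ∀ x ∈ P, τ x ∈ P := by
    rintro _ ⟨k, rfl⟩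
    exact ⟨-k, (apply_mul_zpow_of_right_fixed hS hT ht k).symm⟩
  have hnot : u ∉ P ∨ v ∉ P := by
    by_contra! hcon
    obtain ⟨⟨a, rfl⟩, b, rfl⟩ := hcon
    exact huv (mul_zpow_eq_of_left_fixed hS hT ht hu hv)
  refine ⟨P.piecewise τ σ, hσ.piecewise hτ hσP hτP,
    (P.piecewise_eq_of_mem τ σ htP).trans ht, hnot.imp (fun h => ?_) fun h => ?_⟩
  · exact ⟨fun h' => h (h' ▸ htP), (P.piecewise_eq_of_notMem τ σ h).trans hu⟩
  · exact ⟨fun h' => h (h' ▸ htP), (P.piecewise_eq_of_notMem τ σ h).trans hv⟩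

open scoped Classical in
/-- A nonempty symmetric set of pairs of positive weight which every maximum matching meets at
least as often as the fractional matching `q` does. -/
structure IsTight (c q : W → W → ℝ) (D : Finset (W × W)) : Prop where
  nonempty : D.Nonempty
  pos : ∀ p ∈ D, 0 < c p.1 p.2
  symm : ∀ x y, (x, y) ∈ D → (y, x) ∈ D
  sum_le : ∀ σ, IsMaxMatching c σ →
    ∑ p ∈ D, q p.1 p.2 ≤ (Finset.univ.filter fun x => (x, σ x) ∈ D).card

variable {q : W → W → ℝ}

lemma IsFractionalMatching.sum_le_two_of_star (hq : IsFractionalMatching q) {v : W}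
    {D : Finset (W × W)} (hD : ∀ p ∈ D, p.1 = v ∨ p.2 = v) : ∑ p ∈ D, q p.1 p.2 ≤ 2 := by
  classical
  have hsub : D ⊆ Finset.univ.image (fun y => (v, y)) ∪ Finset.univ.image (fun y => (y, v)) := by
    rintro ⟨x, y⟩ hp
    simp only [Finset.mem_union, Finset.mem_image, Finset.mem_univ, true_and, Prod.mk.injEq]
    rcases hD _ hp with rfl | rfl
    · exact Or.inl ⟨y, rfl, rfl⟩
    · exact Or.inr ⟨x, rfl, rfl⟩
  have hinter := Finset.sum_union_inter (f := fun p : W × W => q p.1 p.2)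
    (s₁ := Finset.univ.image fun y => (v, y)) (s₂ := Finset.univ.image fun y => (y, v))
  rw [Finset.sum_image fun a _ b _ h => (Prod.mk.inj h).2,
    Finset.sum_image fun a _ b _ h => (Prod.mk.inj h).1] at hinter
  simp only [hq.symm _ v] at hinter
  calc ∑ p ∈ D, q p.1 p.2 ≤ _ :=
        Finset.sum_le_sum_of_subset_of_nonneg hsub fun p _ _ => hq.nonneg _ _
    _ ≤ ∑ y, q v y + ∑ y, q v y :=
        hinter ▸ le_add_of_nonneg_right (Finset.sum_nonneg fun p _ => hq.nonneg _ _)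
    _ ≤ 2 := by linarith [hq.sum_le v]

open scoped Classical in
lemma IsEdgeWeight.isTight_star (hc : IsEdgeWeight c) (hq : IsFractionalMatching q) {v : W}
    (hv : ∀ σ, IsMaxMatching c σ → σ v ≠ v) :
    IsTight c q (Finset.univ.filter fun p => 0 < c p.1 p.2 ∧ (p.1 = v ∨ p.2 = v)) := by
  obtain ⟨σ₀, hσ₀, hmax⟩ := exists_matchingWeight_eq_max c
  obtain ⟨σ₁, hσ₁, -⟩ := hc.exists_isMaxMatching hσ₀ hmax
  refine ⟨⟨(v, σ₁ v), by simpa using hσ₁.pos v (hv σ₁ hσ₁)⟩,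
    fun p hp => (Finset.mem_filter.1 hp).2.1, fun x y hxy => ?_, fun σ hσ => ?_⟩
  · simp only [Finset.mem_filter, Finset.mem_univ, true_and] at hxy ⊢
    exact ⟨hc.symm x y ▸ hxy.1, hxy.2.symm⟩
  · have hσv := hv σ hσ
    have hpos := hσ.pos v hσv
    refine (hq.sum_le_two_of_star fun p hp => (Finset.mem_filter.1 hp).2.2).trans ?_
    rw [← Nat.cast_two, Nat.cast_le, ← Finset.card_pair hσv]
    refine Finset.card_le_card fun x hx => ?_
    simp only [Finset.mem_filter, Finset.mem_univ, true_and]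
    rcases Finset.mem_insert.1 hx with rfl | hx
    · exact ⟨by rwa [hσ.invol, hc.symm], Or.inr (hσ.invol v)⟩
    · obtain rfl := Finset.mem_singleton.1 hx
      exact ⟨hpos, Or.inl rfl⟩

/-- No maximum matching misses both `u` and `v`, unless `u = v`. -/
def NotMissedTogether (c : W → W → ℝ) (u v : W) : Prop :=
  u = v ∨ ∀ σ, IsMaxMatching c σ → σ u = u → σ v ≠ v

lemma NotMissedTogether.symm {u v : W} (h : NotMissedTogether c u v) : NotMissedTogether c v u :=
  h.imp Eq.symm fun h σ hσ hv hu => h σ hσ hu hv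

lemma IsEdgeWeight.notMissedTogether (hc : IsEdgeWeight c) {u v : W} (huv : 0 < c u v) :
    NotMissedTogether c u v :=
  Or.inr fun _ hσ hu => hσ.not_fixed_both hc huv hu

lemma NotMissedTogether.trans (hcov : ∀ v, ∃ σ, IsMaxMatching c σ ∧ σ v = v) {u t v : W}
    (hut : NotMissedTogether c u t) (htv : NotMissedTogether c t v) :
    NotMissedTogether c u v := by
  by_contra! hcon
  simp only [NotMissedTogether, not_or, not_forall, not_not] at hcon
  obtain ⟨hne, σ, hσ, hu, hv⟩ := hcon
  obtain ⟨τ, hτ, ht⟩ := hcov t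
  obtain ⟨μ, hμ, hμt, ⟨h1, h2⟩ | ⟨h1, h2⟩⟩ := hσ.exists_fixed hτ hne hu hv ht
  · exact hut.elim h1 fun h => h μ hμ h2 hμt
  · exact htv.elim h1.symm fun h => h μ hμ hμt h2

open scoped Classical in
/-- The proof is Gallai's lemma: if every vertex is missed by some maximum matching, then within a
class of `NotMissedTogether` every maximum matching misses at most one vertex. -/
lemma IsEdgeWeight.isTight_class (hc : IsEdgeWeight c) (hq : IsFractionalMatching q)
    (hcov : ∀ v, ∃ σ, IsMaxMatching c σ ∧ σ v = v) {x₀ y₀ : W} (hxy : 0 < c x₀ y₀)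
    {Y : Finset W} (hY : ∀ y, y ∈ Y ↔ NotMissedTogether c x₀ y) :
    IsTight c q ((Y ×ˢ Y).filter fun p => 0 < c p.1 p.2) := by
  have hx₀ : x₀ ∈ Y := (hY _).2 (Or.inl rfl)
  have hy₀ : y₀ ∈ Y := (hY _).2 (hc.notMissedTogether hxy)
  have hclosed : ∀ σ, IsMaxMatching c σ → ∀ x ∈ Y, σ x ≠ x → σ x ∈ Y := fun σ hσ x hx hfix =>
    (hY _).2 (((hY _).1 hx).trans hcov (hc.notMissedTogether (hσ.pos x hfix)))
  have hmiss : ∀ σ, IsMaxMatching c σ → (Y.filter fun x => σ x = x).card ≤ 1 := by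
    refine fun σ hσ => Finset.card_le_one.2 fun u hu v hv => ?_
    rw [Finset.mem_filter, hY] at hu hv
    exact (hu.1.symm.trans hcov hv.1).elim id fun h => (h σ hσ hu.2 hv.2).elim
  have hcard : 3 ≤ Y.card := by
    obtain ⟨σ, hσ, hfix⟩ := hcov x₀
    have hy : σ y₀ ≠ y₀ := hσ.not_fixed_both hc hxy hfix
    refine Finset.two_lt_card.2 ⟨x₀, hx₀, y₀, hy₀, σ y₀, hclosed σ hσ y₀ hy₀ hy,
      hc.ne_of_pos hxy, fun h => hc.ne_of_pos hxy ?_, hy.symm⟩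
    rw [← hfix, h, hσ.invol]
  refine ⟨⟨(x₀, y₀), by simp [hx₀, hy₀, hxy]⟩, fun p hp => (Finset.mem_filter.1 hp).2,
    fun x y hp => ?_, fun σ hσ => ?_⟩
  · simp only [Finset.mem_filter, Finset.mem_product] at hp ⊢
    exact ⟨hp.1.symm, hc.symm x y ▸ hp.2⟩
  · have hmoved : Y.filter (fun x => ¬ σ x = x) ⊆ Finset.univ.filter fun x =>
        (x, σ x) ∈ (Y ×ˢ Y).filter fun p => 0 < c p.1 p.2 := fun x hx => by
      rw [Finset.mem_filter] at hx
      simp only [Finset.mem_filter, Finset.mem_univ, true_and, Finset.mem_product]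
      exact ⟨⟨hx.1, hclosed σ hσ x hx.1 hx.2⟩, hσ.pos x hx.2⟩
    have hsplit := Finset.card_filter_add_card_filter_not (s := Y) (fun x => σ x = x)
    calc _ ≤ ∑ x ∈ Y, ∑ y ∈ Y, q x y := by
          rw [← Finset.sum_product' (f := q)]
          exact Finset.sum_le_sum_of_subset_of_nonneg (Finset.filter_subset _ _)
            fun p _ _ => hq.nonneg _ _
      _ ≤ Y.card - 1 := hq.odd Y hcard
      _ ≤ _ := by
          rw [sub_le_iff_le_add]
          exact_mod_cast hsplit.symm.trans_le (by
            linarith [hmiss σ hσ, Finset.card_le_card hmoved])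

lemma IsEdgeWeight.exists_isTight (hc : IsEdgeWeight c) (hq : IsFractionalMatching q)
    (hne : ∃ x y, 0 < c x y) : ∃ D, IsTight c q D := by
  classical
  by_cases hcov : ∃ v, ∀ σ, IsMaxMatching c σ → σ v ≠ v
  · obtain ⟨v, hv⟩ := hcov
    exact ⟨_, hc.isTight_star hq hv⟩
  · push Not at hcov
    obtain ⟨x, y, hxy⟩ := hne
    exact ⟨_, hc.isTight_class hq hcov hxy (Y := Finset.univ.filter (NotMissedTogether c x))
      fun y => by simp only [Finset.mem_filter, Finset.mem_univ, true_and]⟩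

open scoped Classical in
/-- The weight function `c` lowered by `δ` on the pairs of `D`. -/
noncomputable def lowerOn (c : W → W → ℝ) (D : Finset (W × W)) (δ : ℝ) (x y : W) : ℝ :=
  c x y - if (x, y) ∈ D then δ else 0

variable {D : Finset (W × W)} {δ : ℝ}

omit [Fintype W] in
lemma lowerOn_le (hδ : 0 ≤ δ) (x y : W) : lowerOn c D δ x y ≤ c x y := by
  unfold lowerOn
  split_ifs <;> linarith

lemma sum_lowerOn_mul (c f : W → W → ℝ) (D : Finset (W × W)) (δ : ℝ) :
    ∑ x, ∑ y, lowerOn c D δ x y * f x y =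
      ∑ x, ∑ y, c x y * f x y - δ * ∑ p ∈ D, f p.1 p.2 := by
  classical
  have hD : ∑ x, ∑ y, (if (x, y) ∈ D then δ * f x y else 0) = δ * ∑ p ∈ D, f p.1 p.2 := by
    rw [← Finset.sum_product' (f := fun x y => if (x, y) ∈ D then δ * f x y else 0),
      Finset.univ_product_univ, Finset.sum_ite_mem, Finset.univ_inter, Finset.mul_sum]
  simp only [lowerOn, sub_mul, ite_mul, zero_mul, Finset.sum_sub_distrib, hD]

lemma IsTight.isEdgeWeight_lowerOn (hD : IsTight c q D) (hc : IsEdgeWeight c)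
    (hδ : ∀ p ∈ D, δ ≤ c p.1 p.2) : IsEdgeWeight (lowerOn c D δ) := by
  refine ⟨fun x y => ?_, fun x y => ?_, fun x => ?_⟩
  · unfold lowerOn
    split_ifs with h
    · exact sub_nonneg.2 (hδ _ h)
    · simpa using hc.nonneg x y
  · classical
    have hsymm : (x, y) ∈ D ↔ (y, x) ∈ D := ⟨hD.symm x y, hD.symm y x⟩
    rw [lowerOn, lowerOn, hc.symm x y]
    exact congrArg (c y x - ·) (if_congr hsymm rfl rfl)
  · rw [lowerOn, if_neg fun h => hc.ne_of_pos (hD.pos _ h) rfl, sub_zero, hc.diag]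

lemma IsTight.maxMatchingWeight_lowerOn_le (hD : IsTight c q D) (hc : IsEdgeWeight c)
    (hδ : 0 ≤ δ) (hgap : ∀ σ, Function.Involutive σ → matchingWeight c σ < maxMatchingWeight c →
      δ * ∑ p ∈ D, q p.1 p.2 ≤ maxMatchingWeight c - matchingWeight c σ) :
    maxMatchingWeight (lowerOn c D δ) ≤ maxMatchingWeight c - δ * ∑ p ∈ D, q p.1 p.2 := by
  classical
  obtain ⟨σ, hσ, hmax⟩ := exists_matchingWeight_eq_max (lowerOn c D δ)
  rw [← hmax]
  rcases (matchingWeight_le_max c hσ).lt_or_eq with hlt | heq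
  · have hle : matchingWeight (lowerOn c D δ) σ ≤ matchingWeight c σ :=
      Finset.sum_le_sum fun x _ => lowerOn_le hδ _ _
    linarith [hgap σ hσ hlt]
  · obtain ⟨τ, hτ, hτσ⟩ := hc.exists_isMaxMatching hσ heq
    have hweight : matchingWeight (lowerOn c D δ) σ =
        matchingWeight c σ - δ * (Finset.univ.filter fun x => (x, σ x) ∈ D).card := by
      simp only [matchingWeight, lowerOn, Finset.sum_sub_distrib, ← Finset.sum_filter,
        Finset.sum_const, nsmul_eq_mul, mul_comm]
    have hsub : (Finset.univ.filter fun x => (x, τ x) ∈ D) ⊆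
        Finset.univ.filter fun x => (x, σ x) ∈ D := by
      refine Finset.monotone_filter_right _ fun x _ (hx : (x, τ x) ∈ D) => ?_
      rwa [← hτσ x (hc.ne_of_pos (hD.pos _ hx)).symm]
    have hcount : ∑ p ∈ D, q p.1 p.2 ≤ (Finset.univ.filter fun x => (x, σ x) ∈ D).card :=
      (hD.sum_le τ hτ).trans (by exact_mod_cast Finset.card_le_card hsub)
    linarith [mul_le_mul_of_nonneg_left hcount hδ]

lemma IsTight.exists_lowering (hD : IsTight c q D) (hc : IsEdgeWeight c) :
    ∃ d, IsEdgeWeight d ∧ (∀ x y, d x y ≤ c x y) ∧ ∑ x, ∑ y, d x y < ∑ x, ∑ y, c x y ∧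
      maxMatchingWeight d - ∑ x, ∑ y, d x y * q x y ≤
        maxMatchingWeight c - ∑ x, ∑ y, c x y * q x y := by
  classical
  have hpos : ∀ᶠ δ : ℝ in nhdsWithin 0 (Set.Ioi 0), ∀ p ∈ D, δ ≤ c p.1 p.2 :=
    (Filter.eventually_all_finset D).2 fun p hp =>
      nhdsWithin_le_nhds (eventually_le_nhds (hD.pos p hp))
  have hgap : ∀ᶠ δ : ℝ in nhdsWithin 0 (Set.Ioi 0), ∀ σ : W → W, Function.Involutive σ →
      matchingWeight c σ < maxMatchingWeight c →
        δ * ∑ p ∈ D, q p.1 p.2 ≤ maxMatchingWeight c - matchingWeight c σ := by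
    refine Filter.eventually_all.2 fun σ => Filter.Eventually.mono ?_ fun δ h _ => h
    by_cases hlt : matchingWeight c σ < maxMatchingWeight c
    · have hlim : Filter.Tendsto (fun δ : ℝ => δ * ∑ p ∈ D, q p.1 p.2)
          (nhdsWithin 0 (Set.Ioi 0)) (nhds (0 * ∑ p ∈ D, q p.1 p.2)) :=
        (Filter.tendsto_id.mul_const _).mono_left nhdsWithin_le_nhds
      rw [zero_mul] at hlim
      exact (hlim.eventually (eventually_le_nhds (sub_pos.2 hlt))).mono fun δ h _ => h
    · exact Filter.Eventually.of_forall fun δ h => (hlt h).elim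
  obtain ⟨δ, hδ, hδD, hδσ⟩ := (eventually_mem_nhdsWithin.and (hpos.and hgap)).exists
  refine ⟨lowerOn c D δ, hD.isEdgeWeight_lowerOn hc hδD, lowerOn_le (le_of_lt hδ), ?_, ?_⟩
  · have hsum := sum_lowerOn_mul c (fun _ _ => 1) D δ
    simp only [mul_one, Finset.sum_const, nsmul_eq_mul] at hsum
    rw [hsum, sub_lt_self_iff]
    exact mul_pos hδ (by exact_mod_cast hD.nonempty.card_pos)
  · rw [sum_lowerOn_mul]
    linarith [hD.maxMatchingWeight_lowerOn_le hc (le_of_lt hδ) hδσ]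

omit [Fintype W] in
lemma isCompact_setOf_isEdgeWeight_le (c : W → W → ℝ) :
    IsCompact {d : W → W → ℝ | IsEdgeWeight d ∧ ∀ x y, d x y ≤ c x y} := by
  refine (isCompact_univ_pi fun x => isCompact_univ_pi fun y =>
    isCompact_Icc (a := (0 : ℝ)) (b := c x y)).of_isClosed_subset ?_ fun d hd x _ y _ =>
      ⟨hd.1.nonneg x y, hd.2 x y⟩
  have hrw : {d : W → W → ℝ | IsEdgeWeight d ∧ ∀ x y, d x y ≤ c x y} =
      {d | (∀ x y, 0 ≤ d x y) ∧ (∀ x y, d x y = d y x) ∧ (∀ x, d x x = 0) ∧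
        ∀ x y, d x y ≤ c x y} :=
    Set.ext fun d => ⟨fun h => ⟨h.1.nonneg, h.1.symm, h.1.diag, h.2⟩,
      fun h => ⟨⟨h.1, h.2.1, h.2.2.1⟩, h.2.2.2⟩⟩
  simp only [hrw, Set.ofPred_and, Set.ofPred_forall]
  refine .inter ?_ (.inter ?_ (.inter ?_ ?_))
  · exact isClosed_iInter fun x => isClosed_iInter fun y => isClosed_le (by fun_prop) (by fun_prop)
  · exact isClosed_iInter fun x => isClosed_iInter fun y => isClosed_eq (by fun_prop) (by fun_prop)
  · exact isClosed_iInter fun x => isClosed_eq (by fun_prop) (by fun_prop)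
  · exact isClosed_iInter fun x => isClosed_iInter fun y => isClosed_le (by fun_prop) (by fun_prop)

/-- Among the weights `d ≤ c` for which the claimed inequality is at most as strong as for `c`, one
of least total weight must vanish. -/
theorem IsFractionalMatching.exists_matching (hq : IsFractionalMatching q) (hc : IsEdgeWeight c) :
    ∃ σ : W → W, Function.Involutive σ ∧ ∑ x, ∑ y, c x y * q x y ≤ matchingWeight c σ := by
  let gap : (W → W → ℝ) → ℝ := fun d => maxMatchingWeight d - ∑ x, ∑ y, d x y * q x y
  have hgap : Continuous gap := continuous_maxMatchingWeight.sub (by fun_prop)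
  have hcompact : IsCompact
      ({d : W → W → ℝ | IsEdgeWeight d ∧ ∀ x y, d x y ≤ c x y} ∩ gap ⁻¹' Set.Iic (gap c)) :=
    (isCompact_setOf_isEdgeWeight_le c).inter_right (isClosed_Iic.preimage hgap)
  obtain ⟨d, ⟨⟨hd, hdc⟩, hdgap⟩, hmin⟩ := hcompact.exists_isMinOn
    ⟨c, ⟨hc, fun _ _ => le_rfl⟩, (le_rfl : gap c ≤ gap c)⟩
    (f := fun d => ∑ x, ∑ y, d x y) (by fun_prop)
  have hd0 : ∀ x y, d x y = 0 := by
    by_contra! hne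
    obtain ⟨x, y, hxy⟩ := hne
    obtain ⟨D, hD⟩ := hd.exists_isTight hq ⟨x, y, (hd.nonneg x y).lt_of_ne' hxy⟩
    obtain ⟨d', hd', hle, hlt, hgap'⟩ := hD.exists_lowering hd
    exact hlt.not_ge (hmin ⟨⟨hd', fun x y => (hle x y).trans (hdc x y)⟩, hgap'.trans hdgap⟩)
  have hgap0 : 0 ≤ gap d := by
    have := matchingWeight_le_max d (σ := id) fun _ => rfl
    simpa [gap, matchingWeight, hd0] using this
  obtain ⟨σ, hσ, hmax⟩ := exists_matchingWeight_eq_max c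
  exact ⟨σ, hσ, hmax ▸ sub_nonneg.1 (hgap0.trans hdgap)⟩

end Matching

section Potential

variable {W ι C : Type*} {R : Finset ι} {a b : ι → W} {q : W → W → ℝ} {t : ℝ}

open scoped Classical in
/-- The weights on pairs in which every `v ∈ R` contributes `Φ v` to the pair `a v`, `b v`, in
both orders. -/
noncomputable def pairWeight (R : Finset ι) (a b : ι → W) (Φ : ι → ℝ) (x y : W) : ℝ :=
  ∑ v ∈ R, ((if a v = x ∧ b v = y then Φ v else 0) + if b v = x ∧ a v = y then Φ v else 0)

lemma isEdgeWeight_pairWeight {Φ : ι → ℝ} (hab : ∀ v ∈ R, a v ≠ b v) (hΦ : ∀ v, 0 ≤ Φ v) :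
    IsEdgeWeight (pairWeight R a b Φ) where
  nonneg x y := Finset.sum_nonneg fun v _ => by
    have := hΦ v
    split_ifs <;> positivity
  symm x y := by
    classical
    exact Finset.sum_congr rfl fun v _ => (add_comm _ _).trans <|
      congrArg₂ _ (if_congr and_comm rfl rfl) (if_congr and_comm rfl rfl)
  diag x := Finset.sum_eq_zero fun v hv => by
    rw [if_neg fun h => hab v hv (h.1.trans h.2.symm),
      if_neg fun h => hab v hv (h.2.trans h.1.symm), add_zero]

variable [Fintype W]

lemma sum_pairWeight_mul (Φ : ι → ℝ) {f : W → W → ℝ} (hf : ∀ x y, f x y = f y x) :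
    ∑ x, ∑ y, pairWeight R a b Φ x y * f x y = 2 * ∑ v ∈ R, Φ v * f (a v) (b v) := by
  classical
  have horiented (a b : ι → W) : ∑ x, ∑ y, ∑ v ∈ R,
      (if a v = x ∧ b v = y then Φ v else 0) * f x y = ∑ v ∈ R, Φ v * f (a v) (b v) := by
    rw [(Finset.sum_congr rfl fun x _ => Finset.sum_comm).trans Finset.sum_comm]
    refine Finset.sum_congr rfl fun v _ => ?_
    rw [← Finset.sum_product', Finset.univ_product_univ,
      Finset.sum_eq_single (a v, b v) (fun p _ hp => ?_) (by simp)]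
    · simp
    · rw [if_neg fun h => hp (Prod.ext h.1.symm h.2.symm), zero_mul]
  simp only [pairWeight, Finset.sum_mul, add_mul, Finset.sum_add_distrib, horiented]
  rw [two_mul, Finset.sum_congr rfl fun v _ => congrArg (Φ v * ·) (hf (b v) (a v))]

open scoped Classical in
lemma matchingWeight_pairWeight (Φ : ι → ℝ) {σ : W → W} (hσ : Function.Involutive σ) :
    matchingWeight (pairWeight R a b Φ) σ = 2 * ∑ v ∈ R, if σ (a v) = b v then Φ v else 0 := by
  have hsymm (x y : W) : (if σ x = y then (1 : ℝ) else 0) = if σ y = x then 1 else 0 :=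
    if_congr (hσ.eq_iff.trans eq_comm) rfl rfl
  simpa only [matchingWeight, mul_ite, mul_one, mul_zero, Finset.sum_ite_eq, Finset.mem_univ,
    if_true] using sum_pairWeight_mul Φ hsymm

open scoped Classical in
lemma IsFractionalMatching.exists_involutive (hq : IsFractionalMatching q)
    (hab : ∀ v ∈ R, a v ≠ b v) {Φ : ι → ℝ} (hΦ : ∀ v, 0 ≤ Φ v) :
    ∃ σ : W → W, Function.Involutive σ ∧
      ∑ v ∈ R, Φ v * q (a v) (b v) ≤ ∑ v ∈ R, if σ (a v) = b v then Φ v else 0 := by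
  obtain ⟨σ, hσ, hle⟩ := hq.exists_matching (isEdgeWeight_pairWeight hab hΦ)
  rw [sum_pairWeight_mul Φ hq.symm, matchingWeight_pairWeight Φ hσ] at hle
  exact ⟨σ, hσ, le_of_mul_le_mul_left hle two_pos⟩

omit [Fintype W]

open scoped Classical in
/-- The colours of `S` whose matching joins `x` to `y`. -/
noncomputable def matchedColours (M : C → W → W) (S : Finset C) (x y : W) : Finset C :=
  S.filter fun γ => M γ x = y

/-- The pessimistic estimator of the event that the colours of `S` match `x` to `y` much less often
than the expected `q x y * S.card` times. -/
noncomputable def missPotential (q : W → W → ℝ) (t : ℝ) (M : C → W → W) (S : Finset C)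
    (x y : W) : ℝ :=
  Real.exp (-t * (matchedColours M S x y).card + (1 - Real.exp (-t)) * (q x y * S.card))

lemma missPotential_pos (q : W → W → ℝ) (t : ℝ) (M : C → W → W) (S : Finset C) (x y : W) :
    0 < missPotential q t M S x y := Real.exp_pos _

section Update

variable [DecidableEq C] {M : C → W → W} {σ : W → W} {S : Finset C} {γ : C} {x y : W}

lemma matchedColours_update (hγ : γ ∉ S) :
    matchedColours (Function.update M γ σ) S x y = matchedColours M S x y := by
  classical
  exact Finset.filter_congr fun γ' hγ' => by
    rw [Function.update_of_ne (ne_of_mem_of_not_mem hγ' hγ)]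

lemma missPotential_update (hγ : γ ∉ S) :
    missPotential q t (Function.update M γ σ) S x y = missPotential q t M S x y := by
  rw [missPotential, matchedColours_update hγ, missPotential]

open scoped Classical in
lemma missPotential_update_insert (hγ : γ ∉ S) :
    missPotential q t (Function.update M γ σ) (insert γ S) x y =
      missPotential q t M S x y * Real.exp ((1 - Real.exp (-t)) * q x y) *
        (1 - (1 - Real.exp (-t)) * if σ x = y then 1 else 0) := by
  have hfactor : 1 - (1 - Real.exp (-t)) * (if σ x = y then 1 else 0) =
      Real.exp (-t * if σ x = y then 1 else 0) := by
    split_ifs <;> simp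
  have hcard : ((matchedColours (Function.update M γ σ) (insert γ S) x y).card : ℝ) =
      (matchedColours M S x y).card + if σ x = y then 1 else 0 := by
    have hinsert : matchedColours (Function.update M γ σ) (insert γ S) x y =
        if σ x = y then insert γ (matchedColours M S x y) else matchedColours M S x y := by
      rw [← matchedColours_update (σ := σ) hγ, matchedColours, Finset.filter_insert,
        Function.update_self]
      rfl
    have hnot : γ ∉ matchedColours M S x y := fun h => hγ (Finset.mem_filter.1 h).1
    rw [hinsert]
    split_ifs <;> simp [hnot]
  rw [hfactor, missPotential, missPotential, ← Real.exp_add, ← Real.exp_add, hcard,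
    Finset.card_insert_of_notMem hγ]
  push_cast
  ring_nf

end Update

lemma exp_mul_one_sub_le_one (y : ℝ) : Real.exp y * (1 - y) ≤ 1 := by
  have h := mul_le_mul_of_nonneg_left (Real.one_sub_le_exp_neg y) (Real.exp_pos y).le
  rwa [← Real.exp_add, add_neg_cancel, Real.exp_zero] at h

section Step

variable [Fintype W] [DecidableEq C]

/-- The expected growth of the potential at `v` is governed by `q (a v) (b v)`; a single matching
does at least as well on the weighted average. -/
lemma IsFractionalMatching.exists_update_sum_missPotential_le (hq : IsFractionalMatching q)
    (hab : ∀ v ∈ R, a v ≠ b v) (L : ι → Finset C) (ht : 0 ≤ t) (M : C → W → W) {Γ : Finset C}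
    {γ : C} (hγ : γ ∉ Γ) :
    ∃ σ : W → W, Function.Involutive σ ∧
      ∑ v ∈ R, missPotential q t (Function.update M γ σ) (L v ∩ insert γ Γ) (a v) (b v) ≤
        ∑ v ∈ R, missPotential q t M (L v ∩ Γ) (a v) (b v) := by
  classical
  set s : ℝ := 1 - Real.exp (-t)
  set P : ι → ℝ := fun v => missPotential q t M (L v ∩ Γ) (a v) (b v)
  have hP (v : ι) : 0 < P v := missPotential_pos ..
  have hs : 0 ≤ s := sub_nonneg.2 (Real.exp_le_one_iff.2 (neg_nonpos.2 ht))
  have hnot (v : ι) : γ ∉ L v ∩ Γ := fun h => hγ (Finset.mem_inter.1 h).2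
  obtain ⟨σ, hσ, hle⟩ := hq.exists_involutive (R := R.filter fun v => γ ∈ L v)
    (fun v hv => hab v (Finset.mem_filter.1 hv).1)
    (Φ := fun v => P v * Real.exp (s * q (a v) (b v)))
    fun v => mul_nonneg (hP v).le (Real.exp_pos _).le
  refine ⟨σ, hσ, ?_⟩
  rw [← Finset.sum_filter_add_sum_filter_not R (fun v => γ ∈ L v),
    ← Finset.sum_filter_add_sum_filter_not R (fun v => γ ∈ L v) P]
  refine add_le_add ?_ (Finset.sum_le_sum fun v hv => ?_)
  · calc ∑ v ∈ R with γ ∈ L v,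
          missPotential q t (Function.update M γ σ) (L v ∩ insert γ Γ) (a v) (b v)
        = ∑ v ∈ R with γ ∈ L v, P v * Real.exp (s * q (a v) (b v)) -
            s * ∑ v ∈ R with γ ∈ L v,
              if σ (a v) = b v then P v * Real.exp (s * q (a v) (b v)) else 0 := by
          rw [Finset.mul_sum, ← Finset.sum_sub_distrib]
          refine Finset.sum_congr rfl fun v hv => ?_
          rw [Finset.inter_insert_of_mem (Finset.mem_filter.1 hv).2,
            missPotential_update_insert (hnot v)]
          split_ifs <;> ring
      _ ≤ ∑ v ∈ R with γ ∈ L v, P v * Real.exp (s * q (a v) (b v)) -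
            s * ∑ v ∈ R with γ ∈ L v, P v * Real.exp (s * q (a v) (b v)) * q (a v) (b v) := by
          gcongr
      _ = ∑ v ∈ R with γ ∈ L v,
            P v * (Real.exp (s * q (a v) (b v)) * (1 - s * q (a v) (b v))) := by
          rw [Finset.mul_sum, ← Finset.sum_sub_distrib]
          exact Finset.sum_congr rfl fun v _ => by ring
      _ ≤ ∑ v ∈ R with γ ∈ L v, P v := Finset.sum_le_sum fun v _ =>
          mul_le_of_le_one_right (hP v).le (exp_mul_one_sub_le_one _)
  · rw [Finset.inter_insert_of_notMem (Finset.mem_filter.1 hv).2, missPotential_update (hnot v)]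

lemma IsFractionalMatching.exists_sum_missPotential_le (hq : IsFractionalMatching q)
    (hab : ∀ v ∈ R, a v ≠ b v) (L : ι → Finset C) (ht : 0 ≤ t) (Γ : Finset C) :
    ∃ M : C → W → W, (∀ γ, Function.Involutive (M γ)) ∧
      ∑ v ∈ R, missPotential q t M (L v ∩ Γ) (a v) (b v) ≤ R.card := by
  induction Γ using Finset.induction_on with
  | empty => exact ⟨fun _ => id, fun _ _ => rfl, by simp [missPotential, matchedColours]⟩
  | insert γ Γ hγ ih =>
    obtain ⟨M, hM, hsum⟩ := ih
    obtain ⟨σ, hσ, hle⟩ := hq.exists_update_sum_missPotential_le hab L ht M hγ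
    exact ⟨Function.update M γ σ, (Function.forall_update_iff M _).2 ⟨hσ, fun γ' _ => hM γ'⟩,
      hle.trans hsum⟩

end Step

lemma mul_one_sub_le_one_sub_exp_neg (ht : 0 ≤ t) : t * (1 - t) ≤ 1 - Real.exp (-t) := by
  have h : Real.exp (-t) * (1 + t) ≤ 1 := by
    simpa only [sub_neg_eq_add] using exp_mul_one_sub_le_one (-t)
  nlinarith [pow_nonneg ht 3]

/-- The method of conditional expectations: were the `M γ` independent random matchings with edge
probabilities `q`, this would be a Chernoff bound followed by a union bound over `R`. -/
theorem IsFractionalMatching.exists_matchings [Fintype W] (hq : IsFractionalMatching q)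
    (hab : ∀ v ∈ R, a v ≠ b v) (L : ι → Finset C) (ht : 0 < t) :
    ∃ M : C → W → W, (∀ γ, Function.Involutive (M γ)) ∧ ∀ v ∈ R,
      (1 - t) * (q (a v) (b v) * (L v).card) - Real.log R.card / t ≤
        (matchedColours M (L v) (a v) (b v)).card := by
  classical
  obtain ⟨M, hM, hsum⟩ := hq.exists_sum_missPotential_le hab L ht.le (R.biUnion L)
  refine ⟨M, hM, fun v hv => ?_⟩
  have hv1 : missPotential q t M (L v) (a v) (b v) ≤ R.card := by
    have h := (Finset.single_le_sum (fun v _ => (missPotential_pos ..).le) hv).trans hsum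
    rwa [Finset.inter_eq_left.2 (Finset.subset_biUnion_of_mem L hv)] at h
  rw [missPotential, ← Real.le_log_iff_exp_le (by exact_mod_cast Finset.card_pos.2 ⟨v, hv⟩)] at hv1
  have hexp := mul_le_mul_of_nonneg_right (mul_one_sub_le_one_sub_exp_neg ht.le)
    (mul_nonneg (hq.nonneg (a v) (b v)) (Nat.cast_nonneg (L v).card))
  refine le_of_mul_le_mul_left ?_ ht
  rw [mul_sub, mul_div_cancel₀ _ ht.ne']
  linarith

end Potential

section Density

variable {W : Type*} {X Y : Finset W} {w : W → W → ℝ} {p : W → ℝ} {η s δ : ℝ} {x y : W}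

/-- The local data at a set `X` of vertices of large degree, all degrees being normalised by the
maximum degree: `w x y` is the share of the degree of `x` going to the common neighbours with `y`,
and `p x` the remaining share, which is small on average over each subset of `X`. -/
structure IsDenseWeight (X : Finset W) (w : W → W → ℝ) (p : W → ℝ) (η : ℝ) : Prop where
  nonneg : ∀ x y, 0 ≤ w x y
  symm : ∀ x y, w x y = w y x
  rest_nonneg : ∀ x, 0 ≤ p x
  sum_add_rest_le : ∀ x ∈ X, ∑ y ∈ X, w x y + p x ≤ 1
  sum_rest_le : ∀ Y ⊆ X, ∑ x ∈ Y, p x ≤ ∑ x ∈ Y, (∑ y ∈ X, w x y - ∑ y ∈ Y, w x y) + η * Y.card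

open scoped Classical in
/-- The probability with which the pair `x`, `y` should be matched for a given colour: the number of
vertices between `x` and `y`, divided by the number of colours available to each of them. The
parameters `s` and `δ` are the surplus of the lists and a margin for error. -/
noncomputable def edgeProb (X : Finset W) (w : W → W → ℝ) (p : W → ℝ) (s δ : ℝ) (x y : W) : ℝ :=
  if x ∈ X ∧ y ∈ X ∧ x ≠ y then (w x y + δ) / (3 / 2 + s - p x - p y) else 0

namespace IsDenseWeight

lemma rest_le (h : IsDenseWeight X w p η) (hx : x ∈ X) : p x ≤ (1 + η) / 2 := by
  have hsum := h.sum_rest_le {x} (Finset.singleton_subset_iff.2 hx)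
  simp only [Finset.sum_singleton, Finset.card_singleton, Nat.cast_one, mul_one] at hsum
  linarith [h.sum_add_rest_le x hx, h.nonneg x x]

lemma sub_rest_sub_rest_pos (h : IsDenseWeight X w p (s / 100)) (hs : 0 < s) (hx : x ∈ X)
    (hy : y ∈ X) : 0 < 3 / 2 + s - p x - p y := by
  linarith [h.rest_le hx, h.rest_le hy]

lemma edgeProb_nonneg (h : IsDenseWeight X w p (s / 100)) (hs : 0 < s) (hδ : 0 ≤ δ) (x y : W) :
    0 ≤ edgeProb X w p s δ x y := by
  unfold edgeProb
  split_ifs with hxy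
  · exact div_nonneg (add_nonneg (h.nonneg x y) hδ) (h.sub_rest_sub_rest_pos hs hxy.1 hxy.2.1).le
  · exact le_rfl

lemma edgeProb_comm (h : IsDenseWeight X w p η) (x y : W) :
    edgeProb X w p s δ x y = edgeProb X w p s δ y x := by
  classical
  rw [edgeProb, edgeProb, h.symm x y, sub_right_comm _ (p x)]
  exact if_congr (by rw [and_left_comm, ne_comm]) rfl rfl

lemma edgeProb_le (h : IsDenseWeight X w p (s / 100)) (hs : 0 < s) (hδ : 0 ≤ δ) (hx : x ∈ X)
    (hy : y ∈ X) : edgeProb X w p s δ x y ≤ (w x y + δ) / (3 / 2 + s - p x - p y) := by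
  unfold edgeProb
  split_ifs
  · exact le_rfl
  · exact div_nonneg (add_nonneg (h.nonneg x y) hδ) (h.sub_rest_sub_rest_pos hs hx hy).le

end IsDenseWeight

lemma edgeProb_eq_zero (hxy : x ∉ X ∨ y ∉ X) : edgeProb X w p s δ x y = 0 :=
  if_neg fun h => hxy.elim (fun hx => hx h.1) fun hy => hy h.2.1

open scoped Classical in
lemma sum_sum_edgeProb_inter (X Y : Finset W) :
    ∑ x ∈ Y, ∑ y ∈ Y, edgeProb X w p s δ x y =
      ∑ x ∈ Y ∩ X, ∑ y ∈ Y ∩ X, edgeProb X w p s δ x y := by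
  have hinner (x : W) : ∑ y ∈ Y, edgeProb X w p s δ x y = ∑ y ∈ Y ∩ X, edgeProb X w p s δ x y :=
    (Finset.sum_subset Finset.inter_subset_left fun y hy hyn =>
      edgeProb_eq_zero (Or.inr fun h => hyn (Finset.mem_inter.2 ⟨hy, h⟩))).symm
  simp only [hinner]
  exact (Finset.sum_subset Finset.inter_subset_left fun x hx hxn => Finset.sum_eq_zero fun y _ =>
    edgeProb_eq_zero (Or.inl fun h => hxn (Finset.mem_inter.2 ⟨hx, h⟩))).symm

/-- The inequality is affine in `r`: it holds at `r = 0`, and when the factor of `1 + u - r` exceeds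
`1`, so that the slope is unfavourable, it is obvious. -/
lemma one_sub_sub_le_mul {u r : ℝ} (hs0 : 0 ≤ s) (hs1 : s ≤ 1 / 2) (hu0 : 0 ≤ u)
    (hu1 : u ≤ 1 / 2 + s / 200) (hr0 : 0 ≤ r) (hr1 : r ≤ 1 - u) :
    1 - u - r ≤ 2 / 3 * (1 - s / 4) * (3 / 2 + s - 2 * u) * (1 + u - r) := by
  set A : ℝ := 2 / 3 * (1 - s / 4) * (3 / 2 + s - 2 * u) with hA
  have hzero : 1 - u ≤ A * (1 + u) := by
    have hexpand : A * (1 + u) - (1 - u) =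
        s * (5 / 12 - s / 6) + u * (2 / 3 * (1 - s / 4) * (s - 1 / 2 - 2 * u) + 1) := by
      rw [hA]
      ring
    have hconst : 0 ≤ s * (5 / 12 - s / 6) := mul_nonneg hs0 (by linarith)
    have hlin : 0 ≤ 2 / 3 * (1 - s / 4) * (s - 1 / 2 - 2 * u) + 1 := by nlinarith
    linarith [mul_nonneg hu0 hlin]
  rcases le_or_gt A 1 with hA1 | hA1
  · linarith [mul_nonneg hr0 (sub_nonneg.2 hA1)]
  · linarith [mul_nonneg (sub_nonneg.2 hA1.le) (show 0 ≤ 1 + u - r by linarith)]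

lemma one_div_midpoint_le {α β : ℝ} (hα : 0 < α) (hβ : 0 < β) :
    1 / ((α + β) / 2) ≤ (1 / α + 1 / β) / 2 := by
  rw [div_add_div _ _ hα.ne' hβ.ne', div_div, div_le_div_iff₀ (by positivity) (by positivity)]
  nlinarith [sq_nonneg (α - β)]

lemma sum_sum_mul_add_div_two {f : W → W → ℝ} (hf : ∀ x y, f x y = f y x) (β : W → ℝ)
    (Y : Finset W) : ∑ x ∈ Y, ∑ y ∈ Y, f x y * ((β x + β y) / 2) =
      ∑ x ∈ Y, β x * ∑ y ∈ Y, f x y := by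
  have hswap : ∑ x ∈ Y, ∑ y ∈ Y, f x y * (β y / 2) = ∑ x ∈ Y, ∑ y ∈ Y, f x y * (β x / 2) := by
    rw [Finset.sum_comm]
    exact Finset.sum_congr rfl fun x _ => Finset.sum_congr rfl fun y _ => by rw [hf]
  simp only [add_div, mul_add, Finset.sum_add_distrib, hswap]
  rw [← two_mul, Finset.mul_sum]
  refine Finset.sum_congr rfl fun x _ => ?_
  rw [← Finset.sum_mul]
  ring

namespace IsDenseWeight

lemma sum_edgeProb_le_one [Fintype W] (h : IsDenseWeight X w p (s / 100)) (hs : 0 < s)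
    (hδ : 0 ≤ δ) (hX : X.card * δ ≤ s / 100) (x : W) : ∑ y, edgeProb X w p s δ x y ≤ 1 := by
  by_cases hx : x ∈ X
  · have hden : 0 < 1 + s - p x - s / 200 := by linarith [h.rest_le hx]
    calc ∑ y, edgeProb X w p s δ x y
        = ∑ y ∈ X, edgeProb X w p s δ x y :=
          (Finset.sum_subset (Finset.subset_univ X) fun y _ hy => edgeProb_eq_zero (Or.inr hy)).symm
      _ ≤ ∑ y ∈ X, (w x y + δ) / (1 + s - p x - s / 200) :=
          Finset.sum_le_sum fun y hy => (h.edgeProb_le hs hδ hx hy).trans <|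
            div_le_div_of_nonneg_left (add_nonneg (h.nonneg x y) hδ) hden
              (by linarith [h.rest_le hy])
      _ ≤ 1 := by
          rw [← Finset.sum_div, div_le_one hden, Finset.sum_add_distrib, Finset.sum_const,
            nsmul_eq_mul]
          linarith [h.sum_add_rest_le x hx]
  · rw [Finset.sum_eq_zero fun y _ => edgeProb_eq_zero (Or.inl hx)]
    exact zero_le_one

lemma edgeProb_le_mul_add_div_two (h : IsDenseWeight X w p (s / 100)) (hs : 0 < s) (hδ : 0 ≤ δ)
    (hx : x ∈ X) (hy : y ∈ X) : edgeProb X w p s δ x y ≤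
      (w x y + δ) * ((1 / (3 / 2 + s - 2 * p x) + 1 / (3 / 2 + s - 2 * p y)) / 2) := by
  have hconvex := one_div_midpoint_le (α := 3 / 2 + s - 2 * p x) (β := 3 / 2 + s - 2 * p y)
    (by linarith [h.rest_le hx]) (by linarith [h.rest_le hy])
  calc edgeProb X w p s δ x y
      ≤ (w x y + δ) * (1 / ((3 / 2 + s - 2 * p x + (3 / 2 + s - 2 * p y)) / 2)) := by
        refine (h.edgeProb_le hs hδ hx hy).trans_eq ?_
        rw [div_eq_mul_one_div]
        ring_nf
    _ ≤ _ := mul_le_mul_of_nonneg_left hconvex (add_nonneg (h.nonneg x y) hδ)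

lemma one_div_mul_sum_le (h : IsDenseWeight X w p (s / 100)) (hs : 0 < s) (hs1 : s ≤ 1 / 2)
    (hδ : 0 ≤ δ) (hX : X.card * δ ≤ s / 100) (hYX : Y ⊆ X) (hx : x ∈ X) :
    1 / (3 / 2 + s - 2 * p x) * ∑ y ∈ Y, (w x y + δ) ≤
      2 / 3 * (1 - s / 4) * (1 + p x - (∑ y ∈ X, w x y - ∑ y ∈ Y, w x y)) + s / 50 := by
  have hpx := h.rest_le hx
  have hsum := h.sum_add_rest_le x hx
  have hYX' : ∑ y ∈ Y, w x y ≤ ∑ y ∈ X, w x y :=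
    Finset.sum_le_sum_of_subset_of_nonneg hYX fun y _ _ => h.nonneg x y
  have hY0 : 0 ≤ ∑ y ∈ Y, w x y := Finset.sum_nonneg fun y _ => h.nonneg x y
  have hYδ : Y.card * δ ≤ s / 100 :=
    (mul_le_mul_of_nonneg_right (by exact_mod_cast Finset.card_le_card hYX) hδ).trans hX
  have hmain := one_sub_sub_le_mul hs.le hs1 (h.rest_nonneg x) (by linarith)
    (sub_nonneg.2 hYX') (by linarith)
  rw [one_div_mul_eq_div, div_le_iff₀ (by linarith), Finset.sum_add_distrib, Finset.sum_const,
    nsmul_eq_mul]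
  nlinarith

lemma sum_sum_edgeProb_le (h : IsDenseWeight X w p (s / 100)) (hs : 0 < s) (hs1 : s ≤ 1 / 2)
    (hδ : 0 ≤ δ) (hX : X.card * δ ≤ s / 100) (hYX : Y ⊆ X) :
    ∑ x ∈ Y, ∑ y ∈ Y, edgeProb X w p s δ x y ≤ 2 / 3 * Y.card := by
  have hrest := h.sum_rest_le Y hYX
  calc ∑ x ∈ Y, ∑ y ∈ Y, edgeProb X w p s δ x y
      ≤ ∑ x ∈ Y, ∑ y ∈ Y,
          (w x y + δ) * ((1 / (3 / 2 + s - 2 * p x) + 1 / (3 / 2 + s - 2 * p y)) / 2) :=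
        Finset.sum_le_sum fun x hx => Finset.sum_le_sum fun y hy =>
          h.edgeProb_le_mul_add_div_two hs hδ (hYX hx) (hYX hy)
    _ = ∑ x ∈ Y, 1 / (3 / 2 + s - 2 * p x) * ∑ y ∈ Y, (w x y + δ) :=
        sum_sum_mul_add_div_two (fun x y => by rw [h.symm])
          (fun x => 1 / (3 / 2 + s - 2 * p x)) Y
    _ ≤ ∑ x ∈ Y, (2 / 3 * (1 - s / 4) *
          (1 + p x - (∑ y ∈ X, w x y - ∑ y ∈ Y, w x y)) + s / 50) :=
        Finset.sum_le_sum fun x hx => h.one_div_mul_sum_le hs hs1 hδ hX hYX (hYX hx)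
    _ = 2 / 3 * (1 - s / 4) * (Y.card +
          (∑ x ∈ Y, p x - ∑ x ∈ Y, (∑ y ∈ X, w x y - ∑ y ∈ Y, w x y))) + Y.card * (s / 50) := by
        rw [Finset.sum_add_distrib, ← Finset.mul_sum, Finset.sum_sub_distrib,
          Finset.sum_add_distrib]
        simp only [Finset.sum_const, nsmul_eq_mul, mul_one, add_sub_assoc]
    _ ≤ 2 / 3 * (1 - s / 4) * (Y.card + s / 100 * Y.card) + Y.card * (s / 50) := by
        gcongr
        · linarith
        · linarith
    _ ≤ 2 / 3 * Y.card := by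
        have hconst : 2 / 3 * (1 - s / 4) * (1 + s / 100) + s / 50 ≤ 2 / 3 := by nlinarith
        linarith [mul_le_mul_of_nonneg_right hconst (Nat.cast_nonneg (α := ℝ) Y.card)]

/-- The bound `2 / 3 * Y.card` is at most `Y.card - 1` as soon as `3 ≤ Y.card`. -/
theorem isFractionalMatching [Fintype W] (h : IsDenseWeight X w p (s / 100)) (hs : 0 < s)
    (hs1 : s ≤ 1 / 2) (hδ : 0 ≤ δ) (hX : X.card * δ ≤ s / 100) :
    IsFractionalMatching (edgeProb X w p s δ) where
  nonneg := h.edgeProb_nonneg hs hδ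
  symm := h.edgeProb_comm
  sum_le := h.sum_edgeProb_le_one hs hδ hX
  odd Y hY := by
    classical
    have hY3 : (3 : ℝ) ≤ Y.card := by exact_mod_cast hY
    rw [sum_sum_edgeProb_inter X Y]
    rcases le_or_gt (Y ∩ X).card 2 with hsmall | _
    · have hrows : ∑ x ∈ Y ∩ X, ∑ y ∈ Y ∩ X, edgeProb X w p s δ x y ≤ (Y ∩ X).card • (1 : ℝ) :=
        Finset.sum_le_card_nsmul _ _ _ fun x _ => (Finset.sum_le_sum_of_subset_of_nonneg
          (Finset.subset_univ _) fun y _ _ => h.edgeProb_nonneg hs hδ x y).trans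
            (h.sum_edgeProb_le_one hs hδ hX x)
      have hcard : ((Y ∩ X).card : ℝ) ≤ 2 := by exact_mod_cast hsmall
      rw [nsmul_eq_mul, mul_one] at hrows
      linarith
    · have hcard : ((Y ∩ X).card : ℝ) ≤ Y.card := by
        exact_mod_cast Finset.card_le_card Finset.inter_subset_left
      linarith [h.sum_sum_edgeProb_le hs hs1 hδ hX (Finset.inter_subset_right (s₁ := Y))]

end IsDenseWeight

end Density

section Greedy

variable {V : Type*} {G : SimpleGraph V} {L : V → Finset ℤ} {g : ℝ} {U R Z : Finset V} {c : V → ℤ}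
  {D : ℕ} {v : V} {a b : V → V}

/-- The restriction of `c` to `U` colours the square of `G` from the lists `L`, and the colours of
neighbours in `G` differ by at least `g`. -/
structure IsListColouring (G : SimpleGraph V) (L : V → Finset ℤ) (g : ℝ) (U : Finset V)
    (c : V → ℤ) : Prop where
  mem : ∀ v ∈ U, c v ∈ L v
  ne : ∀ u ∈ U, ∀ v ∈ U, u ≠ v → (∃ w, G.Adj u w ∧ G.Adj w v) → c u ≠ c v
  gap : ∀ u ∈ U, ∀ v ∈ U, G.Adj u v → g ≤ |(c u : ℝ) - c v|

open scoped Classical in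
lemma IsListColouring.update_insert (hc : IsListColouring G L g U c) (hv : v ∉ U) {γ : ℤ}
    (hγ : γ ∈ L v) (hne : ∀ u ∈ U, (∃ w, G.Adj u w ∧ G.Adj w v) → c u ≠ γ)
    (hgap : ∀ u ∈ U, G.Adj u v → g ≤ |(c u : ℝ) - γ|) :
    IsListColouring G L g (insert v U) (Function.update c v γ) := by
  have hold (u : V) (hu : u ∈ U) : Function.update c v γ u = c u :=
    Function.update_of_ne (ne_of_mem_of_not_mem hu hv) γ c
  have hnew : Function.update c v γ v = γ := Function.update_self v γ c
  refine ⟨(Finset.forall_mem_insert _ _ _).2 ⟨by rwa [hnew], fun u hu => ?_⟩, ?_, ?_⟩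
  · rw [hold u hu]
    exact hc.mem u hu
  · intro u hu u' hu' huu' hw
    rcases Finset.mem_insert.1 hu with rfl | huU <;>
      rcases Finset.mem_insert.1 hu' with rfl | hu'U
    · exact (huu' rfl).elim
    · obtain ⟨w, huw, hwu'⟩ := hw
      rw [hnew, hold u' hu'U]
      exact (hne u' hu'U ⟨w, hwu'.symm, huw.symm⟩).symm
    · rw [hnew, hold u huU]
      exact hne u huU hw
    · rw [hold u huU, hold u' hu'U]
      exact hc.ne u huU u' hu'U huu' hw
  · intro u hu u' hu' hadj
    rcases Finset.mem_insert.1 hu with rfl | huU <;>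
      rcases Finset.mem_insert.1 hu' with rfl | hu'U
    · exact (G.irrefl hadj).elim
    · rw [hnew, hold u' hu'U, abs_sub_comm]
      exact hgap u' hu'U hadj.symm
    · rw [hnew, hold u huU]
      exact hgap u huU hadj
    · rw [hold u huU, hold u' hu'U]
      exact hc.gap u huU u' hu'U hadj

open scoped Classical in
lemma IsListColouring.exists_insert (hc : IsListColouring G L g U c) (hv : v ∉ U) {A : Finset ℤ}
    (hA : A ⊆ L v) {N : Finset V}
    (hN : ∀ u ∈ U, (∃ w, G.Adj u w ∧ G.Adj w v) → u ∈ N ∨ c u ∉ A) (hD : g ≤ D)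
    (hcard : N.card + degIn G U v * (2 * D + 1) < A.card) :
    ∃ γ ∈ A, IsListColouring G L g (insert v U) (Function.update c v γ) := by
  set F : Finset ℤ := N.image c ∪
    (nbrIn G U v).biUnion fun u => (Finset.Icc (c u - D) (c u + D))
  have hFA : F.card < A.card := by
    refine lt_of_le_of_lt ((Finset.card_union_le _ _).trans
      (add_le_add Finset.card_image_le ?_)) hcard
    refine Finset.card_biUnion_le_card_mul _ _ _ fun u _ => ?_
    rw [Int.card_Icc]
    omega
  obtain ⟨γ, hγA, hγF⟩ := Finset.exists_mem_notMem_of_card_lt_card hFA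
  obtain ⟨hγN, hγnbr⟩ := not_or.1 (mt Finset.mem_union.2 hγF)
  refine ⟨γ, hγA, hc.update_insert hv (hA hγA) (fun u hu hw hcu => ?_) fun u hu huv => ?_⟩
  · exact (hN u hu hw).elim (fun huN => hγN (hcu ▸ Finset.mem_image_of_mem c huN))
      fun huA => huA (hcu ▸ hγA)
  · have hfar : ¬(c u - D ≤ γ ∧ γ ≤ c u + D) := fun h => hγnbr <| Finset.mem_biUnion.2
      ⟨u, mem_nbrIn.2 ⟨hu, huv.symm⟩, Finset.mem_Icc.2 h⟩
    have hDγ : (D : ℤ) ≤ |c u - γ| := le_abs.2 (by omega)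
    exact hD.trans (by exact_mod_cast hDγ)

open scoped Classical in
/-- Each `v ∈ R` is coloured from a sublist `A v`, so that only the vertices in `N v` can cause a
conflict. -/
lemma IsListColouring.extend (hc : IsListColouring G L g (U \ R) c) (hRU : R ⊆ U)
    {A : V → Finset ℤ} (hA : ∀ v ∈ R, A v ⊆ L v) {N : V → Finset V}
    (hN : ∀ v ∈ R, ∀ u ∈ U, u ≠ v → (∃ w, G.Adj u w ∧ G.Adj w v) →
      u ∈ N v ∨ (u ∉ R ∧ c u ∉ A v) ∨ (u ∈ R ∧ Disjoint (A u) (A v)))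
    (hD : g ≤ D) (hcard : ∀ v ∈ R, (N v).card + degIn G U v * (2 * D + 1) < (A v).card) :
    ∃ c', IsListColouring G L g U c' := by
  suffices hpartial : ∀ S ⊆ R, ∃ c', IsListColouring G L g (U \ R ∪ S) c' ∧
      (∀ u ∉ R, c' u = c u) ∧ ∀ v ∈ S, c' v ∈ A v by
    obtain ⟨c', hc', -⟩ := hpartial R subset_rfl
    exact ⟨c', Finset.sdiff_union_of_subset hRU ▸ hc'⟩
  intro S
  induction S using Finset.induction_on with
  | empty => exact fun _ => ⟨c, by simpa using hc, fun _ _ => rfl, by simp⟩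
  | insert v S hvS ih =>
    intro hSR
    obtain ⟨hvR, hSR⟩ := Finset.insert_subset_iff.1 hSR
    obtain ⟨c', hc', hcR, hcA⟩ := ih hSR
    have hsub : U \ R ∪ S ⊆ U := Finset.union_subset Finset.sdiff_subset (hSR.trans hRU)
    have hv : v ∉ U \ R ∪ S := by simp [hvR, hvS]
    have hconflict : ∀ u ∈ U \ R ∪ S, (∃ w, G.Adj u w ∧ G.Adj w v) → u ∈ N v ∨ c' u ∉ A v := by
      intro u hu hw
      rcases hN v hvR u (hsub hu) (ne_of_mem_of_not_mem hu hv) hw with h | ⟨huR, hcu⟩ | ⟨huR, hA⟩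
      · exact Or.inl h
      · exact Or.inr (hcR u huR ▸ hcu)
      · have huS : u ∈ S := by simpa [huR] using hu
        exact Or.inr (Finset.disjoint_left.1 hA (hcA u huS))
    obtain ⟨γ, hγ, hcγ⟩ := hc'.exists_insert hv (hA v hvR) hconflict hD <|
      lt_of_le_of_lt (by gcongr; exact degIn_mono G hsub v) (hcard v hvR)
    have hold (u : V) (hu : u ≠ v) : Function.update c' v γ u = c' u :=
      Function.update_of_ne hu γ c'
    refine ⟨Function.update c' v γ, Finset.union_insert v _ S ▸ hcγ, fun u hu => ?_, ?_⟩
    · rw [hold u (ne_of_mem_of_not_mem hvR hu).symm, hcR u hu]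
    · refine (Finset.forall_mem_insert _ _ _).2 ⟨by rwa [Function.update_self], fun u hu => ?_⟩
      rw [hold u (ne_of_mem_of_not_mem hu hvS)]
      exact hcA u hu

open scoped Classical in
/-- The colours in the list of `v` that do not appear in `W` around `a v` or `b v`. -/
noncomputable def freeColours (G : SimpleGraph V) (L : V → Finset ℤ) (W : Finset V)
    (c : V → ℤ) (a b : V → V) (v : V) : Finset ℤ :=
  L v \ ((nbrIn G W (a v)).image c ∪ (nbrIn G W (b v)).image c)

lemma card_le_card_freeColours (G : SimpleGraph V) (L : V → Finset ℤ) (W : Finset V)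
    (c : V → ℤ) (a b : V → V) (v : V) :
    (L v).card ≤ (freeColours G L W c a b v).card + (degIn G W (a v) + degIn G W (b v)) := by
  classical
  exact Finset.card_le_card_sdiff_add_card.trans <| Nat.add_le_add_left
    ((Finset.card_union_le _ _).trans (add_le_add Finset.card_image_le Finset.card_image_le)) _

lemma card_le_card_freeColours_self (G : SimpleGraph V) (L : V → Finset ℤ) (W : Finset V)
    (c : V → ℤ) (a : V → V) (v : V) :
    (L v).card ≤ (freeColours G L W c a a v).card + degIn G W (a v) := by
  classical
  rw [freeColours, Finset.union_self]
  exact Finset.card_le_card_sdiff_add_card.trans (Nat.add_le_add_left Finset.card_image_le _)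

lemma sym2_eq_of_involutive {σ : V → V} (hσ : Function.Involutive σ) {w x y x' y' : V}
    (hxy : σ x = y) (hxy' : σ x' = y') (hw : w ∈ s(x, y)) (hw' : w ∈ s(x', y')) :
    s(x, y) = s(x', y') := by
  subst hxy hxy'
  have hpair (z : V) (hz : w ∈ s(z, σ z)) : s(z, σ z) = s(w, σ w) := by
    rcases Sym2.mem_iff.1 hz with rfl | rfl
    · rfl
    · rw [hσ, Sym2.eq_swap]
  rw [hpair x hw, hpair x' hw']

open scoped Classical in
/-- A vertex `v` only uses colours whose matching joins `a v` to `b v`: two vertices with a common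
neighbour outside `Z` then have the same pair or disjoint sets of colours. -/
lemma IsListColouring.extend_matchings (hc : IsListColouring G L g (U \ R) c) (hRU : R ⊆ U)
    (hab : ∀ v ∈ R, ∀ w, G.Adj v w → w ∈ Z ∨ w = a v ∨ w = b v) {M : ℤ → V → V}
    (hM : ∀ γ, Function.Involutive (M γ)) (hD : g ≤ D)
    (hcard : ∀ v ∈ R, (linked G Z U v).card + (R.filter fun u => s(a u, b u) = s(a v, b v)).card +
      degIn G U v * (2 * D + 1) <
        (matchedColours M (freeColours G L (U \ R) c a b v) (a v) (b v)).card) :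
    ∃ c', IsListColouring G L g U c' := by
  refine hc.extend hRU
    (A := fun v => matchedColours M (freeColours G L (U \ R) c a b v) (a v) (b v))
    (N := fun v => linked G Z U v ∪ R.filter fun u => s(a u, b u) = s(a v, b v))
    (fun v _ => (Finset.filter_subset _ _).trans Finset.sdiff_subset) ?_ hD fun v hv =>
      lt_of_le_of_lt (Nat.add_le_add_right (Finset.card_union_le _ _) _) (hcard v hv)
  rintro v hv u hu huv ⟨w, huw, hwv⟩
  by_cases hwZ : w ∈ Z
  · exact Or.inl (Finset.mem_union_left _ (mem_linked.2 ⟨hu, huv, w, hwZ, huw.symm, hwv⟩))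
  have hwv' : w ∈ s(a v, b v) := Sym2.mem_iff.2 ((hab v hv w hwv.symm).resolve_left hwZ)
  by_cases huR : u ∈ R
  · have hwu' : w ∈ s(a u, b u) := Sym2.mem_iff.2 ((hab u huR w huw).resolve_left hwZ)
    by_cases hs : s(a u, b u) = s(a v, b v)
    · exact Or.inl (Finset.mem_union_right _ (Finset.mem_filter.2 ⟨huR, hs⟩))
    · refine Or.inr (Or.inr ⟨huR, Finset.disjoint_left.2 fun γ hγu hγv => hs ?_⟩)
      exact sym2_eq_of_involutive (hM γ) (Finset.mem_filter.1 hγu).2 (Finset.mem_filter.1 hγv).2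
        hwu' hwv'
  · refine Or.inr (Or.inl ⟨huR, fun hfree => ?_⟩)
    have huw' : c u ∈ (nbrIn G (U \ R) w).image c :=
      Finset.mem_image_of_mem c (mem_nbrIn.2 ⟨Finset.mem_sdiff.2 ⟨hu, huR⟩, huw.symm⟩)
    refine (Finset.mem_sdiff.1 (Finset.mem_filter.1 hfree).1).2 (Finset.mem_union.2 ?_)
    rcases Sym2.mem_iff.1 hwv' with rfl | rfl
    exacts [Or.inl huw', Or.inr huw']

end Greedy

section DenseSubset

/-! ### Dense sets of vertices of large degree -/

variable {V : Type*} {G : SimpleGraph V} {B S Q : Finset V} {a b : V → V} {d : V → ℝ} {η : ℝ}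
  {K : ℕ}

open scoped Classical in
/-- The elements of `S` whose pair `a v`, `b v` lies in `X`. -/
noncomputable def pairsIn (S : Finset V) (a b : V → V) (X : Finset V) : Finset V :=
  S.filter fun v => a v ∈ X ∧ b v ∈ X

lemma mem_pairsIn {X : Finset V} {v : V} : v ∈ pairsIn S a b X ↔ v ∈ S ∧ a v ∈ X ∧ b v ∈ X := by
  simp only [pairsIn, Finset.mem_filter]

/-- The part of the weight `d` on `X`, up to a proportion `η`, that is not accounted for by the
pairs in `X`, each of which counts for both of its elements. -/
noncomputable def deficit (S : Finset V) (a b : V → V) (d : V → ℝ) (η : ℝ) (X : Finset V) : ℝ :=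
  (1 - η) * ∑ x ∈ X, d x - 2 * (pairsIn S a b X).card

open scoped Classical in
lemma card_pairsIn_eq_add {X Y : Finset V} :
    (pairsIn S a b X).card = (pairsIn S a b (X \ Y)).card +
      ((pairsIn S a b X).filter fun v => a v ∈ Y ∨ b v ∈ Y).card := by
  rw [← Finset.card_filter_add_card_filter_not (s := pairsIn S a b X)
    fun v => a v ∈ Y ∨ b v ∈ Y, add_comm]
  congr 2
  ext v
  simp only [Finset.mem_filter, mem_pairsIn, Finset.mem_sdiff, not_or]
  tauto

open scoped Classical in
lemma IsPairing.deficit_sdiff_neg (h : IsPairing G B S a b) (hη : η ≤ 1)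
    (hd : ∀ x ∈ B, ((S.filter fun v => a v = x ∨ b v = x).card : ℝ) ≤ d x) (hQ : Q ⊆ B)
    (hS : (1 - η) * ∑ x ∈ B, d x + 2 * ∑ x ∈ Q, d x < 2 * S.card) :
    deficit S a b d η (B \ Q) < 0 := by
  have hSB : pairsIn S a b B = S := Finset.filter_true_of_mem fun v hv =>
    ⟨(mem_nbrIn.1 (h.left_mem v hv)).1, (mem_nbrIn.1 (h.right_mem v hv)).1⟩
  have hmeet : (S.filter fun v => a v ∈ Q ∨ b v ∈ Q).card ≤
      ∑ x ∈ Q, (S.filter fun v => a v = x ∨ b v = x).card := by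
    refine (Finset.card_le_card fun v hv => ?_).trans Finset.card_biUnion_le
    obtain ⟨hvS, hvQ | hvQ⟩ := Finset.mem_filter.1 hv
    · exact Finset.mem_biUnion.2 ⟨a v, hvQ, Finset.mem_filter.2 ⟨hvS, Or.inl rfl⟩⟩
    · exact Finset.mem_biUnion.2 ⟨b v, hvQ, Finset.mem_filter.2 ⟨hvS, Or.inr rfl⟩⟩
  have hmeet' : ((S.filter fun v => a v ∈ Q ∨ b v ∈ Q).card : ℝ) ≤ ∑ x ∈ Q, d x := by
    refine le_trans ?_ (Finset.sum_le_sum fun x hx => hd x (hQ hx))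
    exact_mod_cast hmeet
  have hcard : (S.card : ℝ) = (pairsIn S a b (B \ Q)).card +
      (S.filter fun v => a v ∈ Q ∨ b v ∈ Q).card := by
    have := card_pairsIn_eq_add (S := S) (a := a) (b := b) (X := B) (Y := Q)
    rw [hSB] at this
    exact_mod_cast this
  have hmono : (1 - η) * ∑ x ∈ B \ Q, d x ≤ (1 - η) * ∑ x ∈ B, d x :=
    mul_le_mul_of_nonneg_left (Finset.sum_le_sum_of_subset_of_nonneg Finset.sdiff_subset
      fun x hx _ => (Nat.cast_nonneg _).trans (hd x hx)) (by linarith)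
  unfold deficit
  linarith

open scoped Classical in
lemma IsPairing.exists_deficit_neg (h : IsPairing G B S a b)
    (hsplit : SplitsBy (pairGraph S a b) B Q K) (hQ : deficit S a b d η (B \ Q) < 0) :
    ∃ C ⊆ B, C.card ≤ K ∧ deficit S a b d η C < 0 := by
  obtain ⟨-, lab, hlab, hK⟩ := hsplit
  set F : ℕ → Finset V := fun i => (B \ Q).filter fun v => lab v = i with hF
  set I := (B \ Q).image lab
  have hweight : ∑ i ∈ I, ∑ x ∈ F i, d x = ∑ x ∈ B \ Q, d x :=
    Finset.sum_fiberwise_of_maps_to (fun x hx => Finset.mem_image_of_mem lab hx) _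
  have hfibre (i : ℕ) : (pairsIn S a b (B \ Q)).filter (fun v => lab (a v) = i) =
      pairsIn S a b (F i) := by
    ext v
    simp only [Finset.mem_filter, mem_pairsIn, hF]
    have hlabv (hv : v ∈ S) (ha : a v ∈ B \ Q) (hb : b v ∈ B \ Q) : lab (a v) = lab (b v) :=
      hlab _ ha _ hb (pairGraph_adj.2 ⟨h.ne v hv, v, hv, Or.inl ⟨rfl, rfl⟩⟩)
    grind
  have hcard : ((pairsIn S a b (B \ Q)).card : ℝ) = ∑ i ∈ I, ((pairsIn S a b (F i)).card : ℝ) := by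
    simp only [← hfibre]
    exact_mod_cast Finset.card_eq_sum_card_fiberwise fun v hv =>
      Finset.mem_coe.2 (Finset.mem_image_of_mem lab (mem_pairsIn.1 (Finset.mem_coe.1 hv)).2.1)
  have hsum : ∑ i ∈ I, deficit S a b d η (F i) < 0 := by
    simp only [deficit]
    rwa [Finset.sum_sub_distrib, ← Finset.mul_sum, ← Finset.mul_sum, hweight, ← hcard]
  obtain ⟨i, -, hi⟩ := Finset.exists_lt_of_sum_lt (hsum.trans_eq Finset.sum_const_zero.symm)
  exact ⟨F i, (Finset.filter_subset _ _).trans Finset.sdiff_subset, hK i, hi⟩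

open scoped Classical in
/-- Take `X` of minimal deficit within a small piece of negative deficit: removing `Y` from `X` does
not decrease the deficit, which bounds the weight of `Y` by the pairs in `X` that meet `Y`. -/
lemma IsPairing.exists_dense_subset (h : IsPairing G B S a b) (hη : η ≤ 1)
    (hd : ∀ x ∈ B, ((S.filter fun v => a v = x ∨ b v = x).card : ℝ) ≤ d x)
    (hsplit : SplitsBy (pairGraph S a b) B Q K)
    (hS : (1 - η) * ∑ x ∈ B, d x + 2 * ∑ x ∈ Q, d x < 2 * S.card) :
    ∃ X ⊆ B, X.card ≤ K ∧ (pairsIn S a b X).Nonempty ∧ ∀ Y ⊆ X, (1 - η) * ∑ x ∈ Y, d x ≤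
      2 * ((pairsIn S a b X).filter fun v => a v ∈ Y ∨ b v ∈ Y).card := by
  obtain ⟨C, hCB, hCK, hC⟩ := h.exists_deficit_neg hsplit (h.deficit_sdiff_neg hη hd hsplit.1 hS)
  obtain ⟨X, hXC, hmin⟩ :=
    C.powerset.exists_min_image (deficit S a b d η) ⟨C, Finset.mem_powerset_self C⟩
  rw [Finset.mem_powerset] at hXC
  have hXneg : deficit S a b d η X < 0 := (hmin C (Finset.mem_powerset_self C)).trans_lt hC
  refine ⟨X, hXC.trans hCB, (Finset.card_le_card hXC).trans hCK, ?_, fun Y hY => ?_⟩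
  · rw [Finset.nonempty_iff_ne_empty]
    intro hempty
    have hweight : 0 ≤ (1 - η) * ∑ x ∈ X, d x := mul_nonneg (by linarith) <|
      Finset.sum_nonneg fun x hx => (Nat.cast_nonneg _).trans (hd x (hCB (hXC hx)))
    rw [deficit, hempty, Finset.card_empty, Nat.cast_zero] at hXneg
    linarith
  · have hle := hmin (X \ Y) (Finset.mem_powerset.2 (Finset.sdiff_subset.trans hXC))
    rw [deficit, deficit, ← Finset.sum_sdiff hY, card_pairsIn_eq_add (Y := Y), Nat.cast_add] at hle
    linarith

end DenseSubset

section DenseExtension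

variable {V : Type*} {G : SimpleGraph V} {R U X Y Z : Finset V} {a b : V → V} {x : V} {Δ η : ℝ}

open scoped Classical in
/-- The number of `v ∈ R` whose pair `a v`, `b v` is the pair `x`, `y`. -/
noncomputable def pairCount (R : Finset V) (a b : V → V) (x y : V) : ℕ :=
  (R.filter fun v => s(a v, b v) = s(x, y)).card

lemma pairCount_comm (R : Finset V) (a b : V → V) (x y : V) :
    pairCount R a b x y = pairCount R a b y x := by
  unfold pairCount
  rw [Sym2.eq_swap]

open scoped Classical in
lemma sum_sum_pairCount (hab : ∀ v ∈ R, a v ≠ b v) (X Y : Finset V) :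
    ∑ x ∈ X, ∑ y ∈ Y, pairCount R a b x y =
      ∑ v ∈ R, ((if a v ∈ X ∧ b v ∈ Y then 1 else 0) + if b v ∈ X ∧ a v ∈ Y then 1 else 0) := by
  have hterm : ∀ v ∈ R, ∀ x y, (if s(a v, b v) = s(x, y) then 1 else 0) =
      (if a v = x then if b v = y then 1 else 0 else 0) +
        if b v = x then if a v = y then 1 else 0 else 0 := by
    intro v hv x y
    have := hab v hv
    simp only [Sym2.eq_iff]
    grind
  simp only [pairCount, Finset.card_filter]
  rw [Finset.sum_congr rfl fun x _ => Finset.sum_comm, Finset.sum_comm]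
  refine Finset.sum_congr rfl fun v hv => ?_
  simp only [hterm v hv, Finset.sum_add_distrib]
  congr 1 <;> simp only [Finset.sum_ite_irrel, Finset.sum_ite_eq, Finset.sum_const_zero, ite_and]

open scoped Classical in
lemma IsPairing.two_mul_card_meeting (h : IsPairing G X R a b) (Y : Finset V) :
    2 * (R.filter fun v => a v ∈ Y ∨ b v ∈ Y).card + ∑ x ∈ Y, ∑ y ∈ Y, pairCount R a b x y =
      2 * ∑ x ∈ Y, ∑ y ∈ X, pairCount R a b x y := by
  rw [sum_sum_pairCount h.ne, sum_sum_pairCount h.ne, Finset.card_filter, Finset.mul_sum,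
    Finset.mul_sum, ← Finset.sum_add_distrib]
  refine Finset.sum_congr rfl fun v hv => ?_
  have ha := (mem_nbrIn.1 (h.left_mem v hv)).1
  have hb := (mem_nbrIn.1 (h.right_mem v hv)).1
  by_cases haY : a v ∈ Y <;> by_cases hbY : b v ∈ Y <;> simp [ha, hb, haY, hbY]

open scoped Classical in
lemma degIn_sdiff_add_degIn (G : SimpleGraph V) (h : R ⊆ U) (x : V) :
    degIn G (U \ R) x + degIn G R x = degIn G U x := by
  rw [degIn_eq_sum, degIn_eq_sum, degIn_eq_sum, Finset.sum_sdiff h]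

lemma IsPairing.degIn_eq_sum_pairCount (h : IsPairing G X R a b)
    (hX : ∀ v ∈ R, ∀ x ∈ nbrIn G X v, x = a v ∨ x = b v) (hx : x ∈ X) :
    degIn G R x = ∑ y ∈ X, pairCount R a b x y := by
  classical
  have hsum := sum_sum_pairCount h.ne {x} X
  rw [Finset.sum_singleton] at hsum
  rw [hsum, degIn_eq_sum]
  refine Finset.sum_congr rfl fun v hv => ?_
  obtain ⟨haX, hva⟩ := mem_nbrIn.1 (h.left_mem v hv)
  obtain ⟨hbX, hvb⟩ := mem_nbrIn.1 (h.right_mem v hv)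
  have hxv : G.Adj x v ↔ a v = x ∨ b v = x :=
    ⟨fun hadj => (hX v hv x (mem_nbrIn.2 ⟨hx, hadj.symm⟩)).imp Eq.symm Eq.symm,
      by rintro (rfl | rfl); exacts [hva.symm, hvb.symm]⟩
  have hab := h.ne v hv
  simp only [hxv, Finset.mem_singleton, haX, hbX, and_true]
  grind

lemma IsPairing.card_le_card_mul (h : IsPairing G X R a b) (hRU : R ⊆ U)
    (hdeg : ∀ x ∈ X, (degIn G U x : ℝ) ≤ Δ) : (R.card : ℝ) ≤ X.card * Δ := by
  classical
  have hsub : R ⊆ X.biUnion fun x => nbrIn G U x := fun v hv => by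
    obtain ⟨haX, hva⟩ := mem_nbrIn.1 (h.left_mem v hv)
    exact Finset.mem_biUnion.2 ⟨a v, haX, mem_nbrIn.2 ⟨hRU hv, hva.symm⟩⟩
  have hcard : (R.card : ℝ) ≤ ∑ x ∈ X, (degIn G U x : ℝ) := by
    exact_mod_cast (Finset.card_le_card hsub).trans Finset.card_biUnion_le
  exact hcard.trans ((Finset.sum_le_card_nsmul _ _ _ hdeg).trans_eq (nsmul_eq_mul _ _))

open scoped Classical in
lemma IsPairing.isDenseWeight (h : IsPairing G X R a b) (hRU : R ⊆ U)
    (hX : ∀ v ∈ R, ∀ x ∈ nbrIn G X v, x = a v ∨ x = b v) (hη : 0 ≤ η) (hΔ : 0 < Δ)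
    (hdeg : ∀ x ∈ X, (degIn G U x : ℝ) ≤ Δ)
    (hdense : ∀ Y ⊆ X, (1 - η) * ∑ x ∈ Y, (degIn G U x : ℝ) ≤
      2 * (R.filter fun v => a v ∈ Y ∨ b v ∈ Y).card) :
    IsDenseWeight X (fun x y => pairCount R a b x y / Δ) (fun x => degIn G (U \ R) x / Δ) η := by
  have hsplit : ∀ x ∈ X,
      (degIn G U x : ℝ) = ∑ y ∈ X, (pairCount R a b x y : ℝ) + degIn G (U \ R) x := by
    intro x hx
    rw [← degIn_sdiff_add_degIn G hRU, h.degIn_eq_sum_pairCount hX hx]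
    push_cast
    ring
  refine ⟨fun x y => by positivity, fun x y => by rw [pairCount_comm], fun x => by positivity,
    fun x hx => ?_, fun Y hY => ?_⟩
  · rw [← Finset.sum_div, ← add_div, div_le_one hΔ, ← hsplit x hx]
    exact hdeg x hx
  · have hmeet : 2 * ((R.filter fun v => a v ∈ Y ∨ b v ∈ Y).card : ℝ) +
        ∑ x ∈ Y, ∑ y ∈ Y, (pairCount R a b x y : ℝ) =
          2 * ∑ x ∈ Y, ∑ y ∈ X, (pairCount R a b x y : ℝ) := by
      exact_mod_cast h.two_mul_card_meeting Y
    have hsum : ∑ x ∈ Y, (degIn G U x : ℝ) =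
        ∑ x ∈ Y, ∑ y ∈ X, (pairCount R a b x y : ℝ) + ∑ x ∈ Y, (degIn G (U \ R) x : ℝ) := by
      rw [← Finset.sum_add_distrib]
      exact Finset.sum_congr rfl fun x hx => hsplit x (hY hx)
    have hvol : η * ∑ x ∈ Y, (degIn G U x : ℝ) ≤ η * (Y.card * Δ) :=
      mul_le_mul_of_nonneg_left ((Finset.sum_le_card_nsmul _ _ _ fun x hx =>
        hdeg x (hY hx)).trans_eq (nsmul_eq_mul _ _)) hη
    simp only [← Finset.sum_div, ← sub_div, Finset.sum_sub_distrib]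
    rw [div_add' _ _ _ hΔ.ne', div_le_div_iff_of_pos_right hΔ]
    linarith [hdense Y hY]

lemma IsDenseWeight.mul_le_edgeProb_mul {w : V → V → ℝ} {p : V → ℝ} {s δ N : ℝ} {y : V}
    (h : IsDenseWeight X w p (s / 100)) (hs : 0 < s) (hδ : 0 ≤ δ) (hx : x ∈ X) (hy : y ∈ X)
    (hxy : x ≠ y) (hN : (3 / 2 + s - p x - p y) * Δ ≤ N) :
    (w x y + δ) * Δ ≤ edgeProb X w p s δ x y * N := by
  rw [edgeProb, if_pos ⟨hx, hy, hxy⟩, div_mul_eq_mul_div,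
    le_div_iff₀ (h.sub_rest_sub_rest_pos hs hx hy), mul_right_comm, mul_assoc]
  exact mul_le_mul_of_nonneg_left hN (add_nonneg (h.nonneg x y) hδ)

open scoped Classical in
/-- Random matchings with the edge probabilities given by the pairs offer each `v ∈ R` more colours
than there are vertices with the same pair; the margin `8 * θ * Δ` absorbs the four losses. -/
theorem IsListColouring.extend_dense [Finite V] {L : V → Finset ℤ} {c : V → ℤ} {D : ℕ}
    {g s θ : ℝ} (hc : IsListColouring G L g (U \ R) c) (hRU : R ⊆ U) (h : IsPairing G X R a b)
    (hZX : Disjoint Z X) (hN : ∀ v ∈ R, ∀ w, G.Adj v w → w ∈ Z ∨ w = a v ∨ w = b v)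
    (hs : 0 < s) (hs1 : s ≤ 1 / 2) (hθ : 0 < θ) (hθX : X.card * (8 * θ) ≤ s / 100) (hΔ : 0 < Δ)
    (hdeg : ∀ x ∈ X, (degIn G U x : ℝ) ≤ Δ) (hL : ∀ v ∈ R, (3 / 2 + s) * Δ ≤ (L v).card)
    (hdense : ∀ Y ⊆ X, (1 - s / 100) * ∑ x ∈ Y, (degIn G U x : ℝ) ≤
      2 * (R.filter fun v => a v ∈ Y ∨ b v ∈ Y).card)
    (hlinked : ∀ v ∈ R, ((linked G Z U v).card : ℝ) ≤ θ * Δ) (hD : g ≤ D)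
    (hdegR : ∀ v ∈ R, (degIn G U v : ℝ) * (2 * D + 1) ≤ θ * Δ)
    (hlog : Real.log R.card / θ ≤ θ * Δ) : ∃ c', IsListColouring G L g U c' := by
  have := Fintype.ofFinite V
  have hX : ∀ v ∈ R, ∀ x ∈ nbrIn G X v, x = a v ∨ x = b v := fun v hv x hx =>
    (hN v hv x (mem_nbrIn.1 hx).2).resolve_left (Finset.disjoint_right.1 hZX (mem_nbrIn.1 hx).1)
  have hw := h.isDenseWeight hRU hX (by positivity) hΔ hdeg hdense
  obtain ⟨M, hM, hmatched⟩ := (hw.isFractionalMatching hs hs1 (by positivity) hθX).exists_matchings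
    h.ne (fun v => freeColours G L (U \ R) c a b v) hθ
  refine hc.extend_matchings hRU hN hM hD fun v hv => ?_
  have ha := (mem_nbrIn.1 (h.left_mem v hv)).1
  have hb := (mem_nbrIn.1 (h.right_mem v hv)).1
  have hfree : (3 / 2 + s - degIn G (U \ R) (a v) / Δ - degIn G (U \ R) (b v) / Δ) * Δ ≤
      (freeColours G L (U \ R) c a b v).card := by
    rw [sub_mul, sub_mul, div_mul_cancel₀ _ hΔ.ne', div_mul_cancel₀ _ hΔ.ne']
    have hcard : ((L v).card : ℝ) ≤ (freeColours G L (U \ R) c a b v).card +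
        (degIn G (U \ R) (a v) + degIn G (U \ R) (b v)) := by
      exact_mod_cast card_le_card_freeColours G L (U \ R) c a b v
    linarith [hL v hv]
  have hexpect := hw.mul_le_edgeProb_mul hs (show 0 ≤ 8 * θ by positivity) ha hb (h.ne v hv) hfree
  rw [add_mul, div_mul_cancel₀ _ hΔ.ne'] at hexpect
  have hcount : (pairCount R a b (a v) (b v) : ℝ) ≤ Δ := by
    refine le_trans ?_ (hdeg _ ha)
    rw [← degIn_sdiff_add_degIn G hRU, h.degIn_eq_sum_pairCount hX ha]
    exact_mod_cast (Finset.single_le_sum (fun y _ => Nat.zero_le _) hb).trans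
      (Nat.le_add_left _ _)
  have hθ1 : 8 * θ ≤ 1 := by
    have hXpos : (1 : ℝ) ≤ X.card := by exact_mod_cast Finset.card_pos.2 ⟨a v, ha⟩
    nlinarith
  have hloss : θ * (pairCount R a b (a v) (b v) + 8 * θ * Δ) ≤ θ * (Δ + 1 * Δ) := by gcongr
  have hkept : (1 - θ) * (pairCount R a b (a v) (b v) + 8 * θ * Δ) - Real.log R.card / θ ≤ _ :=
    (sub_le_sub_right (mul_le_mul_of_nonneg_left hexpect (by linarith)) _).trans (hmatched v hv)
  have hgoal : ((linked G Z U v).card : ℝ) + pairCount R a b (a v) (b v) +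
      degIn G U v * (2 * D + 1) <
        (matchedColours M (freeColours G L (U \ R) c a b v) (a v) (b v)).card := by
    linarith [hlinked v hv, hdegR v hv, mul_pos hθ hΔ]
  unfold pairCount at hgoal
  exact_mod_cast hgoal

end DenseExtension

section Tame

variable {V : Type*} {G : SimpleGraph V} {U B Z : Finset V}

open scoped Classical in
/-- The vertices with at least `m` neighbours in `U`. -/
noncomputable def highDeg [Fintype V] (G : SimpleGraph V) (U : Finset V) (m : ℝ) : Finset V :=
  Finset.univ.filter fun z => m ≤ degIn G U z

open scoped Classical in
/-- The vertices with fewer than `m` neighbours in `U`. -/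
noncomputable def lowDeg [Fintype V] (G : SimpleGraph V) (U : Finset V) (m : ℝ) : Finset V :=
  Finset.univ.filter fun z => (degIn G U z : ℝ) < m

open scoped Classical in
/-- The vertices of the degree scale `[l, m)`, degrees being counted in `U`. -/
noncomputable def midDeg [Fintype V] (G : SimpleGraph V) (U : Finset V) (l m : ℝ) : Finset V :=
  Finset.univ.filter fun z => l ≤ degIn G U z ∧ (degIn G U z : ℝ) < m

lemma mem_highDeg [Fintype V] {m : ℝ} {z : V} : z ∈ highDeg G U m ↔ m ≤ degIn G U z := by
  simp [highDeg]

lemma mem_lowDeg [Fintype V] {m : ℝ} {z : V} : z ∈ lowDeg G U m ↔ (degIn G U z : ℝ) < m := by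
  simp [lowDeg]

lemma mem_midDeg [Fintype V] {l m : ℝ} {z : V} :
    z ∈ midDeg G U l m ↔ l ≤ degIn G U z ∧ (degIn G U z : ℝ) < m := by
  simp [midDeg]

/-- The vertices outside `B` all of whose neighbours lie in `B` or `Z` and which have few neighbours
in `U` and few second neighbours through `Z`. Here `B` and `Z` are meant to be the vertices of high
and of low degree. -/
structure IsTame (G : SimpleGraph V) (U B Z : Finset V) (k : ℕ) (κ : ℝ) (v : V) : Prop where
  notMem : v ∉ B
  mem_or_mem : ∀ w, G.Adj v w → w ∈ Z ∨ w ∈ B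
  degIn_le : degIn G U v ≤ k
  card_linked_le : ((linked G Z U v).card : ℝ) ≤ κ

lemma card_filter_mul_le {f : V → ℝ} (hf : ∀ v ∈ U, 0 ≤ f v) (p : V → Prop) [DecidablePred p]
    {m : ℝ} (hp : ∀ v ∈ U, p v → m ≤ f v) : (U.filter p).card * m ≤ ∑ v ∈ U, f v := by
  rw [← nsmul_eq_mul]
  exact (Finset.card_nsmul_le_sum _ _ _ fun v hv =>
    hp v (Finset.mem_filter.1 hv).1 (Finset.mem_filter.1 hv).2).trans
      (Finset.sum_le_sum_of_subset_of_nonneg (Finset.filter_subset _ _) fun v hv _ => hf v hv)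

lemma HasNoK6Minor.card_mul_le_of_le_degIn (hG : HasNoK6Minor G) {m : ℝ}
    (hB : ∀ x ∈ B, m ≤ degIn G U x) : B.card * (m - 64) ≤ 64 * (U.card : ℝ) := by
  have hlow : (B.card : ℝ) * m ≤ ∑ z ∈ B, (degIn G U z : ℝ) := by
    rw [← nsmul_eq_mul]
    exact Finset.card_nsmul_le_sum _ _ _ hB
  have hup : ∑ z ∈ B, (degIn G U z : ℝ) ≤ 64 * (B.card + U.card) := by
    exact_mod_cast hG.sum_degIn_le_add B U
  linarith

lemma HasNoK6Minor.card_highDeg_le [Fintype V] (hG : HasNoK6Minor G) (U : Finset V) {τ m : ℝ}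
    (hτ : 0 < τ) (hm : 64 ≤ τ * (m - 64)) : ((highDeg G U m).card : ℝ) ≤ τ * U.card := by
  have hcard := hG.card_mul_le_of_le_degIn (B := highDeg G U m) fun _ => mem_highDeg.1
  have hm' : ((highDeg G U m).card : ℝ) * 64 ≤ (highDeg G U m).card * (τ * (m - 64)) := by gcongr
  nlinarith

open scoped Classical in
lemma HasNoK6Minor.card_filter_lt_degIn_le (hG : HasNoK6Minor G) (U : Finset V) {τ : ℝ} {k : ℕ}
    (hτ : 0 < τ) (hk : 64 ≤ τ * k) :
    ((U.filter fun v => k < degIn G U v).card : ℝ) ≤ τ * U.card := by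
  have hk0 : (0 : ℝ) < k := pos_of_mul_pos_right (by linarith) hτ.le
  refine le_of_mul_le_mul_right ?_ hk0
  calc ((U.filter fun v => k < degIn G U v).card : ℝ) * k ≤ ∑ v ∈ U, (degIn G U v : ℝ) :=
        card_filter_mul_le (fun v _ => Nat.cast_nonneg _) _ fun v _ h => by exact_mod_cast h.le
    _ ≤ 64 * U.card := by exact_mod_cast hG.sum_degIn_le U
    _ ≤ τ * k * U.card := by gcongr
    _ = τ * U.card * k := by ring

open scoped Classical in
lemma HasNoK6Minor.card_filter_lt_linked_le (hG : HasNoK6Minor G) (U : Finset V) {τ m κ : ℝ}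
    (hm : 0 ≤ m) (hZ : ∀ z ∈ Z, (degIn G U z : ℝ) ≤ m) (hκ : 0 < κ) (hκm : 2176 * m ≤ τ * κ) :
    ((U.filter fun v => κ < (linked G Z U v).card).card : ℝ) ≤ τ * U.card := by
  refine le_of_mul_le_mul_right ?_ hκ
  calc ((U.filter fun v => κ < (linked G Z U v).card).card : ℝ) * κ
      ≤ ∑ v ∈ U, ((linked G Z U v).card : ℝ) :=
        card_filter_mul_le (fun v _ => Nat.cast_nonneg _) _ fun v _ h => h.le
    _ ≤ 2176 * (⌊m⌋₊ : ℝ) * U.card := by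
        exact_mod_cast hG.sum_card_linked_le Z U _ fun z hz => Nat.le_floor (hZ z hz)
    _ ≤ 2176 * m * U.card := by
        have := Nat.floor_le hm
        gcongr
    _ ≤ τ * κ * U.card := by gcongr
    _ = τ * U.card * κ := by ring

open scoped Classical in
lemma filter_not_isTame_subset [Fintype V] (G : SimpleGraph V) (U : Finset V) (l m κ : ℝ) (k : ℕ) :
    (U.filter fun v => ¬ IsTame G U (highDeg G U m) (lowDeg G U l) k κ v) ⊆
      highDeg G U m ∪ ((midDeg G U l m).biUnion fun z => nbrIn G U z) ∪
        ((U.filter fun v => k < degIn G U v) ∪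
          U.filter fun v => κ < (linked G (lowDeg G U l) U v).card) := by
  intro v hv
  obtain ⟨hvU, hv⟩ := Finset.mem_filter.1 hv
  by_contra hcon
  simp only [Finset.mem_union, not_or, Finset.mem_filter, not_and, not_lt,
    Finset.mem_biUnion, not_exists] at hcon
  obtain ⟨⟨hhigh, hmid⟩, hk, hκ⟩ := hcon
  refine hv ⟨hhigh, fun w hw => ?_, hk hvU, hκ hvU⟩
  by_contra hw'
  rw [not_or, mem_lowDeg, not_lt, mem_highDeg, not_le] at hw'
  exact hmid w (mem_midDeg.2 hw') (mem_nbrIn.2 ⟨hvU, hw.symm⟩)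

open scoped Classical in
lemma HasNoK6Minor.card_not_isTame_le [Fintype V] (hG : HasNoK6Minor G) {τ l m κ : ℝ} {k : ℕ}
    (hτ : 0 < τ) (hm : 64 ≤ τ * (m - 64)) (hl : 0 ≤ l)
    (hmid : ∑ z ∈ midDeg G U l m, (degIn G U z : ℝ) ≤ τ * U.card)
    (hk : 64 ≤ τ * k) (hκ : 0 < κ) (hκl : 2176 * l ≤ τ * κ) :
    ((U.filter fun v => ¬ IsTame G U (highDeg G U m) (lowDeg G U l) k κ v).card : ℝ) ≤
      4 * τ * U.card := by
  have hnbr : (((midDeg G U l m).biUnion fun z => nbrIn G U z).card : ℝ) ≤ τ * U.card :=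
    le_trans (by exact_mod_cast Finset.card_biUnion_le) hmid
  have hunion : ((U.filter fun v =>
      ¬ IsTame G U (highDeg G U m) (lowDeg G U l) k κ v).card : ℝ) ≤
      (highDeg G U m).card + ((midDeg G U l m).biUnion fun z => nbrIn G U z).card +
        ((U.filter fun v => k < degIn G U v).card +
          (U.filter fun v => κ < (linked G (lowDeg G U l) U v).card).card) := by
    exact_mod_cast (Finset.card_le_card (filter_not_isTame_subset G U l m κ k)).trans
      ((Finset.card_union_le _ _).trans
        (add_le_add (Finset.card_union_le _ _) (Finset.card_union_le _ _)))
  linarith [hG.card_highDeg_le U hτ hm, hG.card_filter_lt_degIn_le U hτ hk,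
    hG.card_filter_lt_linked_le U hl (fun z hz => (mem_lowDeg.1 hz).le) hκ hκl]

open scoped Classical in
lemma HasNoK33Minor.sum_degIn_le_two_mul_add (hG : HasNoK33Minor G) {P : V → Prop}
    (hPB : ∀ v, P v → v ∉ B) (h2 : ∀ v ∈ U, P v → 2 ≤ degIn G B v) :
    ∑ x ∈ B, degIn G U x ≤ 2 * (U.filter fun v => P v ∧ degIn G B v = 2).card +
      64 * (U.filter fun v => ¬ P v).card + 526464 * B.card := by
  set T := U.filter fun v => ¬ P v
  set S₂ := U.filter fun v => P v ∧ degIn G B v = 2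
  set S₃ := U.filter fun v => P v ∧ ¬ degIn G B v = 2
  have hsplit : ∑ v ∈ U, degIn G B v =
      ∑ v ∈ S₂, degIn G B v + ∑ v ∈ S₃, degIn G B v + ∑ v ∈ T, degIn G B v := by
    rw [← Finset.sum_filter_add_sum_filter_not U P,
      ← Finset.sum_filter_add_sum_filter_not (U.filter P) fun v => degIn G B v = 2,
      Finset.filter_filter, Finset.filter_filter]
  have hS₂ : ∑ v ∈ S₂, degIn G B v = S₂.card * 2 :=
    Finset.sum_const_nat fun v hv => (Finset.mem_filter.1 hv).2.2
  have hS₃ : S₃.card ≤ 8224 * B.card := by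
    refine hG.card_three_le S₃ B
      (Finset.disjoint_left.2 fun v hv => hPB v (Finset.mem_filter.1 hv).2.1) fun v hv => ?_
    obtain ⟨hvU, hPv, hne⟩ := Finset.mem_filter.1 hv
    have := h2 v hvU hPv
    omega
  rw [sum_degIn_comm, hsplit, hS₂]
  have hTsum := hG.hasNoK6Minor.sum_degIn_le_add T B
  have hS₃sum := hG.hasNoK6Minor.sum_degIn_le_add S₃ B
  omega

open scoped Classical in
lemma card_le_sum_degIn {P : V → Prop} (hP : 2 * (U.filter fun v => ¬ P v).card ≤ U.card)
    (h2 : ∀ v ∈ U, P v → 2 ≤ degIn G B v) : U.card ≤ ∑ x ∈ B, degIn G U x := by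
  have hsum : (U.filter P).card * 2 ≤ ∑ v ∈ U, degIn G B v :=
    (Finset.card_nsmul_le_sum (U.filter P) _ 2 fun v hv =>
      h2 v (Finset.mem_filter.1 hv).1 (Finset.mem_filter.1 hv).2).trans
        (Finset.sum_le_sum_of_subset (Finset.filter_subset _ _))
  have hcard := Finset.card_filter_add_card_filter_not (s := U) P
  rw [sum_degIn_comm]
  omega

open scoped Classical in
/-- The vertices of `U` with exactly two neighbours in `B` carry almost all edges between `B` and
`U`: by planar-type counting, few edges leave from the exceptional vertices or from those with three
or more neighbours in `B`. -/
lemma HasNoK33Minor.sum_degIn_le_of_two_le (hG : HasNoK33Minor G) {P : V → Prop} {τ η m : ℝ}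
    (hη : 0 < η) (hη1 : η ≤ 1) (hτ : 1024 * τ ≤ η)
    (hP : ((U.filter fun v => ¬ P v).card : ℝ) ≤ 4 * τ * U.card) (hPB : ∀ v, P v → v ∉ B)
    (h2 : ∀ v ∈ U, P v → 2 ≤ degIn G B v) (hm : 2105856 ≤ η * m)
    (hB : ∀ x ∈ B, m ≤ degIn G U x) :
    U.card ≤ ∑ x ∈ B, degIn G U x ∧
      (1 - η / 2) * ∑ x ∈ B, (degIn G U x : ℝ) ≤
        2 * (U.filter fun v => P v ∧ degIn G B v = 2).card := by
  have : (0 : ℝ) ≤ U.card := Nat.cast_nonneg _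
  have hvolU : U.card ≤ ∑ x ∈ B, degIn G U x := by
    refine card_le_sum_degIn (P := P) ?_ h2
    have : 2 * ((U.filter fun v => ¬ P v).card : ℝ) ≤ U.card := by nlinarith
    exact_mod_cast this
  have hvolU' : (U.card : ℝ) ≤ ∑ x ∈ B, (degIn G U x : ℝ) := by exact_mod_cast hvolU
  have hvolB : B.card * m ≤ ∑ x ∈ B, (degIn G U x : ℝ) := by
    rw [← nsmul_eq_mul]
    exact Finset.card_nsmul_le_sum _ _ _ hB
  have hsum : ∑ x ∈ B, (degIn G U x : ℝ) ≤
      2 * (U.filter fun v => P v ∧ degIn G B v = 2).card +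
        64 * (U.filter fun v => ¬ P v).card + 526464 * B.card := by
    exact_mod_cast hG.sum_degIn_le_two_mul_add hPB h2
  have hT : 64 * ((U.filter fun v => ¬ P v).card : ℝ) ≤
      η / 4 * ∑ x ∈ B, (degIn G U x : ℝ) := by nlinarith
  have hthree : 526464 * (B.card : ℝ) ≤ η / 4 * ∑ x ∈ B, (degIn G U x : ℝ) := by
    have : (0 : ℝ) ≤ B.card := Nat.cast_nonneg _
    nlinarith
  refine ⟨hvolU, by linarith⟩

end Tame

section Step

open Filter Asymptotics

lemma eventually_log_mul_div_le (K : ℕ) {θ : ℝ} (hθ : 0 < θ) :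
    ∀ᶠ n : ℕ in atTop, Real.log (K * n) / θ ≤ θ * n := by
  rcases K.eq_zero_or_pos with rfl | hK
  · refine Eventually.of_forall fun n => ?_
    rw [Nat.cast_zero, zero_mul, Real.log_zero, zero_div]
    positivity
  have hK' : (0 : ℝ) < K := Nat.cast_pos.2 hK
  have htendsto : Tendsto (fun n : ℕ => (K * n : ℝ)) atTop atTop :=
    tendsto_natCast_atTop_atTop.const_mul_atTop hK'
  filter_upwards [(Real.isLittleO_log_id_atTop.comp_tendsto htendsto).bound
    (show 0 < θ ^ 2 / K by positivity)] with n hn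
  rw [Function.comp_apply, Function.comp_apply, id_eq,
    Real.norm_of_nonneg (show (0 : ℝ) ≤ K * n by positivity)] at hn
  rw [div_le_iff₀ hθ]
  calc Real.log (K * n) ≤ θ ^ 2 / K * (K * n) := (Real.le_norm_self _).trans hn
    _ = θ * n * θ := by field_simp

lemma eventually_mul_ceil_rpow_le (k : ℕ) {θ : ℝ} (hθ : 0 < θ) :
    ∀ᶠ n : ℕ in atTop, (k : ℝ) * (2 * (⌈(n : ℝ) ^ ((1 : ℝ) / 4)⌉₊ : ℝ) + 1) ≤ θ * n := by
  have hrpow : (fun x : ℝ => x ^ ((1 : ℝ) / 4)) =o[atTop] (id : ℝ → ℝ) := by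
    refine isLittleO_of_tendsto' ?_ ?_
    · filter_upwards [eventually_ne_atTop 0] with x hx h using absurd h hx
    · refine (tendsto_rpow_neg_atTop (show (0 : ℝ) < 3 / 4 by norm_num)).congr' ?_
      filter_upwards [eventually_gt_atTop 0] with x hx
      rw [id, ← Real.rpow_sub_one hx.ne']
      norm_num
  have hsum : (fun x : ℝ => 2 * k * x ^ ((1 : ℝ) / 4) + 3 * k) =o[atTop] (id : ℝ → ℝ) :=
    (hrpow.const_mul_left _).add (isLittleO_const_id_atTop _)
  filter_upwards [tendsto_natCast_atTop_atTop.eventually (hsum.bound hθ)] with n hn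
  rw [id_eq, Real.norm_of_nonneg (by positivity), Real.norm_of_nonneg (by positivity)] at hn
  calc (k : ℝ) * (2 * (⌈(n : ℝ) ^ ((1 : ℝ) / 4)⌉₊ : ℝ) + 1)
      ≤ k * (2 * ((n : ℝ) ^ ((1 : ℝ) / 4) + 1) + 1) := by
        gcongr
        exact (Nat.ceil_lt_add_one (by positivity)).le
    _ = 2 * k * (n : ℝ) ^ ((1 : ℝ) / 4) + 3 * k := by ring
    _ ≤ θ * n := hn

variable {V : Type*} {G : SimpleGraph V} {L : V → Finset ℤ} {U B S Q Z : Finset V} {a b : V → V}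
  {v x : V}

open scoped Classical in
/-- A nonempty subset `R` of `U` such that every colouring of `U \ R` can be turned into one of `U`:
it does not occur in a minimal counterexample. -/
def IsReducible (G : SimpleGraph V) (L : V → Finset ℤ) (g : ℝ) (U R : Finset V) : Prop :=
  R ⊆ U ∧ R.Nonempty ∧ ∀ c, IsListColouring G L g (U \ R) c → ∃ c', IsListColouring G L g U c'

lemma isReducible_singleton_of_card_lt {g : ℝ} {D : ℕ} (hv : v ∈ U)
    (hx : ∀ w, G.Adj v w → w ∈ Z ∨ w = x)
    (hD : g ≤ D)
    (hcard : degIn G U x + (linked G Z U v).card + 1 + degIn G U v * (2 * D + 1) < (L v).card) :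
    IsReducible G L g U {v} := by
  classical
  refine ⟨Finset.singleton_subset_iff.2 hv, Finset.singleton_nonempty v, fun c hc => ?_⟩
  refine hc.extend_matchings (Finset.singleton_subset_iff.2 hv) (Z := Z) (a := fun _ => x)
    (b := fun _ => x) (M := fun _ => id) (D := D) (fun u hu w hw => ?_)
    (fun _ _ => rfl) hD fun u hu => ?_ <;> obtain rfl := Finset.mem_singleton.1 hu
  · exact (hx w hw).imp_right Or.inl
  · have hfree := card_le_card_freeColours_self G L (U \ {u}) c (fun _ => x) u
    have hdeg := degIn_mono G (U := U \ {u}) (W := U) Finset.sdiff_subset x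
    simp only [matchedColours, id, Finset.filter_true, Finset.card_singleton]
    omega

lemma exists_isPairing_of_degIn_eq_two (hS : ∀ v ∈ S, degIn G B v = 2) :
    ∃ a b : V → V, IsPairing G B S a b ∧ ∀ v ∈ S, ∀ w ∈ nbrIn G B v, w = a v ∨ w = b v := by
  classical
  have hpair : ∀ v : V, ∃ x y : V, v ∈ S → x ≠ y ∧ nbrIn G B v = {x, y} := fun v => by
    by_cases hv : v ∈ S
    · obtain ⟨x, y, hxy⟩ := Finset.card_eq_two.1 (hS v hv)
      exact ⟨x, y, fun _ => hxy⟩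
    · exact ⟨v, v, fun h => absurd h hv⟩
  choose a b hab using hpair
  refine ⟨a, b, ⟨fun v hv => ?_, fun v hv => ?_, fun v hv => (hab v hv).1⟩, fun v hv w hw => ?_⟩
  · simp [(hab v hv).2]
  · simp [(hab v hv).2]
  · simpa [(hab v hv).2] using hw

lemma sum_le_mul_sum_of_card_le {d : V → ℝ} {lam μ M : ℝ} (hμ : 0 ≤ μ) (hM : 0 ≤ M)
    (hQ : (Q.card : ℝ) ≤ lam * μ * B.card) (hd : ∀ x ∈ Q, d x ≤ M)
    (hB : ∀ x ∈ B, lam * M ≤ d x) : ∑ x ∈ Q, d x ≤ μ * ∑ x ∈ B, d x :=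
  calc ∑ x ∈ Q, d x ≤ Q.card * M :=
        (Finset.sum_le_card_nsmul _ _ _ hd).trans_eq (nsmul_eq_mul _ _)
    _ ≤ lam * μ * B.card * M := by gcongr
    _ = μ * (B.card • (lam * M)) := by rw [nsmul_eq_mul]; ring
    _ ≤ μ * ∑ x ∈ B, d x := by
        gcongr
        exact Finset.card_nsmul_le_sum _ _ _ hB

open scoped Classical in
lemma IsPairing.exists_dense_subset_of_le_degIn {lam η M : ℝ} {K : ℕ} (h : IsPairing G B S a b)
    (hSU : S ⊆ U) (hη : 0 < η) (hη1 : η ≤ 1) (hM : 0 ≤ M) (hdeg : ∀ x, (degIn G U x : ℝ) ≤ M)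
    (hB : ∀ x ∈ B, lam * M ≤ degIn G U x) (hpos : 0 < ∑ x ∈ B, (degIn G U x : ℝ))
    (hS : (1 - η / 2) * ∑ x ∈ B, (degIn G U x : ℝ) ≤ 2 * S.card)
    (hQ : (Q.card : ℝ) ≤ lam * (η / 8) * B.card) (hsplit : SplitsBy (pairGraph S a b) B Q K) :
    ∃ X ⊆ B, X.card ≤ K ∧ (pairsIn S a b X).Nonempty ∧
      ∀ Y ⊆ X, (1 - η) * ∑ x ∈ Y, (degIn G U x : ℝ) ≤
        2 * ((pairsIn S a b X).filter fun v => a v ∈ Y ∨ b v ∈ Y).card := by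
  refine h.exists_dense_subset hη1 (fun x _ => ?_) hsplit ?_
  · have hsub : S.filter (fun v => a v = x ∨ b v = x) ⊆ nbrIn G U x := fun v hv => by
      obtain ⟨hvS, rfl | rfl⟩ := Finset.mem_filter.1 hv
      · exact mem_nbrIn.2 ⟨hSU hvS, (mem_nbrIn.1 (h.left_mem v hvS)).2.symm⟩
      · exact mem_nbrIn.2 ⟨hSU hvS, (mem_nbrIn.1 (h.right_mem v hvS)).2.symm⟩
    exact_mod_cast Finset.card_le_card hsub
  · have hQsum := sum_le_mul_sum_of_card_le (by positivity) hM hQ (fun x _ => hdeg x) hB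
    have := mul_pos hη hpos
    linarith

/-- The inequalities between the constants of one extension step in a graph of maximum degree `Δ`:
degrees are high from `lam * Δ` on and low up to `l * Δ`, a tame vertex has at most `k` neighbours
and `θ * Δ` second neighbours, and dense sets have at most `K` elements. -/
structure StepConstants (s lam l θ : ℝ) (k K Δ : ℕ) : Prop where
  pos : 0 < l
  lt : l < lam
  margin_pos : 0 < θ
  card_mul_margin_le : (K + 1) * (8 * θ) ≤ s / 100
  le_bound : 64 ≤ s / 102400 * k
  low_le : 2176 * l ≤ s / 102400 * θ
  le_high : 2105856 ≤ s / 100 * (lam * Δ)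
  log_le : Real.log (K * Δ) / θ ≤ θ * Δ
  gap_le : (k : ℝ) * (2 * (⌈(Δ : ℝ) ^ ((1 : ℝ) / 4)⌉₊ : ℝ) + 1) ≤ θ * Δ
  eight_le : (8 : ℝ) ≤ Δ

lemma exists_stepConstants {s lam : ℝ} (hs : 0 < s) (hlam : 0 < lam) (K : ℕ) :
    ∃ l θ : ℝ, ∃ k Δ₀ : ℕ, ∀ Δ ≥ Δ₀, StepConstants s lam l θ k K Δ := by
  obtain ⟨k, hk⟩ := exists_nat_ge (64 / (s / 102400))
  rw [div_le_iff₀' (by positivity)] at hk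
  set θ : ℝ := s / (800 * (K + 1)) with hθ
  have hθ0 : 0 < θ := by positivity
  set l := min (lam / 2) (s / 102400 * θ / 2176)
  have hcast : Tendsto (fun n : ℕ => (n : ℝ)) atTop atTop := tendsto_natCast_atTop_atTop
  obtain ⟨Δ₀, hΔ₀⟩ := eventually_atTop.1 ((eventually_log_mul_div_le K hθ0).and
    ((eventually_mul_ceil_rpow_le k hθ0).and
      ((hcast.eventually_ge_atTop (2105856 / (s / 100 * lam))).and
        (hcast.eventually_ge_atTop 8))))
  refine ⟨l, θ, k, Δ₀, fun Δ hΔ => ?_⟩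
  obtain ⟨hlog, hgap, hhigh, height⟩ := hΔ₀ Δ hΔ
  rw [div_le_iff₀' (by positivity), mul_assoc] at hhigh
  have hK : (K + 1) * (8 * θ) ≤ s / 100 := by
    rw [hθ]
    field_simp
    norm_num
  have hl : 2176 * l ≤ s / 102400 * θ := by
    rw [← le_div_iff₀' (by norm_num)]
    exact min_le_right _ _
  exact ⟨by positivity, (min_le_left _ _).trans_lt (by linarith), hθ0, hK, hk, hl, hhigh, hlog,
    hgap, height⟩

namespace StepConstants

variable {s lam l θ : ℝ} {k K Δ : ℕ}

lemma margin_le (h : StepConstants s lam l θ k K Δ) : 8 * θ ≤ s / 100 := by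
  nlinarith [h.card_mul_margin_le, h.margin_pos, mul_nonneg (Nat.cast_nonneg (α := ℝ) K)
    h.margin_pos.le]

lemma isReducible_singleton (h : StepConstants s lam l θ k K Δ) (hs : 0 < s) (hs1 : s ≤ 1 / 2)
    (hdeg : ∀ x, (degIn G U x : ℝ) ≤ Δ) (hL : (3 / 2 + s) * (Δ : ℝ) ≤ (L v).card) (hv : v ∈ U)
    (htame : IsTame G U B Z k (θ * Δ) v) (hv1 : degIn G B v ≤ 1) :
    IsReducible G L ((Δ : ℝ) ^ ((1 : ℝ) / 4)) U {v} := by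
  have : Nonempty V := ⟨v⟩
  obtain ⟨x, hx⟩ := Finset.card_le_one_iff_subset_singleton.1 hv1
  refine isReducible_singleton_of_card_lt (Z := Z) (x := x) hv (fun w hw => ?_) (Nat.le_ceil _) ?_
  · exact (htame.mem_or_mem w hw).imp_right fun hwB =>
      Finset.mem_singleton.1 (hx (mem_nbrIn.2 ⟨hwB, hw⟩))
  · have hgap : (degIn G U v : ℝ) * (2 * (⌈(Δ : ℝ) ^ ((1 : ℝ) / 4)⌉₊ : ℝ) + 1) ≤ θ * Δ := by
      refine le_trans ?_ h.gap_le
      have : (degIn G U v : ℝ) ≤ k := by exact_mod_cast htame.degIn_le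
      gcongr
    have hθ : θ * Δ ≤ 1 / 8 * Δ := by
      have := h.margin_le
      gcongr
      linarith
    have hlt : (degIn G U x : ℝ) + (linked G Z U v).card + 1 +
        degIn G U v * (2 * (⌈(Δ : ℝ) ^ ((1 : ℝ) / 4)⌉₊ : ℝ) + 1) < (L v).card := by
      nlinarith [htame.card_linked_le, hdeg x, h.eight_le]
    exact_mod_cast hlt

open scoped Classical in
lemma isReducible_pairsIn [Finite V] {X : Finset V} (h : StepConstants s lam l θ k K Δ)
    (hs : 0 < s) (hs1 : s ≤ 1 / 2) (hdeg : ∀ x, (degIn G U x : ℝ) ≤ Δ)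
    (hL : ∀ v, (3 / 2 + s) * (Δ : ℝ) ≤ (L v).card) (hSU : S ⊆ U) (hab : IsPairing G B S a b)
    (honly : ∀ v ∈ S, ∀ w ∈ nbrIn G B v, w = a v ∨ w = b v)
    (htame : ∀ v ∈ S, IsTame G U B Z k (θ * Δ) v) (hZB : Disjoint Z B) (hXB : X ⊆ B)
    (hXK : X.card ≤ K) (hne : (pairsIn S a b X).Nonempty)
    (hdense : ∀ Y ⊆ X, (1 - s / 100) * ∑ x ∈ Y, (degIn G U x : ℝ) ≤
      2 * ((pairsIn S a b X).filter fun v => a v ∈ Y ∨ b v ∈ Y).card) :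
    IsReducible G L ((Δ : ℝ) ^ ((1 : ℝ) / 4)) U (pairsIn S a b X) := by
  have hRS : pairsIn S a b X ⊆ S := Finset.filter_subset _ _
  have hRU := hRS.trans hSU
  have hZX : Disjoint Z X := hZB.mono_right hXB
  have hpair : IsPairing G X (pairsIn S a b X) a b := by
    refine ⟨fun v hv => ?_, fun v hv => ?_, fun v hv => hab.ne v (hRS hv)⟩ <;>
      obtain ⟨hvS, ha, hb⟩ := mem_pairsIn.1 hv
    · exact mem_nbrIn.2 ⟨ha, (mem_nbrIn.1 (hab.left_mem v hvS)).2⟩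
    · exact mem_nbrIn.2 ⟨hb, (mem_nbrIn.1 (hab.right_mem v hvS)).2⟩
  have hXK' : (X.card : ℝ) ≤ K := by exact_mod_cast hXK
  have hθX : X.card * (8 * θ) ≤ s / 100 := by
    nlinarith [h.card_mul_margin_le, h.margin_pos]
  have hlog : Real.log (pairsIn S a b X).card / θ ≤ θ * Δ := by
    refine le_trans ?_ h.log_le
    have := h.margin_pos.le
    have : (0 : ℝ) < (pairsIn S a b X).card := by exact_mod_cast Finset.card_pos.2 hne
    have hcard := hpair.card_le_card_mul hRU fun x _ => hdeg x
    gcongr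
    exact hcard.trans (by gcongr)
  refine ⟨hRU, hne, fun c hc => ?_⟩
  refine hc.extend_dense hRU hpair hZX (fun v hv w hw => ?_) hs hs1 h.margin_pos hθX
    (by linarith [h.eight_le]) (fun x _ => hdeg x) (fun v _ => hL v) hdense
    (fun v hv => (htame v (hRS hv)).card_linked_le) (Nat.le_ceil _) (fun v hv => ?_) hlog
  · exact ((htame v (hRS hv)).mem_or_mem w hw).imp_right fun hwB =>
      honly v (hRS hv) w (mem_nbrIn.2 ⟨hwB, hw⟩)
  · refine le_trans ?_ h.gap_le
    have : (degIn G U v : ℝ) ≤ k := by exact_mod_cast (htame v (hRS hv)).degIn_le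
    gcongr

open scoped Classical in
lemma card_not_isTame_le [Fintype V] (h : StepConstants s lam l θ k K Δ) (hs : 0 < s)
    (hs1 : s ≤ 1 / 2) (hG : HasNoK6Minor G)
    (hmid : ∑ z ∈ midDeg G U (l * Δ) (lam * Δ), (degIn G U z : ℝ) ≤ s / 102400 * U.card) :
    ((U.filter fun v => ¬ IsTame G U (highDeg G U (lam * Δ)) (lowDeg G U (l * Δ)) k
      (θ * Δ) v).card : ℝ) ≤ 4 * (s / 102400) * U.card := by
  have hΔ : (0 : ℝ) < Δ := by linarith [h.eight_le]
  refine hG.card_not_isTame_le (by positivity) ?_ (mul_nonneg h.pos.le hΔ.le) hmid h.le_bound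
    (mul_pos h.margin_pos hΔ) ?_
  · linarith [h.le_high]
  · nlinarith [h.low_le]

/-- Either a tame vertex with at most one neighbour of high degree is reducible, or the tame
vertices with exactly two such neighbours contain a dense, hence reducible set. -/
theorem exists_isReducible [Fintype V] (h : StepConstants s lam l θ k K Δ) (hs : 0 < s)
    (hs1 : s ≤ 1 / 2) (hG : HasNoK33Minor G) (hdeg : ∀ x, (degIn G U x : ℝ) ≤ Δ)
    (hL : ∀ v, (3 / 2 + s) * (Δ : ℝ) ≤ (L v).card) (hU : U.Nonempty)
    (hmid : ∑ z ∈ midDeg G U (l * Δ) (lam * Δ), (degIn G U z : ℝ) ≤ s / 102400 * U.card)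
    (hsplit : ∀ (H : SimpleGraph V), HasNoK6Minor H → ∀ V₀ : Finset V, ∃ Q : Finset V,
      (Q.card : ℝ) ≤ lam * (s / 100 / 8) * V₀.card ∧ SplitsBy H V₀ Q K) :
    ∃ R, IsReducible G L ((Δ : ℝ) ^ ((1 : ℝ) / 4)) U R := by
  classical
  have hΔ : (0 : ℝ) < Δ := by linarith [h.eight_le]
  set B := highDeg G U (lam * Δ)
  set Z := lowDeg G U (l * Δ)
  have hZB : Disjoint Z B := Finset.disjoint_left.2 fun z hzZ hzB =>
    absurd ((mem_highDeg.1 hzB).trans_lt (mem_lowDeg.1 hzZ))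
      (not_lt.2 (mul_le_mul_of_nonneg_right h.lt.le hΔ.le))
  by_cases hone : ∃ v ∈ U, IsTame G U B Z k (θ * Δ) v ∧ degIn G B v ≤ 1
  · obtain ⟨v, hvU, htame, hv1⟩ := hone
    exact ⟨{v}, h.isReducible_singleton hs hs1 hdeg (hL v) hvU htame hv1⟩
  push Not at hone
  obtain ⟨hvolU, hvol⟩ := hG.sum_degIn_le_of_two_le (B := B) (P := IsTame G U B Z k (θ * Δ))
    (τ := s / 102400) (η := s / 100) (by positivity) (by linarith) (by linarith)
    (h.card_not_isTame_le hs hs1 hG.hasNoK6Minor hmid) (fun _ hv => hv.notMem) hone h.le_high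
    fun x hx => mem_highDeg.1 hx
  set S := U.filter fun v => IsTame G U B Z k (θ * Δ) v ∧ degIn G B v = 2
  have hSU : S ⊆ U := Finset.filter_subset _ _
  have htame : ∀ v ∈ S, IsTame G U B Z k (θ * Δ) v := fun v hv => (Finset.mem_filter.1 hv).2.1
  obtain ⟨a, b, hab, honly⟩ :=
    exists_isPairing_of_degIn_eq_two fun v (hv : v ∈ S) => (Finset.mem_filter.1 hv).2.2
  obtain ⟨Q, hQ, hQsplit⟩ := hsplit _ (hG.hasNoK6Minor.of_isMinor
    (hab.isMinor (Finset.disjoint_left.2 fun v hv => (htame v hv).notMem))) B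
  obtain ⟨X, hXB, hXK, hne, hdense⟩ := hab.exists_dense_subset_of_le_degIn hSU
    (by positivity) (by linarith) hΔ.le hdeg (fun x hx => mem_highDeg.1 hx)
    (by exact_mod_cast (Finset.card_pos.2 hU).trans_le hvolU) hvol hQ hQsplit
  exact ⟨_, h.isReducible_pairsIn hs hs1 hdeg hL hSU hab honly htame hZB hXB hXK hne hdense⟩

end StepConstants

end Step

section Scales

lemma HasNoK6Minor.sum_degIn_highDeg_le {V : Type*} [Fintype V] {G : SimpleGraph V}
    (hG : HasNoK6Minor G) (U : Finset V) :
    ∑ z ∈ highDeg G U 128, (degIn G U z : ℝ) ≤ 128 * U.card := by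
  have hcard := hG.card_mul_le_of_le_degIn (B := highDeg G U 128) fun _ => mem_highDeg.1
  have hsum : ∑ z ∈ highDeg G U 128, (degIn G U z : ℝ) ≤
      64 * ((highDeg G U 128).card + U.card) := by
    exact_mod_cast hG.sum_degIn_le_add (highDeg G U 128) U
  linarith

lemma pairwiseDisjoint_midDeg {V : Type*} [Fintype V] {G : SimpleGraph V} {U : Finset V}
    {μ : ℕ → ℝ} (hμ : Antitone μ) :
    Pairwise fun i j => Disjoint (midDeg G U (μ (i + 1)) (μ i)) (midDeg G U (μ (j + 1)) (μ j)) := by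
  refine pairwise_disjoint_on _ |>.2 fun i j hij => ?_
  refine Finset.disjoint_left.2 fun z hzi hzj => ?_
  exact ((mem_midDeg.1 hzi).1.trans_lt (mem_midDeg.1 hzj).2).not_ge (hμ (Nat.succ_le_of_lt hij))

/-- The vertices with at least `128` neighbours in `U` send at most `128 * U.card` edges to `U`,
and these edges are distributed among the scales. -/
lemma HasNoK6Minor.exists_sparse_scale {V : Type*} [Fintype V] {G : SimpleGraph V}
    (hG : HasNoK6Minor G) {U : Finset V} (hU : U.Nonempty) {μ : ℕ → ℝ} (hμ : Antitone μ) {I : ℕ}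
    {τ : ℝ} (hI : 128 < I * τ) (hμI : 128 ≤ μ I) :
    ∃ j < I, ∑ z ∈ midDeg G U (μ (j + 1)) (μ j), (degIn G U z : ℝ) ≤ τ * U.card := by
  classical
  set W : ℕ → Finset V := fun j => midDeg G U (μ (j + 1)) (μ j)
  have hsub : (Finset.range I).biUnion W ⊆ highDeg G U 128 := fun z hz => by
    obtain ⟨j, hj, hzj⟩ := Finset.mem_biUnion.1 hz
    exact mem_highDeg.2 <| (hμI.trans (hμ (Nat.succ_le_of_lt (Finset.mem_range.1 hj)))).trans
      (mem_midDeg.1 hzj).1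
  have : (0 : ℝ) < U.card := by exact_mod_cast Finset.card_pos.2 hU
  have hsum : ∑ j ∈ Finset.range I, ∑ z ∈ W j, (degIn G U z : ℝ) <
      ∑ _j ∈ Finset.range I, τ * U.card :=
    calc ∑ j ∈ Finset.range I, ∑ z ∈ W j, (degIn G U z : ℝ)
        = ∑ z ∈ (Finset.range I).biUnion W, (degIn G U z : ℝ) :=
          (Finset.sum_biUnion fun i _ j _ hij => pairwiseDisjoint_midDeg hμ hij).symm
      _ ≤ ∑ z ∈ highDeg G U 128, (degIn G U z : ℝ) :=
          Finset.sum_le_sum_of_subset_of_nonneg hsub fun _ _ _ => Nat.cast_nonneg _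
      _ ≤ 128 * U.card := hG.sum_degIn_highDeg_le U
      _ < I * τ * U.card := by gcongr
      _ = ∑ _j ∈ Finset.range I, τ * U.card := by
          rw [Finset.sum_const, Finset.card_range, nsmul_eq_mul, mul_assoc]
  obtain ⟨j, hj, hlt⟩ := Finset.exists_lt_of_sum_lt hsum
  exact ⟨j, Finset.mem_range.1 hj, hlt.le⟩

lemma exists_isReducible_of_sum_midDeg_le {s : ℝ} (hs : 0 < s) (hs1 : s ≤ 1 / 2) {lam : ℝ}
    (hlam : 0 < lam) : ∃ l : ℝ, 0 < l ∧ l < lam ∧ ∃ Δ₀ : ℕ, ∀ (V : Type u) [Fintype V]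
      (G : SimpleGraph V), HasNoK33Minor G → ∀ Δ ≥ Δ₀, (∀ U x, degIn G U x ≤ Δ) →
      ∀ L : V → Finset ℤ, (∀ v, (3 / 2 + s) * (Δ : ℝ) ≤ (L v).card) →
      ∀ U : Finset V, U.Nonempty →
        ∑ z ∈ midDeg G U (l * Δ) (lam * Δ), (degIn G U z : ℝ) ≤ s / 102400 * U.card →
        ∃ R, IsReducible G L ((Δ : ℝ) ^ ((1 : ℝ) / 4)) U R := by
  obtain ⟨K, hK⟩ := HasNoK6Minor.exists_splitsBy.{u} (lam := lam * (s / 100 / 8)) (by positivity)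
  obtain ⟨l, θ, k, Δ₀, h⟩ := exists_stepConstants hs hlam K
  exact ⟨l, (h Δ₀ le_rfl).pos, (h Δ₀ le_rfl).lt, Δ₀, fun V _ G hG Δ hΔ hdeg L hL U hU hmid =>
    (h Δ hΔ).exists_isReducible hs hs1 hG (fun x => by exact_mod_cast hdeg U x) hL hU hmid (hK V)⟩

lemma exists_isListColouring_of_forall_isReducible {V : Type*} [Finite V] {G : SimpleGraph V}
    {L : V → Finset ℤ} {g : ℝ} (h : ∀ U : Finset V, U.Nonempty → ∃ R, IsReducible G L g U R)
    (U : Finset V) : ∃ c, IsListColouring G L g U c := by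
  classical
  induction U using Finset.strongInduction with
  | H U ih =>
    rcases U.eq_empty_or_nonempty with rfl | hU
    · exact ⟨fun _ => 0, by simp, by simp, by simp⟩
    · obtain ⟨R, hRU, hR, hext⟩ := h U hU
      obtain ⟨c, hc⟩ := ih (U \ R) (Finset.sdiff_ssubset hRU hR)
      exact hext c hc

/-- The scales `lam 0 > lam 1 > ⋯` are chosen such that a set which receives few edges from the
vertices between `lam (j + 1) * Δ` and `lam j * Δ` in degree contains a reducible one. -/
theorem HasNoK33Minor.exists_isListColouring {s : ℝ} (hs : 0 < s) (hs1 : s ≤ 1 / 2) :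
    ∃ Δ₀ : ℕ, ∀ (V : Type u) [Fintype V] (G : SimpleGraph V), HasNoK33Minor G → ∀ Δ ≥ Δ₀,
      (∀ U x, degIn G U x ≤ Δ) → ∀ L : V → Finset ℤ,
      (∀ v, (3 / 2 + s) * (Δ : ℝ) ≤ (L v).card) →
      ∃ c, IsListColouring G L ((Δ : ℝ) ^ ((1 : ℝ) / 4)) Finset.univ c := by
  choose! f hpos hlt B hB using fun lam =>
    exists_isReducible_of_sum_midDeg_le.{u} hs hs1 (lam := lam)
  set lam : ℕ → ℝ := fun j => f^[j] 1
  have hsucc (j : ℕ) : lam (j + 1) = f (lam j) := Function.iterate_succ_apply' f j 1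
  have hlam (j : ℕ) : 0 < lam j := by
    induction j with
    | zero => exact one_pos
    | succ j ih => exact hsucc j ▸ hpos _ ih
  have hanti : Antitone lam := antitone_nat_of_succ_le fun j =>
    hsucc j ▸ (hlt _ (hlam j)).le
  obtain ⟨I, hI⟩ := exists_nat_gt (128 / (s / 102400))
  rw [div_lt_iff₀ (by positivity)] at hI
  obtain ⟨N, hN⟩ := exists_nat_ge (128 / lam I)
  rw [div_le_iff₀' (hlam I)] at hN
  refine ⟨max N ((Finset.range I).sup fun j => B (lam j)), fun V _ G hG Δ hΔ hdeg L hL =>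
    exists_isListColouring_of_forall_isReducible (fun U hU => ?_) _⟩
  have hNΔ : (N : ℝ) ≤ Δ := by exact_mod_cast (le_max_left _ _).trans hΔ
  obtain ⟨j, hj, hsum⟩ := hG.hasNoK6Minor.exists_sparse_scale hU (μ := fun j => lam j * Δ)
    (hanti.mul_const (Nat.cast_nonneg _)) hI
    (hN.trans (mul_le_mul_of_nonneg_left hNΔ (hlam I).le))
  rw [hsucc] at hsum
  have hBΔ : B (lam j) ≤ Δ := (Finset.le_sup (f := fun j => B (lam j))
    (Finset.mem_range.2 hj)).trans ((le_max_right _ _).trans hΔ)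
  exact hB (lam j) (hlam j) V G hG Δ hBΔ hdeg L hL U hU hsum

lemma degIn_le_maxDegree {V : Type*} [Fintype V] (G : SimpleGraph V) [DecidableRel G.Adj]
    (U : Finset V) (x : V) : degIn G U x ≤ G.maxDegree :=
  (Finset.card_le_card fun y hy => (G.mem_neighborFinset x y).2 (mem_nbrIn.1 hy).2).trans
    (G.degree_le_maxDegree x)

lemma IsListColouring.ne_of_square_adj {V : Type*} [Fintype V] {G : SimpleGraph V}
    {L : V → Finset ℤ} {g : ℝ} {c : V → ℤ} (hc : IsListColouring G L g Finset.univ c) (hg : 0 < g)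
    {u v : V} (huv : G.square.Adj u v) : c u ≠ c v := by
  have hne : ∀ u v, u ≠ v → (G.Adj u v ∨ ∃ w, G.Adj u w ∧ G.Adj w v) → c u ≠ c v := by
    rintro u v huv (hadj | hpath)
    · intro heq
      have hgap := hc.gap u (Finset.mem_univ _) v (Finset.mem_univ _) hadj
      rw [heq, sub_self, abs_zero] at hgap
      exact hgap.not_gt hg
    · exact hc.ne u (Finset.mem_univ _) v (Finset.mem_univ _) huv hpath
  obtain ⟨hne', h | h⟩ := (SimpleGraph.fromRel_adj _ u v).1 huv
  exacts [hne u v hne' h, (hne v u hne'.symm h).symm]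

end Scales

theorem list_coloring_square_planar_general (ε : ℝ) (hε : 0 < ε) :
    ∃ Δε : ℕ, ∀ (V : Type u) [Fintype V] (G : SimpleGraph V) [DecidableRel G.Adj],
      HasNoK33Minor G → Δε ≤ G.maxDegree →
      ∀ L : V → Finset ℤ, (∀ v, (3 / 2 + ε) * (G.maxDegree : ℝ) ≤ ((L v).card : ℝ)) →
      ∃ c : V → ℤ, (∀ v, c v ∈ L v) ∧
        (∀ u v, G.square.Adj u v → c u ≠ c v) ∧
        (∀ u v, G.Adj u v →
          (G.maxDegree : ℝ) ^ ((1 : ℝ) / 4) ≤ |(c u : ℝ) - (c v : ℝ)|) := by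
  obtain ⟨Δ₀, h⟩ :=
    HasNoK33Minor.exists_isListColouring.{u} (lt_min hε one_half_pos) (min_le_right ε (1 / 2))
  refine ⟨max Δ₀ 1, fun V _ G _ hG hΔ L hL => ?_⟩
  have hΔpos : (0 : ℝ) < G.maxDegree := by exact_mod_cast (le_max_right _ _).trans hΔ
  obtain ⟨c, hc⟩ := h V G hG G.maxDegree ((le_max_left _ _).trans hΔ) (degIn_le_maxDegree G) L
    fun v => le_trans (by gcongr; exact min_le_left _ _) (hL v)
  exact ⟨c, fun v => hc.mem v (Finset.mem_univ _),
    fun u v => hc.ne_of_square_adj (Real.rpow_pos_of_pos hΔpos _),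
    fun u v => hc.gap u (Finset.mem_univ _) v (Finset.mem_univ _)⟩

/-- Havet et al.: for each `ε > 0` there is `Δ_ε` such that every planar graph with
`Δ(G) ≥ Δ_ε` can be properly list-coloured on its square from lists of size at least
`(3/2 + ε)Δ(G)`, and moreover so that colours on adjacent vertices of `G` differ by at
least `Δ(G)^{1/4}`. -/
theorem list_coloring_square_planar (ε : ℝ) (hε : 0 < ε) :
    ∃ Δε : ℕ, ∀ (V : Type) [Fintype V] (G : SimpleGraph V) [DecidableRel G.Adj],
      G.IsPlanar → Δε ≤ G.maxDegree →
      ∀ L : V → Finset ℤ, (∀ v, (3 / 2 + ε) * (G.maxDegree : ℝ) ≤ ((L v).card : ℝ)) →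
      ∃ c : V → ℤ, (∀ v, c v ∈ L v) ∧
        (∀ u v, G.square.Adj u v → c u ≠ c v) ∧
        (∀ u v, G.Adj u v →
          (G.maxDegree : ℝ) ^ ((1 : ℝ) / 4) ≤ |(c u : ℝ) - (c v : ℝ)|) := by
  obtain ⟨Δε, h⟩ := list_coloring_square_planar_general ε hε
  exact ⟨Δε, fun V _ G _ ⟨E⟩ => h V G E.hasNoK33Minor⟩
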